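/- Let Ω ⊂ ℂ be a bounded domain containing 0 whose boundary is an analytic Jordan curve, let u be a negative continuous subharmonic exhaustion of Ω with finite Monge–Ampère mass, and let 1 ≤ p < ∞. A function f ∈ H^p(Ω) belongs to H^p_u(Ω) if and only if its nontangential boundary value function f* belongs to L^p(μ_u), where μ_u is the boundary Monge–Ampère measure of u; moreover ‖f*‖_{L^p(μ_u)} = ‖f‖_{H^p_u(Ω)}. -/

import Mathlib

open MeasureTheory Filter Metric Complex Set
open scoped Real ENNReal Topology

noncomputable section

/-- The Laplacian of a real-valued function on `ℂ ≅ ℝ²`. -/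
def lap (φ : ℂ → ℝ) (z : ℂ) : ℝ :=
  fderiv ℝ (fun w => fderiv ℝ φ w 1) z 1 +
    fderiv ℝ (fun w => fderiv ℝ φ w Complex.I) z Complex.I

/-- `h` is harmonic on `s`. -/
def HarmonicOn (h : ℂ → ℝ) (s : Set ℂ) : Prop :=
  ContDiffOn ℝ 2 h s ∧ ∀ z ∈ s, lap h z = 0

/-- `u` is subharmonic on `s` (continuous with the sub-mean-value property). -/
def SubharmonicOn (u : ℂ → ℝ) (s : Set ℂ) : Prop :=
  ContinuousOn u s ∧ ∀ z ∈ s, ∀ r : ℝ, 0 < r → closedBall z r ⊆ s →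
    u z ≤ (2 * Real.pi)⁻¹ *
      ∫ t in (0:ℝ)..(2 * Real.pi), u (z + (r : ℂ) * Complex.exp ((t : ℂ) * Complex.I))

/-- `u` is a negative continuous subharmonic exhaustion function for `Ω`:
sublevel sets `{u < c}`, `c < 0`, are relatively compact in `Ω`. -/
structure IsExhaustion (u : ℂ → ℝ) (Ω : Set ℂ) : Prop where
  neg : ∀ z ∈ Ω, u z < 0
  subh : SubharmonicOn u Ω
  exh : ∀ c : ℝ, c < 0 → IsCompact (closure {z | z ∈ Ω ∧ u z < c}) ∧
    closure {z | z ∈ Ω ∧ u z < c} ⊆ Ω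

/-- `ν` is the Riesz measure `dd^c u = (1/4) Δu dA` of `u` on `Ω`, characterized
distributionally: `∫ φ dν = (1/4) ∫_Ω u Δφ dA` for test functions `φ`. -/
def IsRieszMeasure (u : ℂ → ℝ) (Ω : Set ℂ) (ν : Measure ℂ) : Prop :=
  ν Ωᶜ = 0 ∧
  ∀ φ : ℂ → ℝ, ContDiff ℝ 2 φ → HasCompactSupport φ → tsupport φ ⊆ Ω →
    ∫ z, φ z ∂ν = (4 : ℝ)⁻¹ * ∫ z in Ω, u z * lap φ z

/-- `μ` is the Monge–Ampère measure `μ_{u,r} = dd^c max(u,r) - χ_{Ω∖{u<r}} dd^c u`,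
where `ν = dd^c u`. -/
def IsMAMeasure (u : ℂ → ℝ) (Ω : Set ℂ) (ν : Measure ℂ) (r : ℝ) (μ : Measure ℂ) : Prop :=
  ∃ νr : Measure ℂ, IsRieszMeasure (fun z => max (u z) r) Ω νr ∧
    μ = νr - ν.restrict {z | z ∈ Ω ∧ r ≤ u z}

/-- The `p`-th power of the Poletsky–Stessin Hardy "norm",
`limsup_{r→0⁻} ∫ |f|^p dμ_{u,r}`. -/
def psNormPow (p : ℝ) (μfam : ℝ → Measure ℂ) (f : ℂ → ℂ) : ℝ≥0∞ :=
  Filter.limsup (fun r => ∫⁻ z, ENNReal.ofReal (‖f z‖ ^ p) ∂(μfam r))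
    (nhdsWithin 0 (Set.Iio 0))

/-- The Poletsky–Stessin Hardy norm. -/
def psNorm (p : ℝ) (μfam : ℝ → Measure ℂ) (f : ℂ → ℂ) : ℝ≥0∞ :=
  psNormPow p μfam f ^ (1 / p)

/-- Membership in the Poletsky–Stessin Hardy space `H^p_u(Ω)`, where `μfam r = μ_{u,r}`. -/
def MemPS (p : ℝ) (Ω : Set ℂ) (μfam : ℝ → Measure ℂ) (f : ℂ → ℂ) : Prop :=
  DifferentiableOn ℂ f Ω ∧ psNormPow p μfam f < ⊤

/-- Membership in the classical Hardy space `H^p(Ω)`: `|f|^p` has a harmonic majorant. -/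
def MemHClassical (p : ℝ) (Ω : Set ℂ) (f : ℂ → ℂ) : Prop :=
  DifferentiableOn ℂ f Ω ∧
    ∃ h : ℂ → ℝ, HarmonicOn h Ω ∧ ∀ z ∈ Ω, ‖f z‖ ^ p ≤ h z

/-- A bounded domain in `ℂ` containing `0` whose boundary is an analytic Jordan curve:
there is a conformal map of the unit disc onto `Ω` extending analytically and injectively
across the closed disc, carrying the unit circle onto the boundary of `Ω`. -/
structure AnalyticJordanDomain (Ω : Set ℂ) : Prop where
  isOpen : IsOpen Ω
  isConnected : IsConnected Ω
  isBounded : Bornology.IsBounded Ω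
  zero_mem : (0:ℂ) ∈ Ω
  analyticBoundary : ∃ (U : Set ℂ) (ψ : ℂ → ℂ), IsOpen U ∧ closedBall (0:ℂ) 1 ⊆ U ∧
    DifferentiableOn ℂ ψ U ∧ Set.InjOn ψ U ∧ ψ '' ball (0:ℂ) 1 = Ω ∧
    ψ '' sphere (0:ℂ) 1 = frontier Ω

/-- `μ` is the boundary Monge–Ampère measure: the weak* limit of the measures
`μfam r = μ_{u,r}` as `r → 0⁻`. -/
def IsBoundaryMA (μfam : ℝ → Measure ℂ) (μ : Measure ℂ) : Prop :=
  ∀ φ : ℂ → ℝ, Continuous φ →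
    Filter.Tendsto (fun r => ∫ z, φ z ∂(μfam r)) (nhdsWithin 0 (Set.Iio 0))
      (nhds (∫ z, φ z ∂μ))

/-- `f` has nontangential limit `L` at the boundary point `ξ` of `Ω`. -/
def NTLim (Ω : Set ℂ) (f : ℂ → ℂ) (ξ : ℂ) (L : ℂ) : Prop :=
  ∀ C : ℝ, 1 < C →
    Filter.Tendsto f
      (nhdsWithin ξ {z | z ∈ Ω ∧ dist z ξ ≤ C * infDist z (frontier Ω)}) (nhds L)

/-- Arc length measure on the boundary of `Ω` (1-dimensional Hausdorff measure). -/
def arcLen (Ω : Set ℂ) : Measure ℂ := (μH[1] : Measure ℂ).restrict (frontier Ω)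

/-!
Let `ψ` be the conformal parametrization of `Ω` by the unit disc, which extends across the circle,
let `τ` be its inverse and `ν = dd^c u`.

Testing `dd^c (max u r)` against mollified functions gives the Lelong–Jensen inequality
`∫_{u < r} w dν ≤ ∫ w dμ_{u,r}` for continuous subharmonic `w` on `Ω`, with equality for harmonic
`w`. Letting `r → 0⁻` for the harmonic extension of a continuous function on `∂Ω`, one gets
`∫ Φ dμ_u = ∫_Ω P[Φ ∘ ψ](τ z) dν(z)`, where `P` is the Poisson integral, first for continuous and
then for measurable `Φ ≥ 0`; in particular `μ_u` is absolutely continuous with respect to arc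
length. The theorem thus amounts to
`limsup_{r → 0⁻} ∫ |f|^p dμ_{u,r} = ∫_Ω P[|f* ∘ ψ|^p](τ z) dν(z)`.

For `≤`, the function `P[|f* ∘ ψ|^p] ∘ τ` is a harmonic majorant of `|f|^p`. For `≥`, replace
`|f ∘ ψ|^p` inside the disc of radius `s < 1` by its Poisson integral and compose with `τ`: the
result is subharmonic and agrees with `|f|^p` on `{u = r}` once `r` is close to `0`, so its
`ν`-integral is at most the limsup, and Fatou's lemma applies as `s → 1⁻`.
-/

open InnerProductSpace Asymptotics Laplacian
open scoped Convolution

section LocallySubmean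

/-- The local sub-mean-value property: `w z` is at most the mean of `w` over all sufficiently small
circles about `z`, for each `z ∈ U`. For continuous `w` on an open set this is subharmonicity, in
the form that makes it stable under local changes of `w`. -/
def LocallySubmean (w : ℂ → ℝ) (U : Set ℂ) : Prop :=
  ∀ z ∈ U, ∀ᶠ ρ in 𝓝[>] (0 : ℝ), w z ≤ Real.circleAverage w z ρ

variable {w v h : ℂ → ℝ} {U V : Set ℂ} {z c : ℂ}

lemma eventually_closedBall_abs_subset {s : Set ℂ} (hs : s ∈ 𝓝 z) :
    ∀ᶠ ρ in 𝓝[>] (0 : ℝ), closedBall z |ρ| ⊆ s := by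
  filter_upwards [nhdsWithin_le_nhds (eventually_closedBall_subset hs), self_mem_nhdsWithin]
    with ρ hρ hpos
  rwa [abs_of_pos hpos]

lemma eventually_circleAverage_congr (hwv : w =ᶠ[𝓝 z] v) :
    ∀ᶠ ρ in 𝓝[>] (0 : ℝ), Real.circleAverage w z ρ = Real.circleAverage v z ρ := by
  filter_upwards [eventually_closedBall_abs_subset hwv] with ρ hρ
  exact Real.circleAverage_congr_sphere fun x hx => hρ (sphere_subset_closedBall hx)

lemma eventually_circleIntegrable (hU : U ∈ 𝓝 z) (hw : ContinuousOn w U) :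
    ∀ᶠ ρ in 𝓝[>] (0 : ℝ), CircleIntegrable w z ρ := by
  filter_upwards [eventually_closedBall_abs_subset hU] with ρ hρ
  exact (hw.mono (sphere_subset_closedBall.trans hρ)).circleIntegrable'

lemma eventually_circleAverage_eq_of_harmonicAt (hh : HarmonicAt h z) :
    ∀ᶠ ρ in 𝓝[>] (0 : ℝ), Real.circleAverage h z ρ = h z := by
  filter_upwards [eventually_closedBall_abs_subset hh.eventually] with ρ hρ
  exact InnerProductSpace.HarmonicOnNhd.circleAverage_eq hρ

lemma LocallySubmean.mono (hw : LocallySubmean w U) (hVU : V ⊆ U) : LocallySubmean w V :=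
  fun z hz => hw z (hVU hz)

lemma LocallySubmean.congr (hw : LocallySubmean w U) (hU : IsOpen U) (hwv : EqOn w v U) :
    LocallySubmean v U := by
  intro z hz
  filter_upwards [hw z hz,
    eventually_circleAverage_congr (hwv.eventuallyEq_of_mem (hU.mem_nhds hz))] with ρ hsub hρ
  rwa [← hwv hz, ← hρ]

lemma LocallySubmean.of_harmonicOnNhd (hh : HarmonicOnNhd h U) : LocallySubmean h U :=
  fun z hz => (eventually_circleAverage_eq_of_harmonicAt (hh z hz)).mono fun _ => Eq.ge

lemma LocallySubmean.sub_harmonic (hw : LocallySubmean w U) (hU : IsOpen U)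
    (hwc : ContinuousOn w U) (hh : HarmonicOnNhd h U) : LocallySubmean (w - h) U := by
  intro z hz
  filter_upwards [hw z hz, eventually_circleAverage_eq_of_harmonicAt (hh z hz),
    eventually_circleIntegrable (hU.mem_nhds hz) hwc,
    eventually_circleIntegrable (hU.mem_nhds hz) hh.continuousOn] with ρ hsub hmean hiw hih
  rw [Real.circleAverage_sub hiw hih, hmean, Pi.sub_apply]
  linarith

lemma circleAverage_norm_sub_sq (c z : ℂ) (ρ : ℝ) :
    Real.circleAverage (fun x => ‖x - c‖ ^ 2) z ρ = ‖z - c‖ ^ 2 + ρ ^ 2 := by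
  have expand : ∀ t : ℝ, ‖circleMap z ρ t - c‖ ^ 2 =
      (‖z - c‖ ^ 2 + ρ ^ 2) + 2 * ρ * ((z - c).re * Real.cos t + (z - c).im * Real.sin t) := by
    intro t
    simp only [← normSq_eq_norm_sq, circleMap, normSq_apply, sub_re, sub_im, add_re, add_im,
      mul_re, mul_im, ofReal_re, ofReal_im, exp_ofReal_mul_I_re, exp_ofReal_mul_I_im]
    linear_combination ρ ^ 2 * Real.sin_sq_add_cos_sq t
  have vanish : ∫ t in (0 : ℝ)..2 * π,
      2 * ρ * ((z - c).re * Real.cos t + (z - c).im * Real.sin t) = 0 := by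
    rw [intervalIntegral.integral_const_mul, intervalIntegral.integral_add
      (Continuous.intervalIntegrable (by fun_prop) _ _)
      (Continuous.intervalIntegrable (by fun_prop) _ _)]
    simp
  simp_rw [Real.circleAverage_def, expand]
  rw [intervalIntegral.integral_add (by simp) (Continuous.intervalIntegrable (by fun_prop) _ _),
    vanish]
  simp
  field_simp

-- The perturbation `ε ‖· - c‖ ^ 2` makes the sub-mean inequality strict.
lemma LocallySubmean.not_isLocalMax_add_norm_sub_sq (hw : LocallySubmean w U) (hU : IsOpen U)
    (hwc : ContinuousOn w U) (hz : z ∈ U) {ε : ℝ} (hε : 0 < ε) :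
    ¬ IsLocalMax (fun x => w x + ε • ‖x - c‖ ^ 2) z := by
  intro hmax
  obtain ⟨ρ, hsub, hle, hiw, hρ⟩ := ((hw z hz).and <| (eventually_closedBall_abs_subset hmax).and <|
    (eventually_circleIntegrable (hU.mem_nhds hz) hwc).and self_mem_nhdsWithin).exists
  have hiq : CircleIntegrable (fun x => ε • ‖x - c‖ ^ 2) z ρ :=
    ContinuousOn.circleIntegrable' (by fun_prop)
  have havg : Real.circleAverage (fun x => w x + ε • ‖x - c‖ ^ 2) z ρ ≤ w z + ε • ‖z - c‖ ^ 2 :=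
    Real.circleAverage_mono_on_of_le_circle (hiw.add hiq)
      fun x hx => hle (sphere_subset_closedBall hx)
  rw [Real.circleAverage_fun_add hiw hiq, Real.circleAverage_fun_smul, circleAverage_norm_sub_sq,
    smul_eq_mul, smul_eq_mul] at havg
  have : 0 < ε * ρ ^ 2 := mul_pos hε (pow_pos hρ 2)
  linarith

lemma LocallySubmean.le_of_frontier_le (hw : LocallySubmean w U) (hU : IsOpen U)
    (hUb : Bornology.IsBounded U) (hwc : ContinuousOn w (closure U)) {M : ℝ}
    (hM : ∀ x ∈ frontier U, w x ≤ M) (hz : z ∈ closure U) : w z ≤ M := by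
  obtain ⟨r, hr⟩ := hUb.closure.subset_closedBall z
  have perturbed : ∀ ε > 0, w z ≤ M + ε * r ^ 2 := by
    intro ε hε
    obtain ⟨x, hx, hmax⟩ := hUb.isCompact_closure.exists_isMaxOn ⟨z, hz⟩
      (hwc.add (f := w) (g := fun x => ε • ‖x - z‖ ^ 2) (by fun_prop))
    have hxU : x ∉ U := fun hxU =>
      hw.not_isLocalMax_add_norm_sub_sq hU (hwc.mono subset_closure) hxU hε
        (hmax.isLocalMax (mem_of_superset (hU.mem_nhds hxU) subset_closure))
    have hxM : w x ≤ M := hM x ⟨hx, by rwa [hU.interior_eq]⟩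
    have hxr : ‖x - z‖ ^ 2 ≤ r ^ 2 := by gcongr; simpa [dist_eq_norm] using hr hx
    have hzx : w z + ε * ‖z - z‖ ^ 2 ≤ w x + ε * ‖x - z‖ ^ 2 := hmax hz
    rw [sub_self, norm_zero] at hzx
    nlinarith
  refine le_of_forall_pos_le_add fun δ hδ => ?_
  have hr2 : 0 < r ^ 2 + 1 := by positivity
  calc w z ≤ M + δ / (r ^ 2 + 1) * r ^ 2 := perturbed _ (div_pos hδ hr2)
    _ ≤ M + δ / (r ^ 2 + 1) * (r ^ 2 + 1) := by gcongr; linarith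
    _ = M + δ := by field_simp

end LocallySubmean

section PoissonIntegral

/-- The Poisson integral of a function `φ` on the circle of radius `R` about `c`. -/
def poissonIntegral (c : ℂ) (R : ℝ) (φ : ℂ → ℝ) (z : ℂ) : ℝ :=
  Real.circleAverage (poissonKernel c z • φ) c R

variable {w φ χ h : ℂ → ℝ} {z ζ c : ℂ} {R : ℝ}

lemma poissonKernel_translate : poissonKernel c z ζ = poissonKernel 0 (z - c) (ζ - c) := by
  simp only [poissonKernel_def, sub_zero]

lemma continuousOn_poissonKernel_sphere (hz : z ∈ ball c R) :
    ContinuousOn (poissonKernel c z) (sphere c |R|) := by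
  rw [poissonKernel_eq_re_herglotzRieszKernel]
  exact continuous_re.comp_continuousOn (continuousOn_herglotzRieszKernel_sphere hz)

lemma poissonKernel_nonneg (hz : z ∈ ball c R) (hζ : ζ ∈ sphere c |R|) :
    0 ≤ poissonKernel c z ζ := by
  have hlt : ‖z - c‖ ≤ ‖ζ - c‖ := by
    rw [mem_sphere_iff_norm.1 hζ]
    exact (mem_ball_iff_norm.1 hz).le.trans (le_abs_self R)
  rw [poissonKernel_def]
  exact div_nonneg (sub_nonneg.2 (by gcongr)) (by positivity)

lemma circleIntegrable_poissonKernel_smul (hφ : CircleIntegrable φ c R) (hz : z ∈ ball c R) :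
    CircleIntegrable (poissonKernel c z • φ) c R :=
  hφ.continuousOn_smul (continuousOn_poissonKernel_sphere hz)

lemma poissonIntegral_mono (hφ : CircleIntegrable φ c R) (hχ : CircleIntegrable χ c R)
    (hle : ∀ ζ ∈ sphere c |R|, φ ζ ≤ χ ζ) (hz : z ∈ ball c R) :
    poissonIntegral c R φ z ≤ poissonIntegral c R χ z :=
  Real.circleAverage_mono (circleIntegrable_poissonKernel_smul hφ hz)
    (circleIntegrable_poissonKernel_smul hχ hz) fun ζ hζ =>
      mul_le_mul_of_nonneg_left (hle ζ hζ) (poissonKernel_nonneg hz hζ)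

lemma poissonIntegral_translate :
    poissonIntegral c R φ z = poissonIntegral 0 R (fun ζ => φ (ζ + c)) (z - c) := by
  rw [poissonIntegral, poissonIntegral, ← Real.circleAverage_map_add_const]
  congr 1
  ext ζ
  rw [Pi.smul_apply', Pi.smul_apply', poissonKernel_translate, add_sub_cancel_right]

lemma exists_analyticOnNhd_re_eq_poissonIntegral (hφ : CircleIntegrable φ c R) :
    ∃ G : ℂ → ℂ, AnalyticOnNhd ℂ G (ball c R) ∧
      EqOn (fun z => (G z).re) (poissonIntegral c R φ) (ball c R) := by
  have hφ₀ : CircleIntegrable (fun ζ => φ (ζ + c)) 0 R := by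
    simpa [CircleIntegrable, circleMap, add_comm] using hφ
  have hφ₁ : CircleIntegrable (fun ζ => (φ (ζ + c) : ℂ)) 0 R := by
    simp only [CircleIntegrable, intervalIntegrable_iff] at hφ₀ ⊢
    exact ofRealCLM.integrable_comp hφ₀
  have hmaps : MapsTo (fun z => z - c) (ball c R) (ball 0 R) := fun z hz => by
    simpa [dist_eq_norm] using hz
  refine ⟨_, (analyticOnNhd_circleAverage_herglotzRieszKernel_smul hφ₁).comp
    (analyticOnNhd_id.sub analyticOnNhd_const) hmaps, fun z hz => ?_⟩
  rw [poissonIntegral_translate, poissonIntegral, poissonKernel_eq_re_herglotzRieszKernel]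
  exact re_circleAverage_herglotzRieszKernel_smul hφ₀ (hmaps hz)

lemma harmonicOnNhd_poissonIntegral (hφ : CircleIntegrable φ c R) :
    HarmonicOnNhd (poissonIntegral c R φ) (ball c R) := by
  obtain ⟨G, hG, hGφ⟩ := exists_analyticOnNhd_re_eq_poissonIntegral hφ
  exact fun z hz => (harmonicAt_congr_nhds (hGφ.eventuallyEq_of_mem (isOpen_ball.mem_nhds hz))).1
    (hG z hz).harmonicAt_re

lemma poissonIntegral_of_harmonicOnNhd (hh : HarmonicOnNhd h (closedBall c R)) (hz : z ∈ ball c R) :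
    poissonIntegral c R h z = h z :=
  HarmonicOnNhd.circleAverage_poissonKernel_smul hh hz

lemma poissonIntegral_center (hR : R ≠ 0) :
    poissonIntegral c R φ c = Real.circleAverage φ c R := by
  refine Real.circleAverage_congr_sphere fun ζ hζ => ?_
  have hne : ‖ζ - c‖ ≠ 0 := by rw [mem_sphere_iff_norm.1 hζ]; exact abs_ne_zero.2 hR
  simp [poissonKernel_def, hne]

/-- A harmonic function that equals `‖x - ζ‖ ^ 2` on the circle through `ζ` about `c`: the barrier
at `ζ`. -/
def circleBarrier (c ζ x : ℂ) : ℝ :=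
  (2 * ((ζ - c) - (x - c)) * starRingEnd ℂ (ζ - c)).re

lemma harmonicAt_circleBarrier (c ζ x : ℂ) : HarmonicAt (circleBarrier c ζ) x :=
  AnalyticAt.harmonicAt_re (f := fun x => 2 * ((ζ - c) - (x - c)) * starRingEnd ℂ (ζ - c))
    (Differentiable.analyticAt (by fun_prop) x)

lemma circleBarrier_of_mem_sphere {x : ℂ} (hx : x ∈ sphere c R) (hζ : ζ ∈ sphere c R) :
    circleBarrier c ζ x = ‖x - ζ‖ ^ 2 := by
  have hnorm : normSq (x - c) = normSq (ζ - c) := by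
    rw [normSq_eq_norm_sq, normSq_eq_norm_sq, mem_sphere_iff_norm.1 hx, mem_sphere_iff_norm.1 hζ]
  rw [← normSq_eq_norm_sq]
  simp only [circleBarrier, normSq_apply, sub_re, sub_im, mul_re, mul_im, conj_re, conj_im,
    re_ofNat, im_ofNat] at hnorm ⊢
  linear_combination -hnorm

lemma abs_poissonIntegral_sub_le {a b d : ℝ} (hR : 0 ≤ R) (hφ : CircleIntegrable φ c R)
    (hle : ∀ x ∈ sphere c R, |φ x - a| ≤ b + d * circleBarrier c ζ x) (hz : z ∈ ball c R) :
    |poissonIntegral c R φ z - a| ≤ b + d * circleBarrier c ζ z := by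
  have hB : HarmonicOnNhd (d • circleBarrier c ζ) (closedBall c R) :=
    fun x _ => (harmonicAt_circleBarrier c ζ x).const_smul
  have hupper : HarmonicOnNhd ((fun _ => a + b) + d • circleBarrier c ζ) (closedBall c R) :=
    HarmonicOnNhd.add (fun x _ => harmonicAt_const _) hB
  have hlower : HarmonicOnNhd ((fun _ => a - b) - d • circleBarrier c ζ) (closedBall c R) :=
    HarmonicOnNhd.sub (fun x _ => harmonicAt_const _) hB
  have integrable {g : ℂ → ℝ} (hg : HarmonicOnNhd g (closedBall c R)) : CircleIntegrable g c R :=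
    (hg.continuousOn.mono sphere_subset_closedBall).circleIntegrable hR
  rw [← abs_of_nonneg hR] at hle
  have h₁ := poissonIntegral_mono hφ (integrable hupper) (fun x hx => by
    have := (abs_le.1 (hle x hx)).2
    simp only [Pi.add_apply, Pi.smul_apply, smul_eq_mul]
    linarith) hz
  have h₂ := poissonIntegral_mono (integrable hlower) hφ (fun x hx => by
    have := (abs_le.1 (hle x hx)).1
    simp only [Pi.sub_apply, Pi.smul_apply, smul_eq_mul]
    linarith) hz
  rw [poissonIntegral_of_harmonicOnNhd hupper hz] at h₁
  rw [poissonIntegral_of_harmonicOnNhd hlower hz] at h₂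
  simp only [Pi.add_apply, Pi.sub_apply, Pi.smul_apply, smul_eq_mul] at h₁ h₂
  exact abs_le.2 ⟨by linarith, by linarith⟩

lemma exists_abs_sub_le_add_circleBarrier (hφ : ContinuousOn φ (sphere c R))
    (hζ : ζ ∈ sphere c R) {ε : ℝ} (hε : 0 < ε) :
    ∃ d, ∀ x ∈ sphere c R, |φ x - φ ζ| ≤ ε + d * circleBarrier c ζ x := by
  obtain ⟨M, hM⟩ := (isCompact_sphere c R).exists_bound_of_continuousOn hφ
  obtain ⟨δ, hδ, hclose⟩ := Metric.continuousOn_iff.1 hφ ζ hζ ε hε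
  have hM₀ : 0 ≤ M := (norm_nonneg _).trans (hM ζ hζ)
  refine ⟨2 * M / δ ^ 2, fun x hx => ?_⟩
  rw [circleBarrier_of_mem_sphere hx hζ, ← Real.norm_eq_abs, ← dist_eq_norm, ← dist_eq_norm]
  rcases lt_or_ge (dist x ζ) δ with hnear | hfar
  · exact (hclose x hx hnear).le.trans (le_add_of_nonneg_right (by positivity))
  · calc dist (φ x) (φ ζ) ≤ ‖φ x‖ + ‖φ ζ‖ := dist_le_norm_add_norm _ _
      _ ≤ 2 * M := by linarith [hM x hx, hM ζ hζ]
      _ = 2 * M / δ ^ 2 * δ ^ 2 := by field_simp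
      _ ≤ 2 * M / δ ^ 2 * dist x ζ ^ 2 := by gcongr
      _ ≤ ε + 2 * M / δ ^ 2 * dist x ζ ^ 2 := le_add_of_nonneg_left hε.le

lemma tendsto_poissonIntegral (hR : 0 ≤ R) (hφ : ContinuousOn φ (sphere c R))
    (hζ : ζ ∈ sphere c R) :
    Tendsto (poissonIntegral c R φ) (𝓝[ball c R] ζ) (𝓝 (φ ζ)) := by
  rw [Metric.tendsto_nhds]
  intro ε hε
  obtain ⟨d, hd⟩ := exists_abs_sub_le_add_circleBarrier hφ hζ (half_pos hε)
  have hsmall : ∀ᶠ z in 𝓝 ζ, d * circleBarrier c ζ z < ε / 2 := by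
    have hcont : ContinuousAt (fun z => d * circleBarrier c ζ z) ζ :=
      continuousAt_const.mul (harmonicAt_circleBarrier c ζ ζ).1.continuousAt
    refine hcont.eventually_lt continuousAt_const ?_
    rw [circleBarrier_of_mem_sphere hζ hζ, sub_self, norm_zero]
    linarith
  filter_upwards [self_mem_nhdsWithin, nhdsWithin_le_nhds hsmall] with z hz hz'
  rw [Real.dist_eq]
  linarith [abs_poissonIntegral_sub_le hR (hφ.circleIntegrable hR) hd hz]

open scoped Classical in
/-- The Poisson modification of `φ` in the disc `ball c R`: inside the disc `φ` is replaced by the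
Poisson integral of its values on the boundary circle. -/
def poissonModification (c : ℂ) (R : ℝ) (φ : ℂ → ℝ) : ℂ → ℝ :=
  (ball c R).piecewise (poissonIntegral c R φ) φ

open scoped Classical in
lemma poissonModification_of_mem (hz : z ∈ ball c R) :
    poissonModification c R φ z = poissonIntegral c R φ z :=
  piecewise_eq_of_mem _ _ _ hz

open scoped Classical in
lemma poissonModification_of_notMem (hz : z ∉ ball c R) : poissonModification c R φ z = φ z :=
  piecewise_eq_of_notMem _ _ _ hz

open scoped Classical in
lemma continuousOn_poissonModification (hR : 0 < R) {S : Set ℂ} (hS : closedBall c R ⊆ S)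
    (hφ : ContinuousOn φ (S \ ball c R)) : ContinuousOn (poissonModification c R φ) S := by
  have hsphere : sphere c R ⊆ S \ ball c R := fun x hx =>
    ⟨hS (sphere_subset_closedBall hx), fun hx' => hx'.ne hx⟩
  have hφs : ContinuousOn φ (sphere c R) := hφ.mono hsphere
  refine ContinuousOn.piecewise' ?_ ?_ ?_ ?_
  · intro ζ hζ
    rw [frontier_ball c hR.ne'] at hζ
    rw [piecewise_eq_of_notMem _ _ _ (hsphere hζ.2).2]
    exact (tendsto_poissonIntegral hR.le hφs hζ.2).mono_left
      (nhdsWithin_mono _ inter_subset_right)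
  · intro ζ hζ
    rw [frontier_ball c hR.ne'] at hζ
    rw [piecewise_eq_of_notMem _ _ _ (hsphere hζ.2).2]
    exact hφ ζ (hsphere hζ.2)
  · exact (harmonicOnNhd_poissonIntegral (hφs.circleIntegrable hR.le)).continuousOn.mono
      inter_subset_right
  · exact hφ

lemma LocallySubmean.le_poissonIntegral (hR : 0 < R) (hw : LocallySubmean w (ball c R))
    (hwc : ContinuousOn w (closedBall c R)) (hz : z ∈ ball c R) :
    w z ≤ poissonIntegral c R w z := by
  have hci : CircleIntegrable w c R := (hwc.mono sphere_subset_closedBall).circleIntegrable hR.le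
  have hmod : ContinuousOn (w - poissonModification c R w) (closedBall c R) :=
    hwc.sub (continuousOn_poissonModification hR Subset.rfl (hwc.mono sdiff_subset))
  have hsub : LocallySubmean (w - poissonModification c R w) (ball c R) :=
    (hw.sub_harmonic isOpen_ball (hwc.mono ball_subset_closedBall)
      (harmonicOnNhd_poissonIntegral hci)).congr isOpen_ball fun x hx => by
        rw [Pi.sub_apply, Pi.sub_apply, poissonModification_of_mem hx]
  have hzero := hsub.le_of_frontier_le isOpen_ball isBounded_ball (M := 0)
    (by rwa [closure_ball c hR.ne']) (fun x hx => by
      rw [frontier_ball c hR.ne'] at hx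
      rw [Pi.sub_apply, poissonModification_of_notMem fun hx' => hx'.ne hx, sub_self])
    (subset_closure hz)
  rwa [Pi.sub_apply, poissonModification_of_mem hz, sub_nonpos] at hzero

lemma LocallySubmean.le_circleAverage (hR : 0 < R) (hw : LocallySubmean w (ball c R))
    (hwc : ContinuousOn w (closedBall c R)) : w c ≤ Real.circleAverage w c R :=
  (hw.le_poissonIntegral hR hwc (mem_ball_self hR)).trans_eq (poissonIntegral_center hR.ne')

end PoissonIntegral

section ModulusPowers

variable {f : ℂ → ℂ} {U : Set ℂ} {z : ℂ} {q : ℝ}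

lemma locallySubmean_norm (hU : IsOpen U) (hf : DifferentiableOn ℂ f U) :
    LocallySubmean (fun z => ‖f z‖) U := by
  intro z hz
  have hharm : HarmonicAt f z := (hf.analyticAt (hU.mem_nhds hz)).harmonicAt
  filter_upwards [eventually_closedBall_abs_subset hharm.eventually] with ρ hρ
  rw [← InnerProductSpace.HarmonicOnNhd.circleAverage_eq hρ, Real.circleAverage_def,
    Real.circleAverage_def, norm_smul, smul_eq_mul, Real.norm_of_nonneg (by positivity)]
  gcongr
  exact intervalIntegral.norm_integral_le_integral_norm (by positivity)

lemma exists_analyticAt_norm_rpow_eq (hf : AnalyticAt ℂ f z) (hfz : f z ≠ 0) (q : ℝ) :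
    ∃ g : ℂ → ℂ, AnalyticAt ℂ g z ∧ (fun x => ‖g x‖) =ᶠ[𝓝 z] fun x => ‖f x‖ ^ q := by
  have hlog : AnalyticAt ℂ (fun x => log (f x / f z)) z :=
    hf.div_const.clog (by rw [div_self hfz]; exact one_mem_slitPlane)
  refine ⟨fun x => (‖f z‖ ^ q : ℝ) * exp (q * log (f x / f z)),
    analyticAt_const.mul (analyticAt_const.mul hlog).cexp, ?_⟩
  filter_upwards [hf.continuousAt.eventually_ne hfz] with x hx
  have hfz' : ‖f z‖ ≠ 0 := norm_ne_zero_iff.2 hfz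
  rw [norm_mul, norm_exp, re_ofReal_mul, log_re, norm_div, norm_real,
    Real.norm_of_nonneg (by positivity), mul_comm q, ← Real.rpow_def_of_pos (by positivity),
    ← Real.mul_rpow (by positivity) (by positivity), mul_div_cancel₀ _ hfz']

lemma locallySubmean_norm_rpow (hU : IsOpen U) (hf : DifferentiableOn ℂ f U) (hq : 0 < q) :
    LocallySubmean (fun z => ‖f z‖ ^ q) U := by
  intro z hz
  by_cases hfz : f z = 0
  · refine Eventually.of_forall fun ρ => ?_
    simp only [hfz, norm_zero, Real.zero_rpow hq.ne']
    exact Real.circleAverage_nonneg_of_nonneg fun x _ => by positivity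
  · obtain ⟨g, hg, hgf⟩ := exists_analyticAt_norm_rpow_eq (hf.analyticAt (hU.mem_nhds hz)) hfz q
    have hgd : DifferentiableOn ℂ g {x | AnalyticAt ℂ g x} :=
      fun x hx => hx.differentiableAt.differentiableWithinAt
    filter_upwards [locallySubmean_norm (isOpen_analyticAt ℂ g) hgd z hg,
      eventually_circleAverage_congr hgf] with ρ hle heq
    rw [← heq]
    exact hgf.self_of_nhds.symm.trans_le hle

end ModulusPowers

section Laplacian

variable {g : ℂ → ℝ} {U : Set ℂ} {z : ℂ}

lemma lap_eq_fderiv_fderiv (hg : ContDiffAt ℝ 2 g z) :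
    lap g z = fderiv ℝ (fderiv ℝ g) z 1 1 + fderiv ℝ (fderiv ℝ g) z I I := by
  have hd : DifferentiableAt ℝ (fderiv ℝ g) z :=
    (hg.fderiv_right (m := 1) one_add_one_eq_two.le).differentiableAt one_ne_zero
  have happly (v : ℂ) : fderiv ℝ (fun w => fderiv ℝ g w v) z v = fderiv ℝ (fderiv ℝ g) z v v := by
    rw [fderiv_clm_apply hd (differentiableAt_const v)]
    simp
  rw [lap, happly, happly]

lemma lap_eq_laplacian (hg : ContDiffAt ℝ 2 g z) : lap g z = (Δ g) z := by
  rw [lap_eq_fderiv_fderiv hg, laplacian_eq_iteratedFDeriv_complexPlane]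
  simp [iteratedFDeriv_two_apply]

lemma isLittleO_sub_taylor_two {E F : Type*} [NormedAddCommGroup E] [NormedSpace ℝ E]
    [NormedAddCommGroup F] [NormedSpace ℝ F] {g : E → F} {z : E} (hg : ContDiffAt ℝ 2 g z) :
    (fun v => g (z + v) - g z - fderiv ℝ g z v - (1 / 2 : ℝ) • fderiv ℝ (fderiv ℝ g) z v v)
      =o[𝓝 0] fun v => ‖v‖ ^ 2 := by
  set D := fderiv ℝ g
  set D₂ := fderiv ℝ D z
  have hD : (fun v => D (z + v) - D z - D₂ v) =o[𝓝 0] fun v => v :=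
    hasFDerivAt_iff_isLittleO_nhds_zero.1 ((hg.fderiv_right (m := 1)
      one_add_one_eq_two.le).differentiableAt one_ne_zero).hasFDerivAt
  have hsymm (v : E) : D₂.flip v = D₂ v := by
    ext w
    exact (hg.isSymmSndFDerivAt (by simp)).eq w v
  have hdiff : ∀ᶠ v in 𝓝 (0 : E), DifferentiableAt ℝ g (z + v) :=
    (tendsto_const_nhds.add tendsto_id).eventually <| by
      simpa using (hg.eventually (by simp)).mono fun y hy => hy.differentiableAt two_ne_zero
  rw [isLittleO_iff]
  intro c hc
  obtain ⟨δ, hδ, hball⟩ := Metric.eventually_nhds_iff_ball.1 ((hD.bound hc).and hdiff)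
  filter_upwards [ball_mem_nhds 0 hδ] with v hv
  set rem : E → F := fun w => g (z + w) - g z - D z w - (1 / 2 : ℝ) • D₂ w w
  have hsub : closedBall 0 ‖v‖ ⊆ ball (0 : E) δ :=
    closedBall_subset_ball (mem_ball_zero_iff.1 hv)
  have hrem : ∀ w ∈ closedBall (0 : E) ‖v‖, HasFDerivAt rem (D (z + w) - D z - D₂ w) w := by
    intro w hw
    have hquad : HasFDerivAt (fun w => (1 / 2 : ℝ) • D₂ w w) (D₂ w) w := by
      refine ((D₂.hasFDerivAt.clm_apply (hasFDerivAt_id w)).const_smul (1 / 2 : ℝ)).congr_fderiv ?_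
      ext x
      simp [hsymm, ← two_smul ℝ, smul_smul]
    have hshift : HasFDerivAt (fun w => g (z + w)) (D (z + w)) w :=
      (hasFDerivAt_comp_add_left z).2 (hball w (hsub hw)).2.hasFDerivAt
    exact ((hshift.sub_const _).sub (D z).hasFDerivAt).sub hquad
  have hmv := (convex_closedBall (0 : E) ‖v‖).norm_image_sub_le_of_norm_hasFDerivWithin_le
    (C := c * ‖v‖) (fun w hw => (hrem w hw).hasFDerivWithinAt) (fun w hw =>
      ((hball w (hsub hw)).1).trans (by gcongr; exact mem_closedBall_zero_iff.1 hw))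
    (mem_closedBall_self (norm_nonneg v)) (mem_closedBall_zero_iff.2 le_rfl)
  simpa [rem, pow_two, mul_assoc] using hmv

-- The linear and the trace-free quadratic Taylor terms are harmonic.
lemma exists_harmonic_isLittleO_sub (hg : ContDiffAt ℝ 2 g z) :
    ∃ h : ℂ → ℝ, HarmonicOnNhd h univ ∧ h z = g z ∧
      (fun x => g x - h x - lap g z / 4 * ‖x - z‖ ^ 2) =o[𝓝 z] fun x => ‖x - z‖ ^ 2 := by
  set D := fderiv ℝ g z
  set D₂ := fderiv ℝ (fderiv ℝ g) z
  set α : ℂ := D 1 - D I * I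
  set β : ℂ := ((D₂ 1 1 - D₂ I I : ℝ) : ℂ) / 4 - ((D₂ 1 I + D₂ I 1 : ℝ) : ℂ) / 4 * I
  refine ⟨fun x => (g z + α * (x - z) + β * (x - z) ^ 2).re, fun x _ =>
    AnalyticAt.harmonicAt_re (f := fun x => g z + α * (x - z) + β * (x - z) ^ 2)
      (Differentiable.analyticAt (by fun_prop) x), by simp, ?_⟩
  have htaylor := (isLittleO_sub_taylor_two hg).comp_tendsto
    (tendsto_sub_nhds_zero_iff.2 (tendsto_id (x := 𝓝 z)))
  refine htaylor.congr_left fun x => ?_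
  have hcoord : x - z = (x - z).re • (1 : ℂ) + (x - z).im • I := by
    simp [Complex.ext_iff]
  have hD : D (x - z) = (x - z).re * D 1 + (x - z).im * D I := by
    rw [hcoord, map_add, map_smul, map_smul]
    simp
  have hD₂ : D₂ (x - z) (x - z) = (x - z).re ^ 2 * D₂ 1 1 +
      (x - z).re * (x - z).im * (D₂ 1 I + D₂ I 1) + (x - z).im ^ 2 * D₂ I I := by
    rw [hcoord]
    simp only [map_add, map_smul, smul_eq_mul, add_apply, smul_apply, add_re, add_im]
    simp
    ring
  simp only [Function.comp_apply, id, add_sub_cancel]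
  rw [hD, hD₂, lap_eq_fderiv_fderiv hg, ← normSq_eq_norm_sq, normSq_apply]
  simp [α, β, pow_two]
  ring

lemma LocallySubmean.lap_nonneg (hw : LocallySubmean g U) (hU : IsOpen U)
    (hgc : ContinuousOn g U) (hg : ContDiffAt ℝ 2 g z) (hz : z ∈ U) : 0 ≤ lap g z := by
  by_contra! hneg
  obtain ⟨h, hh, hhz, ho⟩ := exists_harmonic_isLittleO_sub hg
  have hh' : HarmonicOnNhd h U := hh.mono (subset_univ U)
  refine (hw.sub_harmonic hU hgc hh').not_isLocalMax_add_norm_sub_sq hU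
    (hgc.sub hh'.continuousOn) hz (c := z) (ε := -lap g z / 8) (by linarith) ?_
  filter_upwards [ho.bound (c := -lap g z / 8) (by linarith)] with x hx
  rw [Real.norm_eq_abs, norm_pow, norm_norm] at hx
  simp only [Pi.sub_apply, smul_eq_mul, sub_self, norm_zero, hhz]
  linarith [le_of_abs_le hx]

lemma harmonicOnNhd_of_harmonicOn (hU : IsOpen U) (hg : HarmonicOn g U) : HarmonicOnNhd g U := by
  have hcd : ∀ x ∈ U, ContDiffAt ℝ 2 g x := fun x hx => hg.1.contDiffAt (hU.mem_nhds hx)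
  refine fun z hz => ⟨hcd z hz, ?_⟩
  filter_upwards [hU.mem_nhds hz] with x hx
  rw [← lap_eq_laplacian (hcd x hx), hg.2 x hx, Pi.zero_apply]

lemma harmonicAt_comp_analyticAt {h : ℂ → ℝ} {φ : ℂ → ℂ} (hh : HarmonicAt h (φ z))
    (hφ : AnalyticAt ℂ φ z) : HarmonicAt (h ∘ φ) z := by
  obtain ⟨r, hr, hball⟩ := Metric.eventually_nhds_iff_ball.1 hh.eventually
  obtain ⟨F, hF, hFh⟩ := InnerProductSpace.HarmonicOnNhd.exists_analyticOnNhd_ball_re_eq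
    (fun x hx => hball x hx)
  have hre : (fun x => (F (φ x)).re) =ᶠ[𝓝 z] h ∘ φ :=
    (hFh.eventuallyEq_of_mem (ball_mem_nhds _ hr)).comp_tendsto hφ.continuousAt
  exact (harmonicAt_congr_nhds hre).1
    ((hF _ (mem_ball_self hr)).comp hφ : AnalyticAt ℂ (F ∘ φ) z).harmonicAt_re

end Laplacian

section LaplacianCalculus

variable {φ χ : ℂ → ℝ} {z : ℂ}

lemma lap_congr_nhds (h : φ =ᶠ[𝓝 z] χ) : lap φ z = lap χ z := by
  have hv (v : ℂ) : (fun w => fderiv ℝ φ w v) =ᶠ[𝓝 z] fun w => fderiv ℝ χ w v :=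
    (h.fderiv (𝕜 := ℝ)).fun_comp (· v)
  rw [lap, lap, (hv 1).fderiv_eq, (hv I).fderiv_eq]

lemma lap_eq_zero_of_eventuallyEq_const {c : ℝ} (h : φ =ᶠ[𝓝 z] fun _ => c) : lap φ z = 0 := by
  rw [lap_congr_nhds h]
  simp [lap]

lemma lap_eq_zero_of_notMem_tsupport (hz : z ∉ tsupport φ) : lap φ z = 0 :=
  lap_eq_zero_of_eventuallyEq_const (notMem_tsupport_iff_eventuallyEq.1 hz)

lemma tsupport_lap_subset : tsupport (lap φ) ⊆ tsupport φ :=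
  closure_minimal (fun _ hz => not_imp_comm.1 lap_eq_zero_of_notMem_tsupport hz)
    (isClosed_tsupport _)

lemma hasCompactSupport_lap (hφ : HasCompactSupport φ) : HasCompactSupport (lap φ) :=
  hφ.of_isClosed_subset (isClosed_tsupport _) tsupport_lap_subset

lemma contDiff_fderiv_apply_const (hφ : ContDiff ℝ 2 φ) (v : ℂ) :
    ContDiff ℝ 1 fun w => fderiv ℝ φ w v :=
  (hφ.fderiv_right one_add_one_eq_two.le).clm_apply contDiff_const

lemma continuous_fderiv_apply_const (hφ : ContDiff ℝ 1 φ) (v : ℂ) :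
    Continuous fun w => fderiv ℝ φ w v :=
  (hφ.continuous_fderiv one_ne_zero).clm_apply continuous_const

lemma continuous_lap (hφ : ContDiff ℝ 2 φ) : Continuous (lap φ) :=
  (continuous_fderiv_apply_const (contDiff_fderiv_apply_const hφ 1) 1).add
    (continuous_fderiv_apply_const (contDiff_fderiv_apply_const hφ I) I)

lemma integrable_fderiv_apply_const (hφ : ContDiff ℝ 1 φ) (hs : HasCompactSupport φ) (v : ℂ) :
    Integrable fun z => fderiv ℝ φ z v :=
  (continuous_fderiv_apply_const hφ v).integrable_of_hasCompactSupport (hs.fderiv_apply ℝ v)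

lemma integral_fderiv_apply_eq_zero (hφ : ContDiff ℝ 1 φ) (hs : HasCompactSupport φ) (v : ℂ) :
    ∫ z, fderiv ℝ φ z v = 0 := by
  simpa using integral_mul_fderiv_eq_neg_fderiv_mul_of_integrable (μ := (volume : Measure ℂ))
    (f := fun _ : ℂ => (1 : ℝ)) (g := φ) (v := v) (by simp)
    (by simpa using integrable_fderiv_apply_const hφ hs v)
    (by simpa using hφ.continuous.integrable_of_hasCompactSupport hs)
    (by simp) (fun x _ => hφ.differentiable one_ne_zero x)

lemma integral_lap_eq_zero (hφ : ContDiff ℝ 2 φ) (hs : HasCompactSupport φ) :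
    ∫ z, lap φ z = 0 := by
  have hcd := contDiff_fderiv_apply_const hφ
  have hcs (v : ℂ) := hs.fderiv_apply ℝ v
  simp only [lap]
  rw [integral_add (integrable_fderiv_apply_const (hcd 1) (hcs 1) 1)
      (integrable_fderiv_apply_const (hcd I) (hcs I) I),
    integral_fderiv_apply_eq_zero (hcd 1) (hcs 1), integral_fderiv_apply_eq_zero (hcd I) (hcs I),
    add_zero]

lemma lap_add (hφ : ContDiff ℝ 2 φ) (hχ : ContDiff ℝ 2 χ) : lap (φ + χ) = lap φ + lap χ := by
  ext z
  have hsum : ContDiffAt ℝ 2 (φ + χ) z := (hφ.add hχ).contDiffAt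
  rw [Pi.add_apply, lap_eq_laplacian hsum, lap_eq_laplacian hφ.contDiffAt,
    lap_eq_laplacian hχ.contDiffAt, hφ.contDiffAt.laplacian_add hχ.contDiffAt]

lemma fderiv_comp_const_sub (a : ℂ) (hφ : DifferentiableAt ℝ φ (a - z)) :
    fderiv ℝ (fun t => φ (a - t)) z = -fderiv ℝ φ (a - z) := by
  have h := hφ.hasFDerivAt.comp z ((hasFDerivAt_id (𝕜 := ℝ) z).const_sub a)
  rw [show (fun t => φ (a - t)) = φ ∘ HSub.hSub a from rfl, h.fderiv]
  ext v
  simp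

lemma lap_comp_const_sub (hφ : ContDiff ℝ 2 φ) (a : ℂ) :
    lap (fun t => φ (a - t)) z = lap φ (a - z) := by
  have h (v : ℂ) : (fun w => fderiv ℝ (fun t => φ (a - t)) w v) =
      fun w => -(fun x => fderiv ℝ φ x v) (a - w) := by
    ext w
    rw [fderiv_comp_const_sub a (hφ.differentiable two_ne_zero _), neg_apply]
  have hd (v : ℂ) := (contDiff_fderiv_apply_const hφ v).differentiable one_ne_zero (a - z)
  simp only [lap]
  rw [h, h, fderiv_fun_neg, fderiv_fun_neg, fderiv_comp_const_sub a (hd 1),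
    fderiv_comp_const_sub a (hd I)]
  simp

end LaplacianCalculus

section Mollification

variable {V k : ℂ → ℝ} {O : Set ℂ} {ε : ℝ}

lemma fderiv_convolution_apply (hV : Continuous V) (hk : ContDiff ℝ 1 k)
    (hks : HasCompactSupport k) (z v : ℂ) :
    fderiv ℝ (k ⋆ V) z v = ((fun x => fderiv ℝ k x v) ⋆ V) z := by
  rw [(hks.hasFDerivAt_convolution_left _ hk hV.locallyIntegrable z).fderiv]
  have hex := (hks.fderiv ℝ).convolutionExists_left (μ := volume)
    ((ContinuousLinearMap.lsmul ℝ ℝ : ℝ →L[ℝ] ℝ →L[ℝ] ℝ).precompL ℂ)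
    (hk.continuous_fderiv one_ne_zero) hV.locallyIntegrable z
  exact ContinuousLinearMap.integral_apply hex v

lemma lap_convolution (hV : Continuous V) (hk : ContDiff ℝ 2 k) (hks : HasCompactSupport k) :
    lap (k ⋆ V) = lap k ⋆ V := by
  have hcd := contDiff_fderiv_apply_const hk
  have hcs (v : ℂ) := hks.fderiv_apply ℝ v
  have hex (v : ℂ) : ConvolutionExists (fun x => fderiv ℝ (fun w => fderiv ℝ k w v) x v) V
      (ContinuousLinearMap.lsmul ℝ ℝ) volume :=
    ((hcs v).fderiv_apply ℝ v).convolutionExists_left _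
      (continuous_fderiv_apply_const (hcd v) v) hV.locallyIntegrable
  have hsecond (z v : ℂ) : fderiv ℝ (fun w => fderiv ℝ (k ⋆ V) w v) z v =
      ((fun x => fderiv ℝ (fun w => fderiv ℝ k w v) x v) ⋆ V) z := by
    rw [← fderiv_convolution_apply hV (hcd v) (hcs v) z v]
    simp only [fderiv_convolution_apply hV (hk.of_le one_le_two) hks]
  ext z
  rw [lap, hsecond, hsecond, ← Pi.add_apply, ← (hex 1).add_distrib (hex I)]
  rfl

lemma circleAverage_convolution (hV : Continuous V) (hk : Continuous k)
    (hks : HasCompactSupport k) (z : ℂ) (ρ : ℝ) :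
    Real.circleAverage (k ⋆ V) z ρ = (k ⋆ fun x => Real.circleAverage V x ρ) z := by
  have hmap (t : ℂ) (θ : ℝ) : circleMap z ρ θ - t = circleMap (z - t) ρ θ := by
    simp [circleMap, sub_add_eq_add_sub]
  have hcont : Continuous fun q : ℝ × ℂ => k q.2 • V (circleMap z ρ q.1 - q.2) := by fun_prop
  have hint : Integrable (fun q : ℝ × ℂ => k q.2 • V (circleMap z ρ q.1 - q.2))
      ((volume.restrict (Ioc 0 (2 * π))).prod volume) := by
    rw [← Measure.restrict_univ (μ := (volume : Measure ℂ)), Measure.prod_restrict]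
    refine IntegrableOn.of_forall_sdiff_eq_zero (s := Ioc 0 (2 * π) ×ˢ tsupport k)
      ((hcont.continuousOn.integrableOn_compact (μ := volume.prod volume)
        (isCompact_Icc.prod hks)).mono_set (prod_mono_left Ioc_subset_Icc_self))
      (measurableSet_Ioc.prod .univ) ?_
    rintro ⟨θ, t⟩ ⟨⟨hθ, -⟩, ht⟩
    have : t ∉ tsupport k := fun h => ht ⟨hθ, h⟩
    simp [image_eq_zero_of_notMem_tsupport this]
  calc Real.circleAverage (k ⋆ V) z ρ
      = (2 * π)⁻¹ • ∫ θ in Ioc 0 (2 * π), ∫ t, k t • V (circleMap z ρ θ - t) := by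
        rw [Real.circleAverage_def, intervalIntegral.integral_of_le (by positivity)]
        rfl
    _ = (2 * π)⁻¹ • ∫ t, ∫ θ in Ioc 0 (2 * π), k t • V (circleMap z ρ θ - t) := by
        rw [integral_integral_swap hint]
    _ = ∫ t, k t • Real.circleAverage V (z - t) ρ := by
        simp only [Real.circleAverage_def, hmap, integral_smul,
          intervalIntegral.integral_of_le (show (0 : ℝ) ≤ 2 * π by positivity),
          smul_comm (k _) (2 * π)⁻¹]

lemma continuous_circleAverage (hV : Continuous V) (ρ : ℝ) :
    Continuous fun x => Real.circleAverage V x ρ := by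
  simp only [Real.circleAverage_def]
  have hjoint : Continuous (Function.uncurry fun x θ => V (circleMap x ρ θ)) := by
    simp only [circleMap, Function.uncurry_def]
    fun_prop
  exact (intervalIntegral.continuous_parametric_intervalIntegral_of_continuous' hjoint 0
    (2 * π)).const_smul (2 * π)⁻¹

lemma locallySubmean_convolution (hV : Continuous V) (hk : Continuous k)
    (hks : HasCompactSupport k) (hk0 : 0 ≤ k) {U : Set ℂ} (hO : IsOpen O)
    (hVO : LocallySubmean V O) (hUO : ∀ z ∈ U, ∀ t ∈ tsupport k, z - t ∈ O) :
    LocallySubmean (k ⋆ V) U := by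
  intro z hz
  obtain ⟨δ, hδ, hδO⟩ := (hks.isCompact.image (continuous_const.sub continuous_id :
    Continuous fun t => z - t)).exists_thickening_subset_open hO (image_subset_iff.2 (hUO z hz))
  have hint (W : ℂ → ℝ) (hW : Continuous W) : Integrable fun t => k t • W (z - t) :=
    (by fun_prop : Continuous fun t => k t • W (z - t)).integrable_of_hasCompactSupport
      hks.smul_right
  filter_upwards [Ioo_mem_nhdsGT hδ] with ρ hρ
  rw [circleAverage_convolution hV hk hks]
  refine integral_mono (hint V hV) (hint _ (continuous_circleAverage hV ρ)) fun t => ?_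
  by_cases ht : t ∈ tsupport k
  · have hball : closedBall (z - t) ρ ⊆ O := fun y hy =>
      hδO (mem_thickening_iff.2 ⟨z - t, mem_image_of_mem _ ht, hy.trans_lt hρ.2⟩)
    have hmean : V (z - t) ≤ Real.circleAverage V (z - t) ρ :=
      (hVO.mono (ball_subset_closedBall.trans hball)).le_circleAverage hρ.1 hV.continuousOn
    exact smul_le_smul_of_nonneg_left hmean (hk0 t)
  · simp [image_eq_zero_of_notMem_tsupport ht]

lemma exists_mollifier (hV : Continuous V) (hs : HasCompactSupport V) {δ : ℝ} (hδ : 0 < δ)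
    (hε : 0 < ε) :
    ∃ k : ℂ → ℝ, ContDiff ℝ 2 k ∧ HasCompactSupport k ∧ 0 ≤ k ∧ tsupport k ⊆ ball 0 δ ∧
      ∀ z, |(k ⋆ V) z - V z| ≤ ε := by
  obtain ⟨η, hη, huc⟩ :=
    Metric.uniformContinuous_iff.1 (hs.uniformContinuous_of_continuous hV) ε hε
  let b : ContDiffBump (0 : ℂ) :=
    ⟨min η δ / 3, min η δ / 2, by positivity, by linarith [lt_min hη hδ]⟩
  have hbη : b.rOut < η := (half_lt_self (lt_min hη hδ)).trans_le (min_le_left _ _)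
  have hbδ : b.rOut < δ := (half_lt_self (lt_min hη hδ)).trans_le (min_le_right _ _)
  refine ⟨b.normed volume, b.contDiff_normed, b.hasCompactSupport_normed, b.nonneg_normed,
    b.tsupport_normed_eq.trans_subset (closedBall_subset_ball hbδ), fun z => ?_⟩
  exact b.dist_normed_convolution_le hV.aestronglyMeasurable
    fun x hx => (huc ((mem_ball.1 hx).trans hbη)).le

lemma tsupport_convolution_subset_cthickening (hk : tsupport k ⊆ ball 0 ε) :
    tsupport (k ⋆ V) ⊆ cthickening ε (tsupport V) := by
  refine closure_minimal (fun z hz => ?_) isClosed_cthickening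
  obtain ⟨t, ht, x, hx, rfl⟩ := support_convolution_subset _ hz
  refine mem_cthickening_of_dist_le _ x _ _ (subset_tsupport V hx) ?_
  simpa using (mem_ball_zero_iff.1 (hk (subset_tsupport k ht))).le

end Mollification

section TestFunctions

/-- A test function on `O`: the class of functions against which `IsRieszMeasure` is tested. -/
structure IsTestFunction (O : Set ℂ) (φ : ℂ → ℝ) : Prop where
  contDiff : ContDiff ℝ 2 φ
  hasCompactSupport : HasCompactSupport φ
  tsupport_subset : tsupport φ ⊆ O

variable {O K : Set ℂ} {φ χ w V : ℂ → ℝ} {z : ℂ} {M₁ M₂ : Measure ℂ}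

lemma IsTestFunction.mono {O' : Set ℂ} (hφ : IsTestFunction O φ) (h : O ⊆ O') :
    IsTestFunction O' φ :=
  ⟨hφ.1, hφ.2, hφ.3.trans h⟩

lemma IsTestFunction.add (hφ : IsTestFunction O φ) (hχ : IsTestFunction O χ) :
    IsTestFunction O (φ + χ) :=
  ⟨hφ.1.add hχ.1, hφ.2.add hχ.2, (tsupport_add φ χ).trans (union_subset hφ.3 hχ.3)⟩

lemma IsTestFunction.integrable [IsFiniteMeasureOnCompacts M₁] (hφ : IsTestFunction O φ) :
    Integrable φ M₁ :=
  hφ.1.continuous.integrable_of_hasCompactSupport hφ.2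

lemma exists_isTestFunction_eq_one (hK : IsCompact K) (hO : IsOpen O) (h : K ⊆ O) :
    ∃ χ : ℂ → ℝ, IsTestFunction O χ ∧ (∀ᶠ x in 𝓝ˢ K, χ x = 1) ∧ ∀ x, χ x ∈ Icc (0 : ℝ) 1 := by
  obtain ⟨L, hL, hKL, hLO⟩ := exists_compact_between hK hO h
  obtain ⟨χ, hone, hzero, hmem⟩ := exists_contMDiffMap_one_nhds_of_subset_interior (n := 2)
    (modelWithCornersSelf ℝ ℂ) hK.isClosed hKL
  have hsub : tsupport χ ⊆ L :=
    closure_minimal (fun x hx => not_imp_comm.1 (hzero x) hx) hL.isClosed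
  exact ⟨χ, ⟨χ.contMDiff.contDiff, hL.of_isClosed_subset (isClosed_tsupport _) hsub,
    hsub.trans hLO⟩, hone, hmem⟩

lemma continuous_mul_of_tsupport_subset (hO : IsOpen O) (hφ : Continuous φ)
    (ht : tsupport φ ⊆ O) (hw : ContinuousOn w O) : Continuous fun z => w z * φ z := by
  rw [continuous_iff_continuousAt]
  intro z
  by_cases hz : z ∈ tsupport φ
  · exact (hw.continuousAt (hO.mem_nhds (ht hz))).mul hφ.continuousAt
  · have hzero : (fun z => w z * φ z) =ᶠ[𝓝 z] fun _ => 0 :=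
      (notMem_tsupport_iff_eventuallyEq.1 hz).mono fun y hy => by simp [hy]
    exact hzero.continuousAt

lemma IsTestFunction.integrable_mul_lap (hO : IsOpen O) (hφ : IsTestFunction O φ)
    (hw : ContinuousOn w O) : Integrable fun z => w z * lap φ z :=
  (continuous_mul_of_tsupport_subset hO (continuous_lap hφ.1) (tsupport_lap_subset.trans hφ.3)
    hw).integrable_of_hasCompactSupport (hasCompactSupport_lap hφ.2).mul_left

lemma IsTestFunction.setIntegral_mul_lap (hφ : IsTestFunction O φ) :
    ∫ z in O, w z * lap φ z = ∫ z, w z * lap φ z :=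
  setIntegral_eq_integral_of_forall_compl_eq_zero fun x hx => by
    rw [lap_eq_zero_of_notMem_tsupport fun h => hx (hφ.3 h), mul_zero]

lemma isTestFunction_comp_const_sub {k : ℂ → ℝ} (hk : ContDiff ℝ 2 k) (hks : HasCompactSupport k)
    (hkO : ∀ t ∈ tsupport k, z - t ∈ O) : IsTestFunction O fun t => k (z - t) := by
  have hts : tsupport (fun t => k (z - t)) ⊆ (fun t => z - t) ⁻¹' tsupport k :=
    closure_minimal (fun t ht => subset_tsupport k ht)
      ((isClosed_tsupport k).preimage (by fun_prop))
  refine ⟨hk.comp (contDiff_const.sub contDiff_id),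
    hks.comp_homeomorph (Homeomorph.subLeft z), fun t ht => ?_⟩
  simpa using hkO _ (hts ht)

lemma measure_le_of_forall_isTestFunction [IsFiniteMeasure M₁] [IsFiniteMeasure M₂]
    (hO : IsOpen O) (h : ∀ φ, IsTestFunction O φ → 0 ≤ φ → ∫ z, φ z ∂M₁ ≤ ∫ z, φ z ∂M₂)
    (hK : IsCompact K) (hKO : K ⊆ O) : M₁ K ≤ M₂ O := by
  obtain ⟨χ, hχ, hone, hmem⟩ := exists_isTestFunction_eq_one hK hO hKO
  have hlower : M₁.real K ≤ ∫ z, χ z ∂M₁ := by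
    rw [← integral_indicator_one hK.measurableSet]
    refine integral_mono ((integrable_const (1 : ℝ)).indicator hK.measurableSet) hχ.integrable
      (indicator_le' (fun z hz => (hone.self_of_nhdsSet z hz).ge) fun z _ => (hmem z).1)
  have hupper : ∫ z, χ z ∂M₂ ≤ M₂.real O := by
    rw [← integral_indicator_one hO.measurableSet]
    refine integral_mono hχ.integrable ((integrable_const (1 : ℝ)).indicator hO.measurableSet)
      fun z => le_indicator (fun z _ => (hmem z).2) (fun z hz => ?_) z
    exact (image_eq_zero_of_notMem_tsupport fun hc => hz (hχ.3 hc)).le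
  exact (ENNReal.toReal_le_toReal (measure_ne_top _ _) (measure_ne_top _ _)).1
    (hlower.trans ((h χ hχ fun z => (hmem z).1).trans hupper))

lemma restrict_le_restrict_of_forall_isTestFunction [IsFiniteMeasure M₁] [IsFiniteMeasure M₂]
    (hO : IsOpen O) (h : ∀ φ, IsTestFunction O φ → 0 ≤ φ → ∫ z, φ z ∂M₁ ≤ ∫ z, φ z ∂M₂) :
    M₁.restrict O ≤ M₂.restrict O := by
  refine Measure.le_iff.2 fun A hA => ?_
  rw [Measure.restrict_apply hA, Measure.restrict_apply hA,
    (hA.inter hO.measurableSet).measure_eq_iSup_isCompact_of_ne_top (measure_ne_top M₁ _),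
    Set.measure_eq_iInf_isOpen (A ∩ O) M₂]
  refine iSup₂_le fun K hKA => iSup_le fun hK => le_iInf₂ fun V hAV => le_iInf fun hV => ?_
  refine (measure_le_of_forall_isTestFunction (hV.inter hO)
    (fun φ hφ => h φ (hφ.mono inter_subset_right)) hK ?_).trans (measure_mono inter_subset_left)
  exact subset_inter (hKA.trans hAV) (hKA.trans inter_subset_right)

-- Approximation by mollification: smoothing at a small enough scale preserves
-- the sub-mean-value property near `K`.
lemma exists_isTestFunction_lap_nonneg (hO : IsOpen O) (hV : Continuous V)
    (hVs : HasCompactSupport V) (hVO : tsupport V ⊆ O) {U : Set ℂ} (hU : IsOpen U)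
    (hVU : LocallySubmean V U) (hK : IsCompact K) (hKU : K ⊆ U) {ε : ℝ} (hε : 0 < ε) :
    ∃ g, IsTestFunction O g ∧ (∀ z, |g z - V z| ≤ ε) ∧ ∀ z ∈ K, 0 ≤ lap g z := by
  obtain ⟨δ₁, hδ₁, hδ₁O⟩ := hVs.isCompact.exists_cthickening_subset_open hO hVO
  obtain ⟨δ₂, hδ₂, hδ₂U⟩ := hK.exists_thickening_subset_open hU hKU
  obtain ⟨k, hk, hks, hk0, hkδ, hkε⟩ :=
    exists_mollifier hV hVs (lt_min hδ₁ (half_pos hδ₂)) hε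
  have hts : tsupport (k ⋆ V) ⊆ cthickening δ₁ (tsupport V) :=
    tsupport_convolution_subset_cthickening (hkδ.trans (ball_subset_ball (min_le_left _ _)))
  have hg : ContDiff ℝ 2 (k ⋆ V) := hks.contDiff_convolution_left _ hk hV.locallyIntegrable
  have hshift : ∀ z ∈ thickening (δ₂ / 2) K, ∀ t ∈ tsupport k, z - t ∈ U := by
    intro z hz t ht
    obtain ⟨x, hx, hxz⟩ := mem_thickening_iff.1 hz
    have htδ : ‖t‖ < δ₂ / 2 := (mem_ball_zero_iff.1 (hkδ ht)).trans_le (min_le_right _ _)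
    refine hδ₂U (mem_thickening_iff.2 ⟨x, hx, ?_⟩)
    calc dist (z - t) x ≤ dist (z - t) z + dist z x := dist_triangle _ _ _
      _ < δ₂ / 2 + δ₂ / 2 := by gcongr; simpa [dist_eq_norm] using htδ
      _ = δ₂ := add_halves δ₂
  have hsub : LocallySubmean (k ⋆ V) (thickening (δ₂ / 2) K) :=
    locallySubmean_convolution hV hk.continuous hks hk0 hU hVU hshift
  exact ⟨k ⋆ V, ⟨hg, hVs.isCompact.cthickening.of_isClosed_subset (isClosed_tsupport _) hts,
    hts.trans hδ₁O⟩, hkε, fun z hz => hsub.lap_nonneg isOpen_thickening hg.continuous.continuousOn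
      hg.contDiffAt (self_subset_thickening (half_pos hδ₂) K hz)⟩

end TestFunctions

section Exhaustion

/-- A negative continuous exhaustion function of a nonempty open set: an `IsExhaustion` without
the subharmonicity requirement. -/
structure IsContinuousExhaustion (u : ℂ → ℝ) (Ω : Set ℂ) : Prop where
  isOpen : IsOpen Ω
  nonempty : Ω.Nonempty
  neg : ∀ z ∈ Ω, u z < 0
  continuousOn : ContinuousOn u Ω
  exh : ∀ c : ℝ, c < 0 → IsCompact (closure {z | z ∈ Ω ∧ u z < c}) ∧
    closure {z | z ∈ Ω ∧ u z < c} ⊆ Ω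

variable {u v w φ : ℂ → ℝ} {Ω O K : Set ℂ} {M M₁ M₂ : Measure ℂ} {r : ℝ}

lemma IsExhaustion.isContinuousExhaustion (hu : IsExhaustion u Ω) (hΩ : IsOpen Ω)
    (hne : Ω.Nonempty) : IsContinuousExhaustion u Ω :=
  ⟨hΩ, hne, hu.neg, hu.subh.1, hu.exh⟩

lemma IsRieszMeasure.integral_eq (hM : IsRieszMeasure v Ω M) (hφ : IsTestFunction Ω φ) :
    ∫ z, φ z ∂M = (4 : ℝ)⁻¹ * ∫ z, v z * lap φ z :=
  (hM.2 φ hφ.1 hφ.2 hφ.3).trans (by rw [hφ.setIntegral_mul_lap])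

lemma IsRieszMeasure.integral_eq_integral (h₁ : IsRieszMeasure v Ω M₁)
    (h₂ : IsRieszMeasure w Ω M₂) (hφ : IsTestFunction Ω φ) (h : ∀ z, lap φ z ≠ 0 → v z = w z) :
    ∫ z, φ z ∂M₁ = ∫ z, φ z ∂M₂ := by
  rw [h₁.integral_eq hφ, h₂.integral_eq hφ]
  congr 2 with z
  by_cases hz : lap φ z = 0
  · simp [hz]
  · rw [h z hz]

lemma IsRieszMeasure.restrict_eq_restrict [IsFiniteMeasure M₁] [IsFiniteMeasure M₂]
    (h₁ : IsRieszMeasure v Ω M₁) (h₂ : IsRieszMeasure w Ω M₂) (hO : IsOpen O) (hOΩ : O ⊆ Ω)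
    (h : EqOn v w O) : M₁.restrict O = M₂.restrict O := by
  have key φ (hφ : IsTestFunction O φ) : ∫ z, φ z ∂M₁ = ∫ z, φ z ∂M₂ :=
    h₁.integral_eq_integral h₂ (hφ.mono hOΩ) fun z hz =>
      h (hφ.3 (not_imp_comm.1 lap_eq_zero_of_notMem_tsupport hz))
  exact le_antisymm (restrict_le_restrict_of_forall_isTestFunction hO fun φ hφ _ => (key φ hφ).le)
    (restrict_le_restrict_of_forall_isTestFunction hO fun φ hφ _ => (key φ hφ).ge)

lemma isRieszMeasure_const (Ω : Set ℂ) (c : ℝ) : IsRieszMeasure (fun _ => c) Ω 0 := by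
  refine ⟨by simp, fun φ hφ hs ht => ?_⟩
  rw [IsTestFunction.setIntegral_mul_lap (w := fun _ => c) ⟨hφ, hs, ht⟩, integral_const_mul,
    integral_lap_eq_zero hφ hs]
  simp

lemma exists_smooth_lap_eq_zero_of_forall_integral_eq_zero (hΩ : IsOpen Ω)
    (hv : ContinuousOn v Ω) (h : ∀ φ, IsTestFunction Ω φ → ∫ z, v z * lap φ z = 0)
    (hK : IsCompact K) (hKΩ : K ⊆ Ω) {ε : ℝ} (hε : 0 < ε) :
    ∃ g, ContDiff ℝ 2 g ∧ ∀ z ∈ K, lap g z = 0 ∧ |g z - v z| ≤ ε := by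
  obtain ⟨χ, hχ, hone, -⟩ := exists_isTestFunction_eq_one hK hΩ hKΩ
  obtain ⟨W, hW, hKW, hW1⟩ := mem_nhdsSet_iff_exists.1 hone
  obtain ⟨δ, hδ, hδW⟩ := hK.exists_thickening_subset_open (hW.inter hΩ) (subset_inter hKW hKΩ)
  have hV : Continuous fun z => v z * χ z :=
    continuous_mul_of_tsupport_subset hΩ hχ.1.continuous hχ.3 hv
  obtain ⟨k, hk, hks, -, hkδ, hkε⟩ := exists_mollifier hV hχ.2.mul_left hδ hε
  have hshift : ∀ z ∈ K, ∀ t ∈ tsupport k, z - t ∈ W ∩ Ω := fun z hz t ht =>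
    hδW (mem_thickening_iff.2 ⟨z, hz, by simpa using mem_ball_zero_iff.1 (hkδ ht)⟩)
  refine ⟨k ⋆ fun z => v z * χ z,
    hks.contDiff_convolution_left _ hk hV.locallyIntegrable, fun z hz => ⟨?_, ?_⟩⟩
  · have htest := isTestFunction_comp_const_sub hk hks fun t ht => (hshift z hz t ht).2
    rw [lap_convolution hV hk hks, convolution_eq_swap, ← h _ htest]
    refine integral_congr_ae (.of_forall fun t => ?_)
    simp only [ContinuousLinearMap.lsmul_apply, smul_eq_mul, lap_comp_const_sub hk]
    by_cases ht : z - t ∈ tsupport k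
    · have hχt : χ t = 1 := hW1 (by simpa using (hshift z hz _ ht).1)
      rw [hχt, mul_one, mul_comm]
    · simp [lap_eq_zero_of_notMem_tsupport ht]
  · simpa [hone.self_of_nhdsSet z hz] using hkε z

namespace IsContinuousExhaustion

variable (hu : IsContinuousExhaustion u Ω)
include hu

lemma max_const (hr : r < 0) : IsContinuousExhaustion (fun z => max (u z) r) Ω where
  isOpen := hu.isOpen
  nonempty := hu.nonempty
  neg z hz := max_lt (hu.neg z hz) hr
  continuousOn := hu.continuousOn.sup continuousOn_const
  exh c hc := by
    obtain ⟨hcomp, hsub⟩ := hu.exh c hc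
    have hle : closure {z | z ∈ Ω ∧ max (u z) r < c} ⊆ closure {z | z ∈ Ω ∧ u z < c} :=
      closure_mono fun z hz => ⟨hz.1, (le_max_left _ _).trans_lt hz.2⟩
    exact ⟨hcomp.of_isClosed_subset isClosed_closure hle, hle.trans hsub⟩

lemma isOpen_lt (r : ℝ) : IsOpen {z | z ∈ Ω ∧ u z < r} :=
  hu.continuousOn.isOpen_inter_preimage hu.isOpen isOpen_Iio

lemma isOpen_gt (r : ℝ) : IsOpen {z | z ∈ Ω ∧ r < u z} :=
  hu.continuousOn.isOpen_inter_preimage hu.isOpen isOpen_Ioi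

lemma measurableSet_ge (r : ℝ) : MeasurableSet {z | z ∈ Ω ∧ r ≤ u z} := by
  convert hu.isOpen.measurableSet.diff (hu.isOpen_lt r).measurableSet using 1
  ext z
  simp +contextual

lemma isCompact_le (hr : r < 0) : IsCompact {z | z ∈ Ω ∧ u z ≤ r} := by
  obtain ⟨hcomp, hsub⟩ := hu.exh (r / 2) (by linarith)
  have heq : {z | z ∈ Ω ∧ u z ≤ r} = closure {z | z ∈ Ω ∧ u z < r / 2} ∩ u ⁻¹' Iic r :=
    Subset.antisymm (fun z hz => ⟨subset_closure ⟨hz.1, by linarith [hz.2]⟩, hz.2⟩)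
      fun z hz => ⟨hsub hz.1, hz.2⟩
  rw [heq]
  exact hcomp.of_isClosed_subset ((hu.continuousOn.mono hsub).preimage_isClosed_of_isClosed
    hcomp.isClosed isClosed_Iic) inter_subset_left

lemma eventually_forall_lt (hK : IsCompact K) (hKΩ : K ⊆ Ω) :
    ∀ᶠ r in 𝓝[<] (0 : ℝ), ∀ z ∈ K, u z < r := by
  rcases K.eq_empty_or_nonempty with rfl | hne
  · simp
  obtain ⟨x, hx, hmax⟩ := hK.exists_isMaxOn hne (hu.continuousOn.mono hKΩ)
  filter_upwards [Ioo_mem_nhdsLT (hu.neg x (hKΩ hx))] with r hr z hz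
  exact (hmax hz).trans_lt hr.1

-- Otherwise `-u` would be harmonic, and the maximum principle on `{u < u x / 2}` would give
-- `u x ≥ u x / 2`.
lemma exists_isTestFunction_integral_ne_zero :
    ∃ φ, IsTestFunction Ω φ ∧ ∫ z, u z * lap φ z ≠ 0 := by
  by_contra! hzero
  obtain ⟨x, hx⟩ := hu.nonempty
  have hneg := hu.neg x hx
  set B := {z | z ∈ Ω ∧ u z < u x / 2}
  have hB : IsOpen B := hu.isOpen_lt _
  obtain ⟨hcomp, hsub⟩ := hu.exh (u x / 2) (by linarith)
  obtain ⟨g, hg, hgB⟩ := exists_smooth_lap_eq_zero_of_forall_integral_eq_zero hu.isOpen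
    hu.continuousOn hzero hcomp hsub (ε := -u x / 8) (by linarith)
  have hharm : HarmonicOnNhd g B := harmonicOnNhd_of_harmonicOn hB
    ⟨hg.contDiffOn, fun z hz => (hgB z (subset_closure hz)).1⟩
  have hxB : x ∈ B := ⟨hx, by linarith⟩
  have hle : (-g) x ≤ -u x / 2 + -u x / 8 := by
    refine (LocallySubmean.of_harmonicOnNhd hharm.neg).le_of_frontier_le hB
      (hcomp.isBounded.subset subset_closure) hg.continuous.neg.continuousOn
      (fun z hz => ?_) (subset_closure hxB)
    have hz' : u x / 2 ≤ u z := by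
      by_contra! hlt
      exact (hB.frontier_eq ▸ hz).2 ⟨hsub hz.1, hlt⟩
    have hzg := abs_le.1 (hgB z hz.1).2
    simp only [Pi.neg_apply]
    linarith
  have hxg := abs_le.1 (hgB x (subset_closure hxB)).2
  simp only [Pi.neg_apply] at hle
  linarith

-- The Bochner integral of a nonintegrable `φ` is `0`; comparing with `φ + φ₀`, where
-- `∫ u * lap φ₀ ≠ 0`, excludes this case.
lemma integrable_isTestFunction (hM : IsRieszMeasure u Ω M) (hφ : IsTestFunction Ω φ) :
    Integrable φ M := by
  by_contra hint
  obtain ⟨φ₀, hφ₀, hne⟩ := hu.exists_isTestFunction_integral_ne_zero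
  have hadd : ∫ z, u z * lap (φ + φ₀) z = (∫ z, u z * lap φ z) + ∫ z, u z * lap φ₀ z := by
    rw [← integral_add (hφ.integrable_mul_lap hu.isOpen hu.continuousOn)
      (hφ₀.integrable_mul_lap hu.isOpen hu.continuousOn), lap_add hφ.1 hφ₀.1]
    simp only [Pi.add_apply, mul_add]
  have h₀ := hM.integral_eq hφ₀
  have hint₀ : Integrable φ₀ M := by
    by_contra hc
    rw [integral_undef hc] at h₀
    exact hne (by linarith)
  have h₁ := hM.integral_eq hφ
  have h₂ := hM.integral_eq (hφ.add hφ₀)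
  rw [integral_undef hint] at h₁
  rw [integral_undef fun hc => hint (by simpa using hc.sub hint₀), hadd] at h₂
  exact hne (by linarith)

end IsContinuousExhaustion

end Exhaustion

section MongeAmpere

/-- The properties of the Monge–Ampère measure `μ_{u,r}` that the argument relies on: `μ` is a
finite measure on `{u = r}`, and adding `dd^c u` on `{r ≤ u}` to it gives `dd^c (max u r)`. -/
structure IsLevelMeasure (u : ℂ → ℝ) (Ω : Set ℂ) (ν : Measure ℂ) (r : ℝ) (μ : Measure ℂ) :
    Prop where
  isFiniteMeasure : IsFiniteMeasure μ
  ae_mem : ∀ᵐ z ∂μ, z ∈ Ω ∧ u z = r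
  isRieszMeasure : IsRieszMeasure (fun z => max (u z) r) Ω (μ + ν.restrict {z | z ∈ Ω ∧ r ≤ u z})

variable {u w g W : ℂ → ℝ} {Ω U K : Set ℂ} {ν νr μ : Measure ℂ} {μfam : ℝ → Measure ℂ} {r : ℝ}

lemma continuous_integral_max_mul {X : Type*} [MeasurableSpace X] {m : Measure X} {v k : X → ℝ}
    (hk : Integrable k m) (hint : ∀ t, Integrable (fun x => max (v x) t * k x) m) :
    Continuous fun t => ∫ x, max (v x) t * k x ∂m := by
  refine (LipschitzWith.of_dist_le' (K := ∫ x, |k x| ∂m) fun s t => ?_).continuous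
  rw [dist_eq_norm, dist_eq_norm, ← integral_sub (hint s) (hint t), mul_comm,
    ← integral_const_mul]
  refine norm_integral_le_of_norm_le (hk.abs.const_mul _) (.of_forall fun x => ?_)
  rw [← sub_mul, norm_mul]
  have hlip : |max (v x) s - max (v x) t| ≤ |s - t| := by
    simpa using abs_max_sub_max_le_max (v x) s (v x) t
  gcongr
  exacts [hlip, le_rfl]

namespace IsContinuousExhaustion

variable (hu : IsContinuousExhaustion u Ω)
include hu

lemma measure_le_measure_univ_of_isCompact (hν : IsRieszMeasure u Ω ν) (hr : r < 0)
    (hνr : IsRieszMeasure (fun z => max (u z) r) Ω νr) (hK : IsCompact K) (hKΩ : K ⊆ Ω) :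
    νr K ≤ ν univ := by
  obtain ⟨χ, hχ, hone, hmem⟩ := exists_isTestFunction_eq_one (hK.union (hu.isCompact_le hr))
    hu.isOpen (union_subset hKΩ fun z hz => hz.1)
  have heq : ∫ z, χ z ∂νr = ∫ z, χ z ∂ν := by
    refine hνr.integral_eq_integral hν hχ fun z hz => ?_
    by_contra hne
    have hzΩ : z ∈ Ω := hχ.3 (not_imp_comm.1 lap_eq_zero_of_notMem_tsupport hz)
    have hzr : u z ≤ r := le_of_not_ge fun h => hne (max_eq_left h)
    exact hz (lap_eq_zero_of_eventuallyEq_const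
      (eventually_nhdsSet_iff_forall.1 hone z (Or.inr ⟨hzΩ, hzr⟩)))
  have hnn (m : Measure ℂ) : 0 ≤ᵐ[m] χ := .of_forall fun z => (hmem z).1
  calc νr K = ∫⁻ z, K.indicator 1 z ∂νr := (lintegral_indicator_one hK.measurableSet).symm
    _ ≤ ∫⁻ z, ENNReal.ofReal (χ z) ∂νr := lintegral_mono fun z =>
        indicator_le (f := (1 : ℂ → ℝ≥0∞)) (g := fun z => ENNReal.ofReal (χ z))
          (fun z hz => by simp [hone.self_of_nhdsSet z (Or.inl hz)]) z
    _ = ENNReal.ofReal (∫ z, χ z ∂νr) := (ofReal_integral_eq_lintegral_ofReal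
        ((hu.max_const hr).integrable_isTestFunction hνr hχ) (hnn _)).symm
    _ = ∫⁻ z, ENNReal.ofReal (χ z) ∂ν := by
        rw [heq, ofReal_integral_eq_lintegral_ofReal (hu.integrable_isTestFunction hν hχ) (hnn _)]
    _ ≤ ∫⁻ _, 1 ∂ν := lintegral_mono fun z => by simpa using (hmem z).2
    _ = ν univ := by simp

lemma isFiniteMeasure_of_isRieszMeasure_max [IsFiniteMeasure ν] (hν : IsRieszMeasure u Ω ν)
    (hr : r < 0) (hνr : IsRieszMeasure (fun z => max (u z) r) Ω νr) : IsFiniteMeasure νr := by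
  let S (n : ℕ) : Set ℂ := {z | z ∈ Ω ∧ u z ≤ -(1 / ((n : ℝ) + 1))}
  have hcover : Ω = ⋃ n, S n := by
    refine Subset.antisymm (fun z hz => ?_) (iUnion_subset fun n z hz => hz.1)
    obtain ⟨n, hn⟩ := exists_nat_one_div_lt (neg_pos.2 (hu.neg z hz))
    exact mem_iUnion.2 ⟨n, hz, by linarith⟩
  have hmono : Monotone S := fun n m hnm z hz => by
    have : 1 / ((m : ℝ) + 1) ≤ 1 / ((n : ℝ) + 1) := by gcongr
    exact ⟨hz.1, hz.2.trans (neg_le_neg this)⟩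
  have hle : νr Ω ≤ ν univ := by
    rw [hcover, hmono.measure_iUnion]
    exact iSup_le fun n => hu.measure_le_measure_univ_of_isCompact hν hr hνr
      (hu.isCompact_le (neg_lt_zero.2 (by positivity))) fun z hz => hz.1
  refine ⟨?_⟩
  rw [← measure_add_measure_compl hu.isOpen.measurableSet, hνr.1, add_zero]
  exact hle.trans_lt (measure_lt_top ν univ)

lemma setIntegral_le_integral_max [IsFiniteMeasure ν] (hν : IsRieszMeasure u Ω ν)
    (hex : ∀ t < 0, ∃ M, IsRieszMeasure (fun z => max (u z) t) Ω M) (hr : r < 0)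
    (hg : IsTestFunction Ω g) (hg0 : 0 ≤ g) :
    ∫ z in {z | z ∈ Ω ∧ r ≤ u z}, g z ∂ν ≤ (4 : ℝ)⁻¹ * ∫ z, max (u z) r * lap g z := by
  have hcont : Continuous fun t => (4 : ℝ)⁻¹ * ∫ z, max (u z) t * lap g z :=
    (continuous_integral_max_mul
      ((continuous_lap hg.1).integrable_of_hasCompactSupport (hasCompactSupport_lap hg.2))
      fun t => hg.integrable_mul_lap hu.isOpen (hu.continuousOn.sup continuousOn_const)).const_mul _
  refine ge_of_tendsto (hcont.continuousWithinAt (s := Iio r) (x := r)) ?_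
  filter_upwards [self_mem_nhdsWithin] with t (ht : t < r)
  obtain ⟨M, hM⟩ := hex t (ht.trans hr)
  have := hu.isFiniteMeasure_of_isRieszMeasure_max hν (ht.trans hr) hM
  have hagree : M.restrict {z | z ∈ Ω ∧ t < u z} = ν.restrict {z | z ∈ Ω ∧ t < u z} :=
    hM.restrict_eq_restrict hν (hu.isOpen_gt t) (fun z hz => hz.1)
      fun z hz => max_eq_left hz.2.le
  calc ∫ z in {z | z ∈ Ω ∧ r ≤ u z}, g z ∂ν
      ≤ ∫ z in {z | z ∈ Ω ∧ t < u z}, g z ∂ν :=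
        setIntegral_mono_set hg.integrable.integrableOn (.of_forall hg0)
          (Eventually.of_forall fun z hz => ⟨hz.1, ht.trans_le hz.2⟩)
    _ = ∫ z in {z | z ∈ Ω ∧ t < u z}, g z ∂M := by rw [hagree]
    _ ≤ ∫ z, g z ∂M := setIntegral_le_integral hg.integrable (.of_forall hg0)
    _ = (4 : ℝ)⁻¹ * ∫ z, max (u z) t * lap g z := hM.integral_eq hg

lemma restrict_le_of_isRieszMeasure_max [IsFiniteMeasure ν] (hν : IsRieszMeasure u Ω ν)
    (hex : ∀ t < 0, ∃ M, IsRieszMeasure (fun z => max (u z) t) Ω M) (hr : r < 0)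
    (hνr : IsRieszMeasure (fun z => max (u z) r) Ω νr) :
    ν.restrict {z | z ∈ Ω ∧ r ≤ u z} ≤ νr := by
  have := hu.isFiniteMeasure_of_isRieszMeasure_max hν hr hνr
  have hΩ : (ν.restrict {z | z ∈ Ω ∧ r ≤ u z}).restrict Ω = ν.restrict {z | z ∈ Ω ∧ r ≤ u z} := by
    rw [Measure.restrict_restrict hu.isOpen.measurableSet,
      inter_eq_right.2 (sep_subset Ω fun z => r ≤ u z)]
  rw [← hΩ]
  refine (restrict_le_restrict_of_forall_isTestFunction hu.isOpen fun g hg hg0 => ?_).trans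
    Measure.restrict_le_self
  rw [hνr.integral_eq hg]
  exact hu.setIntegral_le_integral_max hν hex hr hg hg0

lemma restrict_lt_add_restrict_ge (hν : IsRieszMeasure u Ω ν) (r : ℝ) :
    ν.restrict {z | z ∈ Ω ∧ u z < r} + ν.restrict {z | z ∈ Ω ∧ r ≤ u z} = ν := by
  have hdisj : Disjoint {z | z ∈ Ω ∧ u z < r} {z | z ∈ Ω ∧ r ≤ u z} :=
    disjoint_left.2 fun z hz hz' => hz.2.not_ge hz'.2
  rw [← Measure.restrict_union hdisj (hu.measurableSet_ge r)]
  refine Measure.restrict_eq_self_of_ae_mem ?_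
  filter_upwards [show ∀ᵐ z ∂ν, z ∈ Ω from hν.1] with z hz
  exact (lt_or_ge (u z) r).imp (⟨hz, ·⟩) (⟨hz, ·⟩)

lemma isLevelMeasure [IsFiniteMeasure ν] (hν : IsRieszMeasure u Ω ν)
    (hμ : ∀ r : ℝ, r < 0 → IsMAMeasure u Ω ν r (μfam r)) (hr : r < 0) :
    IsLevelMeasure u Ω ν r (μfam r) := by
  obtain ⟨νr, hνr, hμr⟩ := hμ r hr
  have hfin := hu.isFiniteMeasure_of_isRieszMeasure_max hν hr hνr
  have hadd : μfam r + ν.restrict {z | z ∈ Ω ∧ r ≤ u z} = νr := by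
    rw [hμr]
    exact Measure.sub_add_cancel_of_le (hu.restrict_le_of_isRieszMeasure_max hν
      (fun t ht => (hμ t ht).imp fun M hM => hM.1) hr hνr)
  have hle : μfam r ≤ νr := hadd ▸ Measure.le_add_right le_rfl
  have hout : μfam r Ωᶜ = 0 := le_antisymm ((hle _).trans hνr.1.le) zero_le
  have hlt : μfam r {z | z ∈ Ω ∧ u z < r} = 0 := by
    have hzero := hνr.restrict_eq_restrict (isRieszMeasure_const Ω r) (hu.isOpen_lt r)
      (fun z hz => hz.1) fun z hz => max_eq_right hz.2.le
    rw [Measure.restrict_zero, Measure.restrict_eq_zero] at hzero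
    exact le_antisymm ((hle _).trans hzero.le) zero_le
  have hgt : μfam r {z | z ∈ Ω ∧ r < u z} = 0 := by
    have heq := congrArg (fun m => m univ) (hνr.restrict_eq_restrict hν (hu.isOpen_gt r)
      (fun z hz => hz.1) fun z hz => max_eq_left hz.2.le)
    simp only [Measure.restrict_apply_univ, ← hadd, Measure.add_apply] at heq
    have hsub : {z | z ∈ Ω ∧ r < u z} ⊆ {z | z ∈ Ω ∧ r ≤ u z} := fun z hz => ⟨hz.1, hz.2.le⟩
    rw [Measure.restrict_apply (hu.isOpen_gt r).measurableSet, inter_eq_left.2 hsub] at heq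
    simpa [measure_ne_top] using heq
  refine ⟨isFiniteMeasure_of_le νr hle, measure_mono_null (fun z hz => ?_)
    (measure_union_null hout (measure_union_null hlt hgt)), hadd ▸ hνr⟩
  by_cases hzΩ : z ∈ Ω
  · exact Or.inr ((lt_or_gt_of_ne fun h => hz ⟨hzΩ, h⟩).imp (⟨hzΩ, ·⟩) (⟨hzΩ, ·⟩))
  · exact Or.inl hzΩ

lemma integral_le_integral_of_lap_nonneg (hν : IsRieszMeasure u Ω ν)
    (hνr : IsRieszMeasure (fun z => max (u z) r) Ω νr) (hg : IsTestFunction Ω g)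
    (hlap : ∀ z ∈ Ω, u z ≤ r → 0 ≤ lap g z) : ∫ z, g z ∂ν ≤ ∫ z, g z ∂νr := by
  rw [hν.integral_eq hg, hνr.integral_eq hg]
  refine mul_le_mul_of_nonneg_left (integral_mono (hg.integrable_mul_lap hu.isOpen hu.continuousOn)
    (hg.integrable_mul_lap hu.isOpen (hu.continuousOn.sup continuousOn_const)) fun z => ?_)
    (by norm_num)
  rcases le_or_gt (u z) r with hzr | hzr
  · by_cases hz : z ∈ tsupport g
    · exact mul_le_mul_of_nonneg_right (le_max_left _ _) (hlap z (hg.3 hz) hzr)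
    · simp [lap_eq_zero_of_notMem_tsupport hz]
  · exact (congrArg (· * lap g z) (max_eq_left hzr.le)).ge

lemma integral_le_integral_of_locallySubmean [IsFiniteMeasure ν] [IsFiniteMeasure νr]
    (hν : IsRieszMeasure u Ω ν) (hr : r < 0) (hνr : IsRieszMeasure (fun z => max (u z) r) Ω νr)
    (hW : Continuous W) (hWs : HasCompactSupport W) (hWΩ : tsupport W ⊆ Ω) (hU : IsOpen U)
    (hrU : ∀ z ∈ Ω, u z ≤ r → z ∈ U) (hWU : LocallySubmean W U) :
    ∫ z, W z ∂ν ≤ ∫ z, W z ∂νr := by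
  have happrox : ∀ ε > 0, ∫ z, W z ∂ν ≤ ∫ z, W z ∂νr + ε * (νr.real univ + ν.real univ) := by
    intro ε hε
    obtain ⟨g, hg, hgW, hlap⟩ := exists_isTestFunction_lap_nonneg hu.isOpen hW hWs hWΩ hU hWU
      (hu.isCompact_le hr) (fun z hz => hrU z hz.1 hz.2) hε
    have hdist (m : Measure ℂ) [IsFiniteMeasure m] :
        |(∫ z, g z ∂m) - ∫ z, W z ∂m| ≤ ε * m.real univ := by
      rw [← integral_sub hg.integrable (hW.integrable_of_hasCompactSupport hWs),
          ← Real.norm_eq_abs]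
      exact norm_integral_le_of_norm_le_const (.of_forall hgW)
    have hle := hu.integral_le_integral_of_lap_nonneg hν hνr hg fun z hz hzr => hlap z ⟨hz, hzr⟩
    linarith [(abs_le.1 (hdist ν)).1, (abs_le.1 (hdist νr)).2]
  have hcont : Continuous fun ε : ℝ => ∫ z, W z ∂νr + ε * (νr.real univ + ν.real univ) := by
    fun_prop
  have hlim := hcont.continuousWithinAt (s := Ioi 0) (x := 0)
  simp only [ContinuousWithinAt, zero_mul, add_zero] at hlim
  exact ge_of_tendsto hlim (eventually_mem_nhdsWithin.mono happrox)

lemma setIntegral_le_integral_of_locallySubmean [IsFiniteMeasure ν] (hν : IsRieszMeasure u Ω ν)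
    (hr : r < 0) (hμ : IsLevelMeasure u Ω ν r μ) (hw : ContinuousOn w Ω)
    (hsub : LocallySubmean w Ω) :
    ∫ z in {z | z ∈ Ω ∧ u z < r}, w z ∂ν ≤ ∫ z, w z ∂μ := by
  have := hμ.isFiniteMeasure
  obtain ⟨χ, hχ, hone, -⟩ := exists_isTestFunction_eq_one (hu.isCompact_le hr) hu.isOpen
    fun z hz => hz.1
  obtain ⟨O, hO, hrO, hO1⟩ := mem_nhdsSet_iff_exists.1 hone
  set W : ℂ → ℝ := fun z => w z * χ z
  have hW : Continuous W := continuous_mul_of_tsupport_subset hu.isOpen hχ.1.continuous hχ.3 hw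
  have hWs : HasCompactSupport W := hχ.2.mul_left
  have hint (m : Measure ℂ) [IsFiniteMeasure m] : Integrable W m :=
    hW.integrable_of_hasCompactSupport hWs
  have hwW : EqOn w W (O ∩ Ω) := fun z hz => by simp [W, show χ z = 1 from hO1 hz.1]
  have hle := hu.integral_le_integral_of_locallySubmean hν hr hμ.isRieszMeasure hW hWs
    (tsupport_mul_subset_right.trans hχ.3) (hO.inter hu.isOpen)
    (fun z hz hzr => ⟨hrO ⟨hz, hzr⟩, hz⟩)
    ((hsub.mono inter_subset_right).congr (hO.inter hu.isOpen) hwW)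
  conv_lhs at hle => rw [← hu.restrict_lt_add_restrict_ge hν r]
  rw [integral_add_measure (hint _) (hint _), integral_add_measure (hint _) (hint _),
    add_le_add_iff_right] at hle
  convert hle using 1
  · exact setIntegral_congr_fun (hu.isOpen_lt r).measurableSet
      fun z hz => hwW ⟨hrO ⟨hz.1, hz.2.le⟩, hz.1⟩
  · exact integral_congr_ae
      (hμ.ae_mem.mono fun z hz => hwW ⟨hrO ⟨hz.1, hz.2.le⟩, hz.1⟩)

lemma setIntegral_eq_integral_of_harmonicOnNhd [IsFiniteMeasure ν] (hν : IsRieszMeasure u Ω ν)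
    (hr : r < 0) (hμ : IsLevelMeasure u Ω ν r μ) (hw : HarmonicOnNhd w Ω) :
    ∫ z in {z | z ∈ Ω ∧ u z < r}, w z ∂ν = ∫ z, w z ∂μ := by
  have hwc : ContinuousOn w Ω := fun z hz => (hw z hz).1.continuousAt.continuousWithinAt
  have hneg := hu.setIntegral_le_integral_of_locallySubmean hν hr hμ hwc.neg
    (.of_harmonicOnNhd hw.neg)
  simp only [Pi.neg_apply, integral_neg, neg_le_neg_iff] at hneg
  exact le_antisymm (hu.setIntegral_le_integral_of_locallySubmean hν hr hμ hwc
    (.of_harmonicOnNhd hw)) hneg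

lemma tendsto_setIntegral_lt (hν : IsRieszMeasure u Ω ν) (hw : Integrable w ν) :
    Tendsto (fun r => ∫ z in {z | z ∈ Ω ∧ u z < r}, w z ∂ν) (𝓝[<] 0) (𝓝 (∫ z, w z ∂ν)) := by
  simp only [← fun r => integral_indicator (f := w) (μ := ν) (hu.isOpen_lt r).measurableSet]
  refine tendsto_integral_filter_of_dominated_convergence (fun z => ‖w z‖)
    (.of_forall fun r => hw.aestronglyMeasurable.indicator (hu.isOpen_lt r).measurableSet)
    (.of_forall fun r => .of_forall fun z => norm_indicator_le_norm_self _ _) hw.norm ?_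
  filter_upwards [show ∀ᵐ z ∂ν, z ∈ Ω from hν.1] with z hz
  refine tendsto_const_nhds.congr' ?_
  filter_upwards [Ioo_mem_nhdsLT (hu.neg z hz)] with r hr
  exact (indicator_of_mem (s := {z | z ∈ Ω ∧ u z < r}) ⟨hz, hr.1⟩ w).symm

end IsContinuousExhaustion

end MongeAmpere

section Univalent

lemma exists_analyticAt_pow_eq {g : ℂ → ℂ} {z₀ : ℂ} (hg : AnalyticAt ℂ g z₀) (hg₀ : g z₀ ≠ 0)
    {n : ℕ} (hn : n ≠ 0) :
    ∃ k : ℂ → ℂ, AnalyticAt ℂ k z₀ ∧ k z₀ ≠ 0 ∧ ∀ᶠ z in 𝓝 z₀, k z ^ n = g z := by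
  have hn' : (n : ℂ) ≠ 0 := Nat.cast_ne_zero.2 hn
  obtain ⟨c, hc⟩ := IsAlgClosed.exists_pow_nat_eq (g z₀) (Nat.pos_of_ne_zero hn)
  have hc₀ : c ≠ 0 := fun h => hg₀ (by rw [← hc, h, zero_pow hn])
  refine ⟨fun z => c * exp (log (g z / g z₀) / n), ?_, mul_ne_zero hc₀ (exp_ne_zero _), ?_⟩
  · refine analyticAt_const.mul (AnalyticAt.cexp (AnalyticAt.div ?_ analyticAt_const hn'))
    exact (hg.div analyticAt_const hg₀).clog (by simp [div_self hg₀])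
  · filter_upwards [hg.continuousAt.eventually_ne hg₀] with z hz
    rw [mul_pow, hc, ← exp_nat_mul, mul_div_cancel₀ _ hn', exp_log (div_ne_zero hz hg₀),
      mul_div_cancel₀ _ hg₀]

lemma exists_eventually_sub_eq_pow {f : ℂ → ℂ} {z₀ : ℂ} (hf : AnalyticAt ℂ f z₀)
    (hne : ¬ ∀ᶠ z in 𝓝 z₀, f z = f z₀) :
    ∃ (n : ℕ) (h : ℂ → ℂ), n ≠ 0 ∧ AnalyticAt ℂ h z₀ ∧ h z₀ = 0 ∧ deriv h z₀ ≠ 0 ∧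
      ∀ᶠ z in 𝓝 z₀, f z - f z₀ = h z ^ n := by
  obtain ⟨n, g, hg, hg₀, hfg⟩ :=
    ((hf.sub analyticAt_const).exists_eventuallyEq_pow_smul_nonzero_iff
      (f := fun z => f z - f z₀)).2 (by simpa only [sub_eq_zero] using hne)
  have hn : n ≠ 0 := by
    rintro rfl
    exact hg₀ (by simpa using hfg.self_of_nhds.symm)
  obtain ⟨k, hk, hk₀, hkn⟩ := exists_analyticAt_pow_eq hg hg₀ hn
  have hderiv : HasDerivAt (fun z => (z - z₀) * k z) (k z₀) z₀ :=
    (((hasDerivAt_id z₀).sub_const z₀).mul hk.differentiableAt.hasDerivAt).congr_deriv (by simp)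
  refine ⟨n, fun z => (z - z₀) * k z, hn, (analyticAt_id.sub analyticAt_const).mul hk, by simp,
    by rwa [hderiv.deriv], ?_⟩
  filter_upwards [hfg, hkn] with z hz hkz
  rw [hz, mul_pow, hkz, smul_eq_mul]

lemma deriv_ne_zero_of_injOn {f : ℂ → ℂ} {z₀ : ℂ} {U : Set ℂ} (hf : AnalyticAt ℂ f z₀)
    (hU : U ∈ 𝓝 z₀) (hinj : InjOn f U) : deriv f z₀ ≠ 0 := by
  have hne : ¬ ∀ᶠ z in 𝓝 z₀, f z = f z₀ := fun hconst => by
    obtain ⟨z, ⟨hz, hzU⟩, hzne⟩ :=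
      (((hconst.and hU).filter_mono nhdsWithin_le_nhds).and
        (self_mem_nhdsWithin (s := {z₀}ᶜ))).exists
    exact hzne (hinj hzU (mem_of_mem_nhds hU) hz)
  obtain ⟨n, h, hn, hh, hh₀, hh', hfh⟩ := exists_eventually_sub_eq_pow hf hne
  have hopen : map h (𝓝 z₀) = 𝓝 0 := by
    rw [hh.hasStrictDerivAt.map_nhds_eq hh', hh₀]
  rcases Nat.lt_or_ge 1 n with hn₁ | hn₁
  · -- `x` and `ω x` have the same `n`-th power but distinct preimages under `h`
    exfalso
    have hω := isPrimitiveRoot_exp n hn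
    set ω := exp (2 * π * I / n)
    set V := U ∩ {z | f z - f z₀ = h z ^ n}
    have himage : h '' V ∈ 𝓝 (0 : ℂ) :=
      hopen ▸ image_mem_map (inter_mem hU hfh)
    have hrot : Tendsto (ω * ·) (𝓝 0) (𝓝 (0 : ℂ)) :=
      (continuous_const_mul ω).tendsto' 0 0 (mul_zero ω)
    have himage' : ∀ᶠ x in 𝓝 (0 : ℂ), x ∈ h '' V ∧
        ω * x ∈ h '' V := inter_mem himage (hrot himage)
    obtain ⟨x, ⟨⟨a, ⟨haU, ha⟩, hax⟩, b, ⟨hbU, hb⟩, hbx⟩, hx⟩ :=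
      ((himage'.filter_mono nhdsWithin_le_nhds).and (self_mem_nhdsWithin (s := {(0 : ℂ)}ᶜ))).exists
    have hpow : h b ^ n = h a ^ n := by
      simp only [hbx, hax, mul_pow, hω.pow_eq_one, one_mul]
    have hab : a = b := hinj haU hbU (sub_left_injective (ha.trans (hpow.symm.trans hb.symm)))
    refine hω.ne_one hn₁ (mul_right_cancel₀ hx ?_)
    rw [one_mul, ← hbx, ← hab, hax]
  · obtain rfl : n = 1 := by omega
    have hfh' : (fun z => h z + f z₀) =ᶠ[𝓝 z₀] f := by
      filter_upwards [hfh] with z hz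
      rw [← pow_one (h z), ← hz, sub_add_cancel]
    rwa [← hfh'.deriv_eq, deriv_add_const]

lemma eventually_mul_dist_le_dist {f : ℂ → ℂ} {f' x : ℂ} (hf : HasStrictDerivAt f f' x)
    (hf' : f' ≠ 0) : ∀ᶠ q : ℂ × ℂ in 𝓝 (x, x), ‖f'‖ / 2 * dist q.1 q.2 ≤ dist (f q.1) (f q.2) := by
  filter_upwards [hf.hasStrictFDerivAt.isLittleO.def (half_pos (norm_pos_iff.2 hf'))] with q hq
  simp only [ContinuousLinearMap.toSpanSingleton_apply, smul_eq_mul] at hq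
  have htri := norm_sub_norm_le ((q.1 - q.2) * f') (f q.1 - f q.2)
  rw [norm_sub_rev (_ * _), norm_mul] at htri
  rw [dist_eq_norm, dist_eq_norm]
  linarith

lemma exists_eventually_mul_dist_le_dist {f : ℂ → ℂ} {x y : ℂ} (hx : ContinuousAt f x)
    (hy : ContinuousAt f y) (hxy : x ≠ y) (hfxy : f x ≠ f y) :
    ∃ c > 0, ∀ᶠ q : ℂ × ℂ in 𝓝 (x, y), c * dist q.1 q.2 ≤ dist (f q.1) (f q.2) := by
  have hdist : 0 < dist x y := dist_pos.2 hxy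
  have hfdist : 0 < dist (f x) (f y) := dist_pos.2 hfxy
  refine ⟨dist (f x) (f y) / (2 * dist x y), by positivity, ?_⟩
  have hcont : ContinuousAt (fun q : ℂ × ℂ =>
      dist (f x) (f y) / (2 * dist x y) * dist q.1 q.2 - dist (f q.1) (f q.2)) (x, y) :=
    (continuousAt_const.mul (continuousAt_fst.dist continuousAt_snd)).sub
      ((hx.comp' continuousAt_fst).dist (hy.comp' continuousAt_snd))
  refine (hcont.eventually_lt continuousAt_const (g := fun _ => 0) ?_).mono
    fun q hq => (sub_neg.1 hq).le
  field_simp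
  linarith

lemma exists_mul_dist_le_dist_of_injOn {f f' : ℂ → ℂ} {K : Set ℂ} (hK : IsCompact K)
    (hinj : InjOn f K) (hf : ∀ x ∈ K, HasStrictDerivAt f (f' x) x) (hf' : ∀ x ∈ K, f' x ≠ 0) :
    ∃ c > 0, ∀ a ∈ K, ∀ b ∈ K, c * dist a b ≤ dist (f a) (f b) := by
  suffices ∃ c > 0, ∀ q ∈ K ×ˢ K, c * dist q.1 q.2 ≤ dist (f q.1) (f q.2) by
    obtain ⟨c, hc, h⟩ := this
    exact ⟨c, hc, fun a ha b hb => h (a, b) ⟨ha, hb⟩⟩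
  refine (hK.prod hK).induction_on (p := fun s => ∃ c > 0, ∀ q ∈ s,
    c * dist q.1 q.2 ≤ dist (f q.1) (f q.2)) ⟨1, one_pos, by simp⟩ ?_ ?_ ?_
  · rintro s t hst ⟨c, hc, h⟩
    exact ⟨c, hc, fun q hq => h q (hst hq)⟩
  · rintro s t ⟨c, hc, hs⟩ ⟨d, hd, ht⟩
    refine ⟨min c d, lt_min hc hd, ?_⟩
    rintro q (hq | hq)
    · exact (mul_le_mul_of_nonneg_right (min_le_left c d) dist_nonneg).trans (hs q hq)
    · exact (mul_le_mul_of_nonneg_right (min_le_right c d) dist_nonneg).trans (ht q hq)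
  · rintro ⟨x, y⟩ ⟨hx, hy⟩
    have hlocal : ∃ c > 0, ∀ᶠ q in 𝓝 (x, y), c * dist q.1 q.2 ≤ dist (f q.1) (f q.2) := by
      rcases eq_or_ne x y with rfl | hxy
      · exact ⟨_, half_pos (norm_pos_iff.2 (hf' x hx)),
          eventually_mul_dist_le_dist (hf x hx) (hf' x hx)⟩
      · exact exists_eventually_mul_dist_le_dist (hf x hx).hasDerivAt.continuousAt
          (hf y hy).hasDerivAt.continuousAt hxy fun h => hxy (hinj hx hy h)
    obtain ⟨c, hc, h⟩ := hlocal
    exact ⟨_, nhdsWithin_le_nhds h, c, hc, fun q hq => hq⟩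

end Univalent

section ConformalParametrization

/-- A conformal map `ψ` of the open unit disc onto `Ω`, extending conformally to the
neighbourhood `U` of the closed disc and mapping the unit circle onto `∂Ω`; this is how
`AnalyticJordanDomain` encodes an analytic Jordan boundary. -/
structure IsConformalParametrization (Ω U : Set ℂ) (ψ : ℂ → ℂ) : Prop where
  isOpen_nhd : IsOpen U
  closedBall_subset : closedBall (0 : ℂ) 1 ⊆ U
  differentiableOn_nhd : DifferentiableOn ℂ ψ U
  injOn : InjOn ψ U
  image_ball : ψ '' ball (0 : ℂ) 1 = Ω
  image_sphere : ψ '' sphere (0 : ℂ) 1 = frontier Ω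

lemma AnalyticJordanDomain.exists_isConformalParametrization {Ω : Set ℂ}
    (hΩ : AnalyticJordanDomain Ω) : ∃ U ψ, IsConformalParametrization Ω U ψ := by
  obtain ⟨U, ψ, hU, hsub, hψd, hψi, hball, hsphere⟩ := hΩ.analyticBoundary
  exact ⟨U, ψ, hU, hsub, hψd, hψi, hball, hsphere⟩

/-- The inverse of a conformal parametrization `ψ` of `Ω`, meaningful on the closure of `Ω`. -/
def discCoord (ψ : ℂ → ℂ) : ℂ → ℂ := Function.invFunOn ψ (closedBall 0 1)

namespace IsConformalParametrization

variable {Ω U : Set ℂ} {ψ : ℂ → ℂ}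

lemma hasStrictDerivAt (hψ : IsConformalParametrization Ω U ψ) {a : ℂ} (ha : a ∈ U) :
    HasStrictDerivAt ψ (deriv ψ a) a :=
  (hψ.differentiableOn_nhd.analyticAt (hψ.isOpen_nhd.mem_nhds ha)).hasStrictDerivAt

lemma deriv_ne_zero (hψ : IsConformalParametrization Ω U ψ) {a : ℂ} (ha : a ∈ U) :
    deriv ψ a ≠ 0 :=
  have hU := hψ.isOpen_nhd.mem_nhds ha
  deriv_ne_zero_of_injOn (hψ.differentiableOn_nhd.analyticAt hU) hU hψ.injOn

lemma continuousOn (hψ : IsConformalParametrization Ω U ψ) : ContinuousOn ψ (closedBall 0 1) :=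
  hψ.differentiableOn_nhd.continuousOn.mono hψ.closedBall_subset

lemma exists_dist_le_mul (hψ : IsConformalParametrization Ω U ψ) :
    ∃ C, ∀ a ∈ closedBall (0 : ℂ) 1, ∀ b ∈ closedBall (0 : ℂ) 1,
      dist (ψ a) (ψ b) ≤ C * dist a b := by
  have hderiv : ContinuousOn (deriv ψ) (closedBall (0 : ℂ) 1) :=
    (hψ.differentiableOn_nhd.deriv hψ.isOpen_nhd).continuousOn.mono hψ.closedBall_subset
  obtain ⟨C, hC⟩ := (isCompact_closedBall (0 : ℂ) 1).exists_bound_of_continuousOn hderiv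
  refine ⟨C, fun a ha b hb => ?_⟩
  rw [dist_eq_norm, dist_eq_norm]
  exact (convex_closedBall (0 : ℂ) 1).norm_image_sub_le_of_norm_deriv_le
    (fun x hx => (hψ.hasStrictDerivAt (hψ.closedBall_subset hx)).hasDerivAt.differentiableAt)
    hC hb ha

lemma exists_mul_dist_le (hψ : IsConformalParametrization Ω U ψ) :
    ∃ c > 0, ∀ a ∈ closedBall (0 : ℂ) 1, ∀ b ∈ closedBall (0 : ℂ) 1,
      c * dist a b ≤ dist (ψ a) (ψ b) :=
  exists_mul_dist_le_dist_of_injOn (isCompact_closedBall 0 1)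
    (hψ.injOn.mono hψ.closedBall_subset)
    (fun _ ha => hψ.hasStrictDerivAt (hψ.closedBall_subset ha))
    fun _ ha => hψ.deriv_ne_zero (hψ.closedBall_subset ha)

lemma isOpen (hψ : IsConformalParametrization Ω U ψ) : IsOpen Ω := by
  rw [← hψ.image_ball, isOpen_iff_mem_nhds]
  rintro _ ⟨a, ha, rfl⟩
  have haU := hψ.closedBall_subset (ball_subset_closedBall ha)
  rw [← (hψ.hasStrictDerivAt haU).map_nhds_eq (hψ.deriv_ne_zero haU)]
  exact image_mem_map (isOpen_ball.mem_nhds ha)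

lemma closure_eq (hψ : IsConformalParametrization Ω U ψ) : closure Ω = ψ '' closedBall 0 1 := by
  rw [closure_eq_interior_union_frontier, hψ.isOpen.interior_eq, ← hψ.image_sphere,
    ← ball_union_sphere, image_union, hψ.image_ball]

lemma isCompact_closure (hψ : IsConformalParametrization Ω U ψ) : IsCompact (closure Ω) :=
  hψ.closure_eq ▸ (isCompact_closedBall 0 1).image_of_continuousOn hψ.continuousOn

lemma apply_mem (hψ : IsConformalParametrization Ω U ψ) {a : ℂ} (ha : a ∈ ball (0 : ℂ) 1) :
    ψ a ∈ Ω :=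
  hψ.image_ball ▸ mem_image_of_mem ψ ha

lemma apply_mem_frontier (hψ : IsConformalParametrization Ω U ψ) {a : ℂ}
    (ha : a ∈ sphere (0 : ℂ) 1) : ψ a ∈ frontier Ω :=
  hψ.image_sphere ▸ mem_image_of_mem ψ ha

lemma discCoord_apply (hψ : IsConformalParametrization Ω U ψ) {a : ℂ}
    (ha : a ∈ closedBall (0 : ℂ) 1) : discCoord ψ (ψ a) = a :=
  (hψ.injOn.mono hψ.closedBall_subset).leftInvOn_invFunOn ha

lemma apply_discCoord (hψ : IsConformalParametrization Ω U ψ) {z : ℂ} (hz : z ∈ closure Ω) :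
    ψ (discCoord ψ z) = z :=
  Function.invFunOn_eq (by rwa [hψ.closure_eq] at hz)

lemma discCoord_mem_closedBall (hψ : IsConformalParametrization Ω U ψ) {z : ℂ}
    (hz : z ∈ closure Ω) : discCoord ψ z ∈ closedBall (0 : ℂ) 1 :=
  Function.invFunOn_mem (by rwa [hψ.closure_eq] at hz)

lemma discCoord_mem_ball (hψ : IsConformalParametrization Ω U ψ) {z : ℂ} (hz : z ∈ Ω) :
    discCoord ψ z ∈ ball (0 : ℂ) 1 := by
  obtain ⟨a, ha, rfl⟩ := hψ.image_ball.symm ▸ hz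
  rwa [hψ.discCoord_apply (ball_subset_closedBall ha)]

lemma discCoord_mem_sphere (hψ : IsConformalParametrization Ω U ψ) {z : ℂ}
    (hz : z ∈ frontier Ω) : discCoord ψ z ∈ sphere (0 : ℂ) 1 := by
  obtain ⟨a, ha, rfl⟩ := hψ.image_sphere.symm ▸ hz
  rwa [hψ.discCoord_apply (sphere_subset_closedBall ha)]

lemma continuousOn_discCoord (hψ : IsConformalParametrization Ω U ψ) :
    ContinuousOn (discCoord ψ) (closure Ω) := by
  obtain ⟨c, hc, hle⟩ := hψ.exists_mul_dist_le
  refine LipschitzOnWith.continuousOn (K := Real.toNNReal c⁻¹)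
    (LipschitzOnWith.of_dist_le_mul fun z hz w hw => ?_)
  have hzw := hle _ (hψ.discCoord_mem_closedBall hz) _ (hψ.discCoord_mem_closedBall hw)
  rw [hψ.apply_discCoord hz, hψ.apply_discCoord hw] at hzw
  rwa [Real.coe_toNNReal _ (inv_nonneg.2 hc.le), inv_mul_eq_div, le_div_iff₀' hc]

lemma differentiableOn_discCoord (hψ : IsConformalParametrization Ω U ψ) :
    DifferentiableOn ℂ (discCoord ψ) Ω := by
  intro z hz
  have haU := hψ.closedBall_subset (ball_subset_closedBall (hψ.discCoord_mem_ball hz))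
  refine (HasDerivAt.of_local_left_inverse
    ((hψ.continuousOn_discCoord.mono subset_closure).continuousAt (hψ.isOpen.mem_nhds hz))
    (hψ.hasStrictDerivAt haU).hasDerivAt (hψ.deriv_ne_zero haU) ?_).differentiableAt
    |>.differentiableWithinAt
  filter_upwards [hψ.isOpen.mem_nhds hz] with w hw using hψ.apply_discCoord (subset_closure hw)

lemma exists_mul_one_sub_le_infDist (hψ : IsConformalParametrization Ω U ψ) :
    ∃ c > 0, ∀ a ∈ ball (0 : ℂ) 1, c * (1 - ‖a‖) ≤ infDist (ψ a) (frontier Ω) := by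
  obtain ⟨c, hc, hle⟩ := hψ.exists_mul_dist_le
  refine ⟨c, hc, fun a ha => ?_⟩
  have hne : (frontier Ω).Nonempty :=
    hψ.image_sphere ▸ (NormedSpace.sphere_nonempty.2 zero_le_one).image ψ
  refine (le_infDist hne).2 fun ξ hξ => ?_
  obtain ⟨ζ, hζ, rfl⟩ := hψ.image_sphere.symm ▸ hξ
  refine le_trans ?_ (hle a (ball_subset_closedBall ha) ζ (sphere_subset_closedBall hζ))
  rw [dist_comm, dist_eq_norm, ← mem_sphere_zero_iff_norm.1 hζ]
  exact mul_le_mul_of_nonneg_left (norm_sub_norm_le ζ a) hc.le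

lemma tendsto_radial (hψ : IsConformalParametrization Ω U ψ) {f : ℂ → ℂ} {ζ L : ℂ}
    (hζ : ζ ∈ sphere (0 : ℂ) 1) (hL : NTLim Ω f (ψ ζ) L) :
    Tendsto (fun s : ℝ => f (ψ (s * ζ))) (𝓝[<] 1) (𝓝 L) := by
  obtain ⟨c, hc, hlower⟩ := hψ.exists_mul_one_sub_le_infDist
  obtain ⟨C, hupper⟩ := hψ.exists_dist_le_mul
  have hζ' : ‖ζ‖ = 1 := mem_sphere_zero_iff_norm.1 hζ
  refine (hL (max (C / c) 2) (lt_max_of_lt_right one_lt_two)).comp ?_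
  refine tendsto_nhdsWithin_iff.2 ⟨?_, ?_⟩
  · have hζU := hψ.closedBall_subset (sphere_subset_closedBall hζ)
    refine (hψ.hasStrictDerivAt hζU).hasDerivAt.continuousAt.tendsto.comp
      (tendsto_nhdsWithin_of_tendsto_nhds ?_)
    exact (by fun_prop : Continuous fun s : ℝ => (s * ζ : ℂ)).tendsto' 1 ζ (by simp)
  · filter_upwards [Ioo_mem_nhdsLT (zero_lt_one' ℝ)] with s hs
    have hnorm : ‖(s * ζ : ℂ)‖ = s := by
      rw [norm_mul, hζ', mul_one, norm_real, Real.norm_of_nonneg hs.1.le]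
    have hmem : (s * ζ : ℂ) ∈ ball (0 : ℂ) 1 := by rw [mem_ball_zero_iff, hnorm]; exact hs.2
    have hdist : dist (s * ζ : ℂ) ζ = 1 - s := by
      rw [dist_comm, dist_eq_norm, show ζ - s * ζ = ((1 - s : ℝ) : ℂ) * ζ by push_cast; ring,
        norm_mul, hζ', mul_one, norm_real, Real.norm_of_nonneg (sub_nonneg.2 hs.2.le)]
    refine ⟨hψ.apply_mem hmem, ?_⟩
    calc dist (ψ (s * ζ)) (ψ ζ) ≤ C * (1 - s) := hdist ▸ hupper _ (ball_subset_closedBall hmem) _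
          (sphere_subset_closedBall hζ)
      _ = C / c * (c * (1 - s)) := by field_simp
      _ ≤ max (C / c) 2 * (c * (1 - s)) :=
        mul_le_mul_of_nonneg_right (le_max_left _ _) (mul_nonneg hc.le (sub_nonneg.2 hs.2.le))
      _ ≤ max (C / c) 2 * infDist (ψ (s * ζ)) (frontier Ω) :=
        mul_le_mul_of_nonneg_left (by simpa only [hnorm] using hlower _ hmem)
          (zero_le_two.trans (le_max_right _ _))

end IsConformalParametrization

lemma dist_circleMap_eq (a b : ℝ) :
    dist (circleMap 0 1 a) (circleMap 0 1 b) = 2 * |Real.sin ((a - b) / 2)| := by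
  have hfactor : circleMap 0 1 a - circleMap 0 1 b =
      (exp (I * ((a - b : ℝ) : ℂ)) - 1) * circleMap 0 1 b := by
    simp only [circleMap, zero_add, ofReal_one, one_mul, sub_mul, ← Complex.exp_add]
    congr 2
    push_cast
    ring
  rw [dist_eq_norm, hfactor, norm_mul, norm_exp_I_mul_ofReal_sub_one, norm_circleMap_zero]
  simp

lemma two_div_pi_mul_dist_le_dist_circleMap {a b : ℝ} (hab : |a - b| ≤ π) :
    2 / π * dist a b ≤ dist (circleMap 0 1 a) (circleMap 0 1 b) := by
  have hjordan : 2 / π * |(a - b) / 2| ≤ |Real.sin ((a - b) / 2)| :=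
    Real.mul_abs_le_abs_sin (by rw [abs_div, abs_two]; linarith)
  rw [abs_div, abs_two] at hjordan
  rw [dist_circleMap_eq, Real.dist_eq]
  linarith

lemma volume_eq_zero_of_image_null {X : Type*} [MetricSpace X] [MeasurableSpace X] [BorelSpace X]
    {γ : ℝ → X} {A : Set ℝ} {c : ℝ} (hc : 0 < c)
    (hγ : ∀ a ∈ A, ∀ b ∈ A, c * dist a b ≤ dist (γ a) (γ b)) (hA : μH[1] (γ '' A) = 0) :
    volume A = 0 := by
  have hanti : AntilipschitzWith (Real.toNNReal c⁻¹) (fun a : A => γ a) :=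
    AntilipschitzWith.of_le_mul_dist fun a b => by
      rw [Real.coe_toNNReal _ (inv_nonneg.2 hc.le), inv_mul_eq_div, le_div_iff₀' hc]
      exact hγ a a.2 b b.2
  have hle := hanti.le_hausdorffMeasure_image zero_le_one (univ : Set A)
  rw [image_univ, ← image_eq_range, hA, mul_zero, nonpos_iff_eq_zero] at hle
  rwa [← isometry_subtype_coe.hausdorffMeasure_image (.inl zero_le_one), image_univ,
    Subtype.range_coe, hausdorffMeasure_real] at hle

lemma IsConformalParametrization.ae_circleMap {Ω U : Set ℂ} {ψ : ℂ → ℂ}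
    (hψ : IsConformalParametrization Ω U ψ) {P : ℂ → Prop} (hP : ∀ᵐ ξ ∂(arcLen Ω), P ξ) :
    ∀ᵐ θ ∂(volume.restrict (Ioc 0 (2 * π))), P (ψ (circleMap 0 1 θ)) := by
  obtain ⟨c, hc, hle⟩ := hψ.exists_mul_dist_le
  have hnull : (μH[1] : Measure ℂ) ({ξ | ¬ P ξ} ∩ frontier Ω) = 0 := by
    rwa [arcLen, ae_iff, Measure.restrict_apply₀' isClosed_frontier.measurableSet.nullMeasurableSet]
      at hP
  have hcircle (θ : ℝ) : circleMap 0 1 θ ∈ sphere (0 : ℂ) 1 := circleMap_mem_sphere 0 zero_le_one θ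
  have harc {x y : ℝ} (hxy : y - x ≤ π) :
      volume ({θ | ¬ P (ψ (circleMap 0 1 θ))} ∩ Ioc x y) = 0 := by
    refine volume_eq_zero_of_image_null (γ := fun θ => ψ (circleMap 0 1 θ)) (c := c * (2 / π))
      (by positivity) ?_ (measure_mono_null ?_ hnull)
    · rintro a ⟨-, ha⟩ b ⟨-, hb⟩
      have hab : |a - b| ≤ π := abs_le.2 ⟨by linarith [ha.1, hb.2], by linarith [ha.2, hb.1]⟩
      rw [mul_assoc]
      exact (mul_le_mul_of_nonneg_left (two_div_pi_mul_dist_le_dist_circleMap hab) hc.le).trans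
        (hle _ (sphere_subset_closedBall (hcircle a)) _ (sphere_subset_closedBall (hcircle b)))
    · rintro _ ⟨θ, hθ, rfl⟩
      exact ⟨hθ.1, hψ.apply_mem_frontier (hcircle θ)⟩
  rw [ae_iff, Measure.restrict_apply₀' measurableSet_Ioc.nullMeasurableSet,
    ← Ioc_union_Ioc_eq_Ioc Real.pi_pos.le (by linarith [Real.pi_pos] : π ≤ 2 * π),
    inter_union_distrib_left]
  exact measure_union_null (harc (by linarith)) (harc (by linarith))

end ConformalParametrization

section PoissonLIntegral

/-- The normalized angular measure `dθ / 2π` on `(0, 2π]`. -/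
def angleMeasure : Measure ℝ := ENNReal.ofReal (2 * π)⁻¹ • volume.restrict (Ioc 0 (2 * π))

instance : IsProbabilityMeasure angleMeasure where
  measure_univ := by
    rw [angleMeasure, Measure.smul_apply, Measure.restrict_apply_univ, Real.volume_Ioc, smul_eq_mul,
      ← ENNReal.ofReal_mul (by positivity), sub_zero, inv_mul_cancel₀ (by positivity),
      ENNReal.ofReal_one]

lemma circleAverage_eq_integral_angleMeasure (φ : ℂ → ℝ) (c : ℂ) (R : ℝ) :
    Real.circleAverage φ c R = ∫ θ, φ (circleMap c R θ) ∂angleMeasure := by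
  rw [Real.circleAverage_def, angleMeasure, integral_smul_measure,
    intervalIntegral.integral_of_le (by positivity), ENNReal.toReal_ofReal (by positivity)]

lemma circleIntegrable_iff_integrable_angleMeasure {φ : ℂ → ℝ} {c : ℂ} {R : ℝ} :
    CircleIntegrable φ c R ↔ Integrable (fun θ => φ (circleMap c R θ)) angleMeasure := by
  rw [CircleIntegrable, intervalIntegrable_iff_integrableOn_Ioc_of_le (by positivity), IntegrableOn,
    angleMeasure, integrable_smul_measure (by simp [Real.pi_pos]) (by simp)]

/-- The Poisson integral over the circle `|ζ - c| = R` of a `[0, ∞]`-valued boundary function. -/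
def poissonLIntegral (c : ℂ) (R : ℝ) (Φ : ℂ → ℝ≥0∞) (z : ℂ) : ℝ≥0∞ :=
  ∫⁻ θ, ENNReal.ofReal (poissonKernel c z (circleMap c R θ)) * Φ (circleMap c R θ) ∂angleMeasure

variable {φ : ℂ → ℝ} {c z : ℂ} {R : ℝ}

lemma poissonLIntegral_congr_ae {Φ Ψ : ℂ → ℝ≥0∞}
    (h : ∀ᵐ θ ∂angleMeasure, Φ (circleMap c R θ) = Ψ (circleMap c R θ)) :
    poissonLIntegral c R Φ = poissonLIntegral c R Ψ := by
  ext z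
  exact lintegral_congr_ae (h.mono fun θ hθ => congrArg _ hθ)

lemma poissonIntegral_nonneg (hφ₀ : ∀ ζ ∈ sphere c |R|, 0 ≤ φ ζ) (hz : z ∈ ball c R) :
    0 ≤ poissonIntegral c R φ z := by
  rw [poissonIntegral, circleAverage_eq_integral_angleMeasure]
  exact integral_nonneg fun θ => mul_nonneg (poissonKernel_nonneg hz (circleMap_mem_sphere' c R θ))
    (hφ₀ _ (circleMap_mem_sphere' c R θ))

lemma poissonLIntegral_ofReal (hφ : CircleIntegrable φ c R)
    (hφ₀ : ∀ ζ ∈ sphere c |R|, 0 ≤ φ ζ) (hz : z ∈ ball c R) :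
    poissonLIntegral c R (fun ζ => ENNReal.ofReal (φ ζ)) z =
      ENNReal.ofReal (poissonIntegral c R φ z) := by
  have hker (θ : ℝ) : 0 ≤ poissonKernel c z (circleMap c R θ) :=
    poissonKernel_nonneg hz (circleMap_mem_sphere' c R θ)
  rw [poissonIntegral, circleAverage_eq_integral_angleMeasure, poissonLIntegral,
    ofReal_integral_eq_lintegral_ofReal
      (circleIntegrable_iff_integrable_angleMeasure.1 (circleIntegrable_poissonKernel_smul hφ hz))
      (.of_forall fun θ => mul_nonneg (hker θ) (hφ₀ _ (circleMap_mem_sphere' c R θ)))]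
  exact lintegral_congr fun θ => (ENNReal.ofReal_mul (hker θ)).symm

lemma lintegral_poissonLIntegral_eq_lintegral_map {X : Type*} [MeasurableSpace X] {ν : Measure X}
    {τ : X → ℂ} (hτ : Measurable τ) {γ : ℝ → ℂ} (hγ : Measurable γ) {Φ : ℂ → ℝ≥0∞}
    (hΦ : Measurable Φ) :
    ∫⁻ ξ, Φ ξ ∂(((ν.prod angleMeasure).withDensity fun q =>
        ENNReal.ofReal (poissonKernel 0 (τ q.1) (circleMap 0 1 q.2))).map fun q => γ q.2) =
      ∫⁻ x, ∫⁻ θ, ENNReal.ofReal (poissonKernel 0 (τ x) (circleMap 0 1 θ)) * Φ (γ θ)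
        ∂angleMeasure ∂ν := by
  have hker : Measurable fun q : X × ℝ =>
      ENNReal.ofReal (poissonKernel 0 (τ q.1) (circleMap 0 1 q.2)) := by
    have := (continuous_circleMap 0 1).measurable
    simp only [poissonKernel_def]
    fun_prop
  have hγsnd : Measurable fun q : X × ℝ => γ q.2 := hγ.comp measurable_snd
  have hΦγ : Measurable fun q : X × ℝ => Φ (γ q.2) := hΦ.comp hγsnd
  rw [lintegral_map hΦ hγsnd, lintegral_withDensity_eq_lintegral_mul _ hker hΦγ,
    lintegral_prod _ (hker.mul hΦγ).aemeasurable]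
  rfl

end PoissonLIntegral

section BoundaryMeasure

variable {u φ H g : ℂ → ℝ} {Ω U : Set ℂ} {ψ : ℂ → ℂ} {ν μ μb : Measure ℂ} {μfam : ℝ → Measure ℂ}
  {r : ℝ}

namespace IsLevelMeasure

lemma integrable (hμ : IsLevelMeasure u Ω ν r μ) (hΩ : IsCompact (closure Ω))
    (hg : ContinuousOn g (closure Ω)) : Integrable g μ := by
  have := hμ.isFiniteMeasure
  rw [← Measure.restrict_eq_self_of_ae_mem (hμ.ae_mem.mono fun z hz => subset_closure hz.1)]
  exact hg.integrableOn_compact hΩ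

lemma abs_integral_le (hμ : IsLevelMeasure u Ω ν r μ) {δ : ℝ}
    (hg : ∀ z ∈ Ω, u z = r → |g z| ≤ δ) : |∫ z, g z ∂μ| ≤ δ * μ.real univ := by
  have := hμ.isFiniteMeasure
  rw [← Real.norm_eq_abs]
  exact norm_integral_le_of_norm_le_const (hμ.ae_mem.mono fun z hz => hg z hz.1 hz.2)

end IsLevelMeasure

lemma IsConformalParametrization.harmonicOnNhd_poissonIntegral_discCoord
    (hψ : IsConformalParametrization Ω U ψ) (hφ : CircleIntegrable φ 0 1) :
    HarmonicOnNhd (fun z => poissonIntegral 0 1 φ (discCoord ψ z)) Ω := fun _ hz =>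
  harmonicAt_comp_analyticAt (harmonicOnNhd_poissonIntegral hφ _ (hψ.discCoord_mem_ball hz))
    (hψ.differentiableOn_discCoord.analyticAt (hψ.isOpen.mem_nhds hz))

namespace IsContinuousExhaustion

lemma measureReal_univ_le (hu : IsContinuousExhaustion u Ω) [IsFiniteMeasure ν]
    (hν : IsRieszMeasure u Ω ν) (hr : r < 0) (hμ : IsLevelMeasure u Ω ν r μ) :
    μ.real univ ≤ ν.real univ := by
  have hone := hu.setIntegral_eq_integral_of_harmonicOnNhd hν hr hμ (w := fun _ => 1)
    fun z _ => (analyticAt_const (v := (1 : ℂ))).harmonicAt_re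
  simp only [integral_const, smul_eq_mul, mul_one, measureReal_restrict_apply_univ] at hone
  exact hone ▸ measureReal_mono (subset_univ _)

lemma eventually_forall_abs_lt (hu : IsContinuousExhaustion u Ω) (hΩ : IsCompact (closure Ω))
    (hg : ContinuousOn g (closure Ω)) (hg₀ : ∀ z ∈ frontier Ω, g z = 0) {δ : ℝ} (hδ : 0 < δ) :
    ∀ᶠ r in 𝓝[<] 0, ∀ z ∈ Ω, u z = r → |g z| < δ := by
  have hK : IsCompact (closure Ω ∩ g ⁻¹' {x | δ ≤ |x|}) :=
    hΩ.of_isClosed_subset (hg.preimage_isClosed_of_isClosed isClosed_closure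
      (isClosed_le continuous_const continuous_abs)) inter_subset_left
  have hKΩ : closure Ω ∩ g ⁻¹' {x | δ ≤ |x|} ⊆ Ω := by
    rintro z ⟨hz, hzδ⟩
    by_contra hzΩ
    have hgz := hg₀ z ⟨hz, by rwa [hu.isOpen.interior_eq]⟩
    simp only [mem_preimage, hgz, mem_ofPred_eq, abs_zero] at hzδ
    exact hδ.not_ge hzδ
  filter_upwards [hu.eventually_forall_lt hK hKΩ] with r hr z hz hzr
  by_contra hzδ
  exact (hr z ⟨subset_closure hz, not_lt.1 hzδ⟩).ne hzr

lemma tendsto_integral_of_frontier_eq_zero (hu : IsContinuousExhaustion u Ω) [IsFiniteMeasure ν]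
    (hν : IsRieszMeasure u Ω ν) (hμ : ∀ r < 0, IsLevelMeasure u Ω ν r (μfam r))
    (hΩ : IsCompact (closure Ω)) (hg : ContinuousOn g (closure Ω))
    (hg₀ : ∀ z ∈ frontier Ω, g z = 0) :
    Tendsto (fun r => ∫ z, g z ∂μfam r) (𝓝[<] 0) (𝓝 0) := by
  rw [Metric.tendsto_nhds]
  intro ε hε
  have hδ : 0 < ε / (ν.real univ + 1) := by positivity
  filter_upwards [hu.eventually_forall_abs_lt hΩ hg hg₀ hδ, self_mem_nhdsWithin] with r hgr hr
  rw [dist_zero_right]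
  calc ‖∫ z, g z ∂μfam r‖ ≤ ε / (ν.real univ + 1) * (μfam r).real univ :=
        (hμ r hr).abs_integral_le fun z hz hzr => (hgr z hz hzr).le
    _ ≤ ε / (ν.real univ + 1) * ν.real univ :=
        mul_le_mul_of_nonneg_left (hu.measureReal_univ_le hν hr (hμ r hr)) hδ.le
    _ < ε / (ν.real univ + 1) * (ν.real univ + 1) := mul_lt_mul_of_pos_left (lt_add_one _) hδ
    _ = ε := div_mul_cancel₀ _ (by positivity)

lemma integral_boundaryMA_eq (hu : IsContinuousExhaustion u Ω) [IsFiniteMeasure ν]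
    (hν : IsRieszMeasure u Ω ν) (hμ : ∀ r < 0, IsLevelMeasure u Ω ν r (μfam r))
    (hμb : IsBoundaryMA μfam μb) (hΩ : IsCompact (closure Ω)) (hφ : Continuous φ)
    (hH : ContinuousOn H (closure Ω)) (hHΩ : HarmonicOnNhd H Ω) (hHφ : EqOn H φ (frontier Ω)) :
    Integrable H ν ∧ ∫ z, φ z ∂μb = ∫ z, H z ∂ν := by
  have hint : Integrable H ν := by
    rw [← Measure.restrict_eq_self_of_ae_mem (show ∀ᵐ z ∂ν, z ∈ Ω from hν.1)]
    exact (hH.integrableOn_compact hΩ).mono_set subset_closure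
  have hdiff := hu.tendsto_integral_of_frontier_eq_zero hν hμ hΩ (hφ.continuousOn.sub hH)
    fun z hz => sub_eq_zero.2 (hHφ hz).symm
  refine ⟨hint, tendsto_nhds_unique (hμb φ hφ) ?_⟩
  have hsum := hdiff.add (hu.tendsto_setIntegral_lt hν hint)
  rw [zero_add] at hsum
  refine hsum.congr' (eventually_nhdsWithin_of_forall fun r hr => ?_)
  have hμr := hμ r hr
  simp only [Pi.sub_apply]
  rw [integral_sub (hμr.integrable hΩ hφ.continuousOn) (hμr.integrable hΩ hH),
    hu.setIntegral_eq_integral_of_harmonicOnNhd hν hr hμr hHΩ, sub_add_cancel]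

lemma ne_zero_of_isRieszMeasure (hu : IsContinuousExhaustion u Ω) (hν : IsRieszMeasure u Ω ν) :
    ν ≠ 0 := by
  rintro rfl
  obtain ⟨φ, hφ, hne⟩ := hu.exists_isTestFunction_integral_ne_zero
  exact hne (by simpa using hν.integral_eq hφ)

lemma isFiniteMeasure_boundaryMA (hu : IsContinuousExhaustion u Ω) [IsFiniteMeasure ν]
    (hν : IsRieszMeasure u Ω ν) (hμ : ∀ r < 0, IsLevelMeasure u Ω ν r (μfam r))
    (hμb : IsBoundaryMA μfam μb) (hΩ : IsCompact (closure Ω)) : IsFiniteMeasure μb := by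
  have hone := (hu.integral_boundaryMA_eq hν hμ hμb hΩ (φ := fun _ => 1) (H := fun _ => 1)
    continuous_const continuousOn_const
    (fun z _ => (analyticAt_const (v := (1 : ℂ))).harmonicAt_re) fun z _ => rfl).2
  simp only [integral_const, smul_eq_mul, mul_one] at hone
  have hpos : μb.real univ ≠ 0 := by
    rw [hone, measureReal_ne_zero_iff, Measure.measure_univ_ne_zero]
    exact hu.ne_zero_of_isRieszMeasure hν
  -- the real-valued mass of an infinite measure would be the junk value `0`
  exact ⟨lt_top_iff_ne_top.2 fun htop => hpos (by rw [Measure.real, htop, ENNReal.toReal_top])⟩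

lemma integral_boundaryMA_eq_integral_poissonIntegral (hu : IsContinuousExhaustion u Ω)
    (hψ : IsConformalParametrization Ω U ψ) [IsFiniteMeasure ν] (hν : IsRieszMeasure u Ω ν)
    (hμ : ∀ r < 0, IsLevelMeasure u Ω ν r (μfam r)) (hμb : IsBoundaryMA μfam μb)
    (hφ : Continuous φ) :
    Integrable (fun z => poissonIntegral 0 1 (φ ∘ ψ) (discCoord ψ z)) ν ∧
      ∫ z, φ z ∂μb = ∫ z, poissonIntegral 0 1 (φ ∘ ψ) (discCoord ψ z) ∂ν := by
  have hφψ : ContinuousOn (φ ∘ ψ) (closedBall 0 1) := hφ.comp_continuousOn hψ.continuousOn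
  have hci : CircleIntegrable (φ ∘ ψ) 0 1 :=
    (hφψ.mono sphere_subset_closedBall).circleIntegrable zero_le_one
  let H : ℂ → ℝ := fun z => poissonModification 0 1 (φ ∘ ψ) (discCoord ψ z)
  have hHΩ : EqOn H (fun z => poissonIntegral 0 1 (φ ∘ ψ) (discCoord ψ z)) Ω := fun z hz =>
    poissonModification_of_mem (hψ.discCoord_mem_ball hz)
  have hH : ContinuousOn H (closure Ω) :=
    (continuousOn_poissonModification one_pos Subset.rfl (hφψ.mono sdiff_subset)).comp
      hψ.continuousOn_discCoord fun z hz => hψ.discCoord_mem_closedBall hz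
  have hHharm : HarmonicOnNhd H Ω := fun z hz =>
    (harmonicAt_congr_nhds (hHΩ.eventuallyEq_of_mem (hu.isOpen.mem_nhds hz))).2
      (hψ.harmonicOnNhd_poissonIntegral_discCoord hci z hz)
  have hHφ : EqOn H φ (frontier Ω) := fun z hz => by
    have hsphere : discCoord ψ z ∉ ball (0 : ℂ) 1 := fun hball =>
      hball.ne (hψ.discCoord_mem_sphere hz)
    simp only [H, poissonModification_of_notMem hsphere, Function.comp_apply,
      hψ.apply_discCoord (frontier_subset_closure hz)]
  have hae : H =ᵐ[ν] fun z => poissonIntegral 0 1 (φ ∘ ψ) (discCoord ψ z) :=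
    (show ∀ᵐ z ∂ν, z ∈ Ω from hν.1).mono fun z hz => hHΩ hz
  obtain ⟨hint, heq⟩ := hu.integral_boundaryMA_eq hν hμ hμb hψ.isCompact_closure hφ hH hHharm hHφ
  exact ⟨hint.congr hae, heq.trans (integral_congr_ae hae)⟩

lemma lintegral_boundaryMA_eq_of_continuous (hu : IsContinuousExhaustion u Ω)
    (hψ : IsConformalParametrization Ω U ψ) [IsFiniteMeasure ν] (hν : IsRieszMeasure u Ω ν)
    (hμ : ∀ r < 0, IsLevelMeasure u Ω ν r (μfam r)) (hμb : IsBoundaryMA μfam μb)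
    (hφ : Continuous φ) (hφ₀ : 0 ≤ φ) (hint : Integrable φ μb) :
    ∫⁻ ξ, ENNReal.ofReal (φ ξ) ∂μb =
      ∫⁻ z, poissonLIntegral 0 1 (fun ζ => ENNReal.ofReal (φ (ψ ζ))) (discCoord ψ z) ∂ν := by
  have hci : CircleIntegrable (φ ∘ ψ) 0 1 :=
    (hφ.comp_continuousOn (hψ.continuousOn.mono sphere_subset_closedBall)).circleIntegrable
      zero_le_one
  have hΩ : ∀ᵐ z ∂ν, z ∈ Ω := hν.1
  obtain ⟨hint', heq⟩ := hu.integral_boundaryMA_eq_integral_poissonIntegral hψ hν hμ hμb hφ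
  rw [← ofReal_integral_eq_lintegral_ofReal hint (.of_forall hφ₀), heq,
    ofReal_integral_eq_lintegral_ofReal hint' (hΩ.mono fun z hz =>
      poissonIntegral_nonneg (fun ζ _ => hφ₀ _) (hψ.discCoord_mem_ball hz))]
  exact lintegral_congr_ae (hΩ.mono fun z hz =>
    (poissonLIntegral_ofReal hci (fun ζ _ => hφ₀ _) (hψ.discCoord_mem_ball hz)).symm)

lemma lintegral_boundaryMA_eq (hu : IsContinuousExhaustion u Ω)
    (hψ : IsConformalParametrization Ω U ψ) [IsFiniteMeasure ν] (hν : IsRieszMeasure u Ω ν)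
    (hμ : ∀ r < 0, IsLevelMeasure u Ω ν r (μfam r)) (hμb : IsBoundaryMA μfam μb)
    {Φ : ℂ → ℝ≥0∞} (hΦ : Measurable Φ) :
    ∫⁻ ξ, Φ ξ ∂μb = ∫⁻ z, poissonLIntegral 0 1 (Φ ∘ ψ) (discCoord ψ z) ∂ν := by
  classical
  have := hu.isFiniteMeasure_boundaryMA hν hμ hμb hψ.isCompact_closure
  have hτ : Measurable (Ω.piecewise (discCoord ψ) 0) :=
    (hψ.continuousOn_discCoord.mono subset_closure).measurable_piecewise continuousOn_const
      hu.isOpen.measurableSet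
  have hγ : Measurable fun θ => ψ (circleMap 0 1 θ) :=
    (hψ.continuousOn.comp_continuous (continuous_circleMap 0 1) fun θ =>
      sphere_subset_closedBall (circleMap_mem_sphere 0 zero_le_one θ)).measurable
  have hsweep {Φ : ℂ → ℝ≥0∞} (hΦ : Measurable Φ) :=
    (lintegral_poissonLIntegral_eq_lintegral_map (ν := ν) hτ hγ hΦ).trans
      (lintegral_congr_ae (g := fun z => poissonLIntegral 0 1 (Φ ∘ ψ) (discCoord ψ z))
        ((show ∀ᵐ z ∂ν, z ∈ Ω from hν.1).mono fun z hz => by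
          simp only [piecewise_eq_of_mem _ _ _ hz, poissonLIntegral, Function.comp_apply]))
  refine Eq.trans (congrArg (fun m => ∫⁻ ξ, Φ ξ ∂m) ?_) (hsweep hΦ)
  refine ext_of_forall_lintegral_eq_of_IsFiniteMeasure fun φ => ?_
  rw [hsweep (by fun_prop)]
  have hφ : Continuous fun ξ => (φ ξ : ℝ) := by fun_prop
  have hsweepφ := hu.lintegral_boundaryMA_eq_of_continuous hψ hν hμ hμb hφ (fun ξ => (φ ξ).2)
    (φ.integrable_of_nnreal μb)
  simpa only [ENNReal.ofReal_coe_nnreal] using! hsweepφ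

lemma ae_boundaryMA (hu : IsContinuousExhaustion u Ω) (hψ : IsConformalParametrization Ω U ψ)
    [IsFiniteMeasure ν] (hν : IsRieszMeasure u Ω ν)
    (hμ : ∀ r < 0, IsLevelMeasure u Ω ν r (μfam r)) (hμb : IsBoundaryMA μfam μb)
    {P : ℂ → Prop} (hP : ∀ᵐ ξ ∂(arcLen Ω), P ξ) : ∀ᵐ ξ ∂μb, P ξ := by
  obtain ⟨T, hPT, hT, hT₀⟩ := exists_measurable_superset_of_null (ae_iff.1 hP)
  refine ae_iff.2 (measure_mono_null hPT ?_)
  have hcircle : ∀ᵐ θ ∂angleMeasure, ψ (circleMap 0 1 θ) ∉ T :=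
    Measure.ae_smul_measure (hψ.ae_circleMap (measure_eq_zero_iff_ae_notMem.1 hT₀)) _
  have hzero : poissonLIntegral 0 1 (T.indicator 1 ∘ ψ) = poissonLIntegral 0 1 0 :=
    poissonLIntegral_congr_ae (hcircle.mono fun θ hθ => indicator_of_notMem hθ _)
  rw [← lintegral_indicator_one hT, hu.lintegral_boundaryMA_eq hψ hν hμ hμb
    (measurable_one.indicator hT), hzero]
  simp [poissonLIntegral]

end IsContinuousExhaustion

end BoundaryMeasure

section VitaliConvergence

variable {α E : Type*} {m : MeasurableSpace α} {μ : Measure α} [NormedAddCommGroup E]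

lemma unifIntegrable_of_eLpNorm_le {ι : Type*} {f : ι → α → E} {p q : ℝ≥0∞} {C : NNReal}
    (hp : p ≠ 0) (hpq : p < q) (hf : ∀ i, AEStronglyMeasurable (f i) μ)
    (hC : ∀ i, eLpNorm (f i) q μ ≤ C) : UnifIntegrable f p μ := by
  have he : 0 < 1 / p.toReal - 1 / q.toReal := by
    have hp' : 0 < p.toReal := ENNReal.toReal_pos hp hpq.ne_top
    rcases eq_or_ne q ⊤ with rfl | hq
    · simpa using hp'
    · exact sub_pos.2 (one_div_lt_one_div_of_lt hp'
        ((ENNReal.toReal_lt_toReal hpq.ne_top hq).2 hpq))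
  set e := 1 / p.toReal - 1 / q.toReal
  intro ε hε
  refine ⟨(ε / (C + 1)) ^ e⁻¹, by positivity, fun i s hs hμs => ?_⟩
  have hμe : μ s ^ e ≤ ENNReal.ofReal (ε / (C + 1)) := by
    calc μ s ^ e ≤ ENNReal.ofReal ((ε / (C + 1)) ^ e⁻¹) ^ e := ENNReal.rpow_le_rpow hμs he.le
      _ = ENNReal.ofReal (ε / (C + 1)) := by
          rw [ENNReal.ofReal_rpow_of_nonneg (by positivity) he.le,
            Real.rpow_inv_rpow (by positivity) he.ne']
  calc eLpNorm (s.indicator (f i)) p μ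
      = eLpNorm (f i) p (μ.restrict s) := eLpNorm_indicator_eq_eLpNorm_restrict hs
    _ ≤ eLpNorm (f i) q (μ.restrict s) * μ.restrict s univ ^ e :=
        eLpNorm_le_eLpNorm_mul_rpow_measure_univ hpq.le (hf i).restrict
    _ ≤ C * ENNReal.ofReal (ε / (C + 1)) := by
        rw [Measure.restrict_apply_univ]
        exact mul_le_mul' ((eLpNorm_mono_measure _ Measure.restrict_le_self).trans (hC i)) hμe
    _ = ENNReal.ofReal (C * (ε / (C + 1))) := by
        rw [ENNReal.ofReal_mul C.coe_nonneg, ENNReal.ofReal_coe_nnreal]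
    _ ≤ ENNReal.ofReal ε := by
        refine ENNReal.ofReal_le_ofReal ?_
        rw [mul_div_left_comm]
        exact mul_le_of_le_one_right hε.le
          ((div_le_one (by positivity)).2 (le_add_of_nonneg_right zero_le_one))

lemma tendsto_integral_of_eLpNorm_le [NormedSpace ℝ E] [IsFiniteMeasure μ] {f : ℕ → α → E}
    {g : α → E} {q : ℝ≥0∞} {C : NNReal} (hq : 1 < q) (hf : ∀ n, AEStronglyMeasurable (f n) μ)
    (hC : ∀ n, eLpNorm (f n) q μ ≤ C)
    (hfg : ∀ᵐ x ∂μ, Tendsto (fun n => f n x) atTop (𝓝 (g x))) :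
    Tendsto (fun n => ∫ x, f n x ∂μ) atTop (𝓝 (∫ x, g x ∂μ)) := by
  have hg : MemLp g q μ := ⟨aestronglyMeasurable_of_tendsto_ae atTop hf hfg,
    (Lp.eLpNorm_le_of_ae_tendsto (.of_forall hC) hf hfg).trans_lt ENNReal.coe_lt_top⟩
  have hf₁ (n : ℕ) : MemLp (f n) 1 μ :=
    MemLp.mono_exponent ⟨hf n, (hC n).trans_lt ENNReal.coe_lt_top⟩ hq.le
  exact tendsto_integral_of_L1' g hg.1 (.of_forall fun n => (hf₁ n).integrable le_rfl)
    (tendsto_Lp_finite_of_tendsto_ae le_rfl ENNReal.one_ne_top hf (hg.mono_exponent hq.le)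
      (unifIntegrable_of_eLpNorm_le one_ne_zero hq hf hC) hfg)

end VitaliConvergence

section RadialLimits

/-- `Fs` gives the radial limits of `F` at almost every point of the unit circle. -/
def HasRadialLimits {E : Type*} [TopologicalSpace E] (F Fs : ℂ → E) : Prop :=
  ∀ᵐ θ ∂angleMeasure,
    Tendsto (fun s : ℝ => F (circleMap 0 s θ)) (𝓝[<] 1) (𝓝 (Fs (circleMap 0 1 θ)))

lemma exists_seq_tendsto_one_left :
    ∃ s : ℕ → ℝ, (∀ n, s n ∈ Ioo (0 : ℝ) 1) ∧ Tendsto s atTop (𝓝[<] 1) := by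
  obtain ⟨s, -, hs, hs₁⟩ := exists_seq_strictMono_tendsto' (zero_lt_one' ℝ)
  exact ⟨s, hs, tendsto_nhdsWithin_iff.2 ⟨hs₁, .of_forall fun n => (hs n).2⟩⟩

lemma circleMap_mem_ball_zero {s : ℝ} (hs : s ∈ Ioo (0 : ℝ) 1) (θ : ℝ) :
    circleMap 0 s θ ∈ ball (0 : ℂ) 1 := by
  rw [mem_ball_zero_iff, norm_circleMap_zero, abs_of_pos hs.1]
  exact hs.2

variable {F Fs : ℂ → ℂ} {G Gs φ : ℂ → ℝ} {z c : ℂ} {R : ℝ}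

lemma continuous_comp_circleMap {E : Type*} [TopologicalSpace E] {F : ℂ → E}
    (hF : ContinuousOn F (ball 0 1)) {s : ℝ} (hs : s ∈ Ioo (0 : ℝ) 1) :
    Continuous fun θ => F (circleMap 0 s θ) :=
  hF.comp_continuous (continuous_circleMap 0 s) (circleMap_mem_ball_zero hs)

lemma HasRadialLimits.norm_rpow {q : ℝ} (hF : HasRadialLimits F Fs) (hq : 0 ≤ q) :
    HasRadialLimits (fun ζ => ‖F ζ‖ ^ q) fun ζ => ‖Fs ζ‖ ^ q :=
  hF.mono fun _ hθ => hθ.norm.rpow_const (.inr hq)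

lemma HasRadialLimits.memLp {q C : ℝ≥0∞} (hlim : HasRadialLimits G Gs)
    (hG : ContinuousOn G (ball 0 1)) (hC : C ≠ ⊤)
    (hbound : ∀ s ∈ Ioo (0 : ℝ) 1, eLpNorm (fun θ => G (circleMap 0 s θ)) q angleMeasure ≤ C) :
    MemLp (fun θ => Gs (circleMap 0 1 θ)) q angleMeasure := by
  obtain ⟨s, hs, hs₁⟩ := exists_seq_tendsto_one_left
  have hmeas (n : ℕ) : AEStronglyMeasurable (fun θ => G (circleMap 0 (s n) θ)) angleMeasure :=
    (continuous_comp_circleMap hG (hs n)).aestronglyMeasurable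
  have hlim' := hlim.mono fun θ hθ => hθ.comp hs₁
  exact ⟨aestronglyMeasurable_of_tendsto_ae atTop hmeas hlim',
    (Lp.eLpNorm_le_of_ae_tendsto (.of_forall fun n => hbound _ (hs n)) hmeas hlim').trans_lt
      hC.lt_top⟩

lemma poissonKernel_mul_mul {s : ℝ} (hs : s ≠ 0) (z ζ : ℂ) :
    poissonKernel 0 (s * z) (s * ζ) = poissonKernel 0 z ζ := by
  simp only [poissonKernel_def, sub_zero, ← mul_sub, norm_mul, mul_pow]
  exact mul_div_mul_left _ _ (by simpa using hs)

lemma circleMap_zero_eq_mul (s θ : ℝ) : circleMap 0 s θ = s * circleMap 0 1 θ := by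
  simp [circleMap]

lemma poissonIntegral_mul_eq {s : ℝ} (hs : s ≠ 0) :
    poissonIntegral 0 s φ (s * z) =
      ∫ θ, poissonKernel 0 z (circleMap 0 1 θ) * φ (circleMap 0 s θ) ∂angleMeasure := by
  rw [poissonIntegral, circleAverage_eq_integral_angleMeasure]
  refine integral_congr_ae (.of_forall fun θ => ?_)
  simp only [Pi.smul_apply', smul_eq_mul]
  rw [circleMap_zero_eq_mul s θ, poissonKernel_mul_mul hs]

lemma LocallySubmean.le_poissonIntegral_of_hasRadialLimits {q : ℝ≥0∞} {C : NNReal} (hq : 1 < q)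
    (hsub : LocallySubmean G (ball 0 1)) (hG : ContinuousOn G (ball 0 1))
    (hbound : ∀ s ∈ Ioo (0 : ℝ) 1, eLpNorm (fun θ => G (circleMap 0 s θ)) q angleMeasure ≤ C)
    (hlim : HasRadialLimits G Gs) (hz : z ∈ ball 0 1) :
    G z ≤ poissonIntegral 0 1 Gs z := by
  obtain ⟨s, hs, hs₁⟩ := exists_seq_tendsto_one_left
  have hker : Continuous fun θ => poissonKernel 0 z (circleMap 0 1 θ) :=
    (continuousOn_poissonKernel_sphere hz).comp_continuous (continuous_circleMap 0 1)
      (circleMap_mem_sphere' 0 1)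
  obtain ⟨B, hB⟩ := (isCompact_sphere (0 : ℂ) |1|).exists_bound_of_continuousOn
    (continuousOn_poissonKernel_sphere hz)
  have hpoisson : Tendsto
      (fun n => ∫ θ, poissonKernel 0 z (circleMap 0 1 θ) * G (circleMap 0 (s n) θ) ∂angleMeasure)
      atTop (𝓝 (poissonIntegral 0 1 Gs z)) := by
    rw [poissonIntegral, circleAverage_eq_integral_angleMeasure]
    refine tendsto_integral_of_eLpNorm_le (C := B.toNNReal * C) hq
      (fun n => (hker.mul (continuous_comp_circleMap hG (hs n))).aestronglyMeasurable) (fun n => ?_)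
      (hlim.mono fun θ hθ => (hθ.comp hs₁).const_mul _)
    refine (eLpNorm_le_mul_eLpNorm_of_ae_le_mul (c := B) (.of_forall fun θ => ?_) q).trans
      (mul_le_mul' le_rfl (hbound _ (hs n)))
    rw [norm_mul]
    exact mul_le_mul_of_nonneg_right (hB _ (circleMap_mem_sphere' 0 1 θ)) (norm_nonneg _)
  have hdilate : Tendsto (fun n => G (s n * z)) atTop (𝓝 (G z)) := by
    have hsz : Tendsto (fun n => (s n : ℂ) * z) atTop (𝓝 z) := by
      simpa using
        ((continuous_ofReal.tendsto 1).comp (hs₁.mono_right nhdsWithin_le_nhds)).mul_const z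
    exact (hG.continuousAt (isOpen_ball.mem_nhds hz)).tendsto.comp hsz
  refine le_of_tendsto_of_tendsto' hdilate hpoisson fun n => ?_
  have hsn : closedBall (0 : ℂ) (s n) ⊆ ball 0 1 := closedBall_subset_ball (hs n).2
  rw [← poissonIntegral_mul_eq (hs n).1.ne']
  refine (hsub.mono (ball_subset_closedBall.trans hsn)).le_poissonIntegral (hs n).1 (hG.mono hsn) ?_
  rw [mem_ball_zero_iff] at hz ⊢
  simpa [abs_of_pos (hs n).1] using mul_lt_mul_of_pos_left hz (hs n).1

lemma poissonIntegral_const_mul_sub_const (hφ : CircleIntegrable φ c R) (hz : z ∈ ball c R)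
    (a b : ℝ) : poissonIntegral c R (fun ζ => a * φ ζ - b) z = a * poissonIntegral c R φ z - b := by
  have hconst : poissonIntegral c R (fun _ => b) z = b :=
    poissonIntegral_of_harmonicOnNhd (fun x _ => harmonicAt_const b) hz
  have hsplit : poissonKernel c z • (fun ζ => a * φ ζ - b) =
      a • (poissonKernel c z • φ) - poissonKernel c z • fun _ => b := by
    ext ζ
    simp only [Pi.smul_apply, Pi.sub_apply, Pi.mul_apply, smul_eq_mul]
    ring
  rw [poissonIntegral, hsplit, Real.circleAverage_sub
    (circleIntegrable_poissonKernel_smul hφ hz).const_smul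
    (circleIntegrable_poissonKernel_smul (circleIntegrable_const b c R) hz),
    Real.circleAverage_smul, smul_eq_mul]
  exact congrArg _ hconst

lemma sq_poissonIntegral_le (hφ : CircleIntegrable φ c R)
    (hφ₂ : CircleIntegrable (fun ζ => φ ζ ^ 2) c R) (hz : z ∈ ball c R) :
    poissonIntegral c R φ z ^ 2 ≤ poissonIntegral c R (fun ζ => φ ζ ^ 2) z := by
  set t := poissonIntegral c R φ z with ht
  have htangent : poissonIntegral c R (fun ζ => 2 * t * φ ζ - t ^ 2) z ≤
      poissonIntegral c R (fun ζ => φ ζ ^ 2) z :=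
    poissonIntegral_mono ((hφ.const_smul (a := 2 * t)).sub (circleIntegrable_const (t ^ 2) c R)) hφ₂
      (fun ζ _ => by linarith [sq_nonneg (φ ζ - t)]) hz
  rw [poissonIntegral_const_mul_sub_const hφ hz, ← ht] at htangent
  linarith

lemma LocallySubmean.sq_le_poissonIntegral_of_hasRadialLimits {C : NNReal}
    (hsub : LocallySubmean G (ball 0 1)) (hG : ContinuousOn G (ball 0 1))
    (hbound : ∀ s ∈ Ioo (0 : ℝ) 1, eLpNorm (fun θ => G (circleMap 0 s θ)) 2 angleMeasure ≤ C)
    (hlim : HasRadialLimits G Gs) (hz : z ∈ ball 0 1) (hGz : 0 ≤ G z) :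
    G z ^ 2 ≤ poissonIntegral 0 1 (fun ζ => Gs ζ ^ 2) z := by
  have hGs := hlim.memLp hG ENNReal.coe_ne_top hbound
  calc G z ^ 2 ≤ poissonIntegral 0 1 Gs z ^ 2 := pow_le_pow_left₀ hGz
        (hsub.le_poissonIntegral_of_hasRadialLimits (by norm_num) hG hbound hlim hz) 2
    _ ≤ poissonIntegral 0 1 (fun ζ => Gs ζ ^ 2) z := sq_poissonIntegral_le
        (circleIntegrable_iff_integrable_angleMeasure.2 (hGs.integrable one_le_two))
        (circleIntegrable_iff_integrable_angleMeasure.2 hGs.integrable_sq) hz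

lemma eLpNorm_two_comp_circleMap_le {C s : ℝ} (hG : ContinuousOn G (ball 0 1))
    (hs : s ∈ Ioo (0 : ℝ) 1) (hbound : Real.circleAverage (fun ζ => G ζ ^ 2) 0 s ≤ C) :
    eLpNorm (fun θ => G (circleMap 0 s θ)) 2 angleMeasure ≤ ENNReal.ofReal (√C) := by
  have hcont := continuous_comp_circleMap hG hs
  have hmem : MemLp (fun θ => G (circleMap 0 s θ)) 2 angleMeasure := by
    rw [memLp_two_iff_integrable_sq hcont.aestronglyMeasurable,
      ← circleIntegrable_iff_integrable_angleMeasure (φ := fun ζ => G ζ ^ 2)]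
    exact (hcont.pow 2).intervalIntegrable _ _
  rw [hmem.eLpNorm_eq_integral_rpow_norm two_ne_zero ENNReal.ofNat_ne_top]
  simp only [ENNReal.toReal_ofNat, Real.rpow_ofNat, Real.norm_eq_abs, sq_abs, ← one_div,
    ← Real.sqrt_eq_rpow]
  rw [← circleAverage_eq_integral_angleMeasure (fun ζ => G ζ ^ 2)]
  exact ENNReal.ofReal_le_ofReal (Real.sqrt_le_sqrt hbound)

lemma HasRadialLimits.poissonLIntegral_le_liminf (hlim : HasRadialLimits G Gs)
    (hG : ContinuousOn G (ball 0 1)) {s : ℕ → ℝ} (hs : ∀ n, s n ∈ Ioo (0 : ℝ) 1)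
    (hs₁ : Tendsto s atTop (𝓝[<] 1)) (hz : z ∈ ball 0 1) :
    poissonLIntegral 0 1 (fun ζ => ENNReal.ofReal (Gs ζ)) z ≤
      liminf (fun n => poissonLIntegral 0 (s n) (fun ζ => ENNReal.ofReal (G ζ)) z) atTop := by
  have hmeas (n : ℕ) : AEMeasurable (fun θ => ENNReal.ofReal (poissonKernel 0 z
      (circleMap 0 (s n) θ)) * ENNReal.ofReal (G (circleMap 0 (s n) θ))) angleMeasure := by
    have hker : Measurable fun θ => poissonKernel 0 z (circleMap 0 (s n) θ) := by
      have := (continuous_circleMap 0 (s n)).measurable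
      simp only [poissonKernel_def]
      fun_prop
    exact (hker.ennreal_ofReal.mul
      (continuous_comp_circleMap hG (hs n)).measurable.ennreal_ofReal).aemeasurable
  refine (lintegral_mono_ae ?_).trans (lintegral_liminf_le' hmeas)
  filter_upwards [hlim] with θ hθ
  have hkernel : Tendsto (fun n => poissonKernel 0 z (circleMap 0 (s n) θ)) atTop
      (𝓝 (poissonKernel 0 z (circleMap 0 1 θ))) := by
    have hne : circleMap 0 1 θ - z ≠ 0 := by
      refine sub_ne_zero.2 fun h => ?_
      rw [← h, mem_ball_zero_iff, norm_circleMap_zero, abs_one] at hz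
      exact hz.ne rfl
    have hcont : ContinuousAt (fun r : ℝ => poissonKernel 0 z (circleMap 0 r θ)) 1 := by
      simp only [poissonKernel_def, circleMap] at hne ⊢
      fun_prop (disch := simpa using hne)
    exact hcont.tendsto.comp (hs₁.mono_right nhdsWithin_le_nhds)
  exact (ENNReal.Tendsto.mul (ENNReal.tendsto_ofReal hkernel) (.inr ENNReal.ofReal_ne_top)
    (ENNReal.tendsto_ofReal (hθ.comp hs₁)) (.inr ENNReal.ofReal_ne_top)).liminf_eq.ge

end RadialLimits

section HardySpace

variable {Ω U : Set ℂ} {ψ f fstar F Fs : ℂ → ℂ} {p : ℝ} {z : ℂ}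

lemma sq_norm_rpow_half (w : ℂ) (p : ℝ) : (‖w‖ ^ (p / 2)) ^ 2 = ‖w‖ ^ p := by
  rw [← Real.rpow_mul_natCast (norm_nonneg w), Nat.cast_ofNat, div_mul_cancel₀ p two_ne_zero]

lemma continuousOn_norm_rpow {S : Set ℂ} (hF : DifferentiableOn ℂ F S) (hp : 0 ≤ p) :
    ContinuousOn (fun ζ => ‖F ζ‖ ^ p) S :=
  hF.continuousOn.norm.rpow_const fun _ _ => .inr hp

lemma eLpNorm_norm_rpow_half_le {C s : ℝ} (hF : DifferentiableOn ℂ F (ball 0 1)) (hp : 0 < p)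
    (hs : s ∈ Ioo (0 : ℝ) 1) (hbound : Real.circleAverage (fun ζ => ‖F ζ‖ ^ p) 0 s ≤ C) :
    eLpNorm (fun θ => ‖F (circleMap 0 s θ)‖ ^ (p / 2)) 2 angleMeasure ≤ (√C).toNNReal :=
  eLpNorm_two_comp_circleMap_le (G := fun ζ => ‖F ζ‖ ^ (p / 2))
    (continuousOn_norm_rpow hF (half_pos hp).le) hs (by simpa only [sq_norm_rpow_half] using hbound)

lemma circleIntegrable_norm_rpow_radialLimits {C : ℝ} (hF : DifferentiableOn ℂ F (ball 0 1))
    (hp : 0 < p)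
    (hbound : ∀ s ∈ Ioo (0 : ℝ) 1, Real.circleAverage (fun ζ => ‖F ζ‖ ^ p) 0 s ≤ C)
    (hlim : HasRadialLimits F Fs) : CircleIntegrable (fun ζ => ‖Fs ζ‖ ^ p) 0 1 := by
  have hmem := (hlim.norm_rpow (half_pos hp).le).memLp
    (continuousOn_norm_rpow hF (half_pos hp).le) ENNReal.coe_ne_top
    fun s hs => eLpNorm_norm_rpow_half_le hF hp hs (hbound s hs)
  rw [circleIntegrable_iff_integrable_angleMeasure]
  simpa only [sq_norm_rpow_half] using hmem.integrable_sq

lemma norm_rpow_le_poissonIntegral {C : ℝ} (hF : DifferentiableOn ℂ F (ball 0 1)) (hp : 0 < p)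
    (hbound : ∀ s ∈ Ioo (0 : ℝ) 1, Real.circleAverage (fun ζ => ‖F ζ‖ ^ p) 0 s ≤ C)
    (hlim : HasRadialLimits F Fs) (hz : z ∈ ball 0 1) :
    ‖F z‖ ^ p ≤ poissonIntegral 0 1 (fun ζ => ‖Fs ζ‖ ^ p) z := by
  simpa only [sq_norm_rpow_half] using
    (locallySubmean_norm_rpow isOpen_ball hF (half_pos hp)).sq_le_poissonIntegral_of_hasRadialLimits
      (continuousOn_norm_rpow hF (half_pos hp).le)
      (fun s hs => eLpNorm_norm_rpow_half_le hF hp hs (hbound s hs))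
      (hlim.norm_rpow (half_pos hp).le) hz (by positivity)

namespace IsConformalParametrization

lemma differentiableOn_comp (hψ : IsConformalParametrization Ω U ψ) (hf : DifferentiableOn ℂ f Ω) :
    DifferentiableOn ℂ (f ∘ ψ) (ball 0 1) :=
  hf.comp (hψ.differentiableOn_nhd.mono (ball_subset_closedBall.trans hψ.closedBall_subset))
    fun _ => hψ.apply_mem

lemma exists_circleAverage_norm_rpow_le (hψ : IsConformalParametrization Ω U ψ) (hp : 0 < p)
    (hf : MemHClassical p Ω f) :
    ∃ C, ∀ s ∈ Ioo (0 : ℝ) 1, Real.circleAverage (fun ζ => ‖f (ψ ζ)‖ ^ p) 0 s ≤ C := by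
  obtain ⟨hfd, h, hh, hfh⟩ := hf
  have hψd : DifferentiableOn ℂ ψ (ball 0 1) :=
    hψ.differentiableOn_nhd.mono (ball_subset_closedBall.trans hψ.closedBall_subset)
  have hhψ : HarmonicOnNhd (h ∘ ψ) (ball 0 1) := fun ζ hζ =>
    harmonicAt_comp_analyticAt (harmonicOnNhd_of_harmonicOn hψ.isOpen hh _ (hψ.apply_mem hζ))
      (hψd.analyticAt (isOpen_ball.mem_nhds hζ))
  refine ⟨h (ψ 0), fun s hs => ?_⟩
  have hsub : closedBall (0 : ℂ) |s| ⊆ ball 0 1 := by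
    rw [abs_of_pos hs.1]
    exact closedBall_subset_ball hs.2
  have hsphere := sphere_subset_closedBall.trans hsub
  calc Real.circleAverage (fun ζ => ‖f (ψ ζ)‖ ^ p) 0 s ≤ Real.circleAverage (h ∘ ψ) 0 s :=
        Real.circleAverage_mono
          ((continuousOn_norm_rpow (hψ.differentiableOn_comp hfd) hp.le).mono
            hsphere).circleIntegrable'
          (hhψ.continuousOn.mono hsphere).circleIntegrable'
          fun ζ hζ => hfh _ (hψ.apply_mem (hsphere hζ))
    _ = h (ψ 0) := (hhψ.mono hsub).circleAverage_eq

lemma hasRadialLimits_comp (hψ : IsConformalParametrization Ω U ψ)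
    (hfstar : ∀ᵐ ξ ∂arcLen Ω, NTLim Ω f ξ (fstar ξ)) : HasRadialLimits (f ∘ ψ) (fstar ∘ ψ) := by
  refine (Measure.ae_smul_measure (hψ.ae_circleMap hfstar) _).mono fun θ hθ => ?_
  refine (hψ.tendsto_radial (circleMap_mem_sphere 0 zero_le_one θ) hθ).congr fun s => ?_
  rw [Function.comp_apply, circleMap_zero_eq_mul s θ]

lemma aemeasurable_of_ntLim (hψ : IsConformalParametrization Ω U ψ) (hf : ContinuousOn f Ω)
    (hfstar : ∀ᵐ ξ ∂arcLen Ω, NTLim Ω f ξ (fstar ξ)) : AEMeasurable fstar (arcLen Ω) := by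
  obtain ⟨s, hs, hs₁⟩ := exists_seq_tendsto_one_left
  have hfrontier : frontier Ω ⊆ closure Ω := frontier_subset_closure
  have hsphere {ξ : ℂ} (hξ : ξ ∈ frontier Ω) : discCoord ψ ξ ∈ sphere (0 : ℂ) 1 :=
    hψ.discCoord_mem_sphere hξ
  have hmaps (n : ℕ) : MapsTo (fun ξ => s n * discCoord ψ ξ) (frontier Ω) (ball 0 1) :=
    fun ξ hξ => by
      rw [mem_ball_zero_iff, norm_mul, mem_sphere_zero_iff_norm.1 (hsphere hξ), mul_one,
        norm_real, Real.norm_of_nonneg (hs n).1.le]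
      exact (hs n).2
  refine aemeasurable_of_tendsto_metrizable_ae atTop
    (f := fun n ξ => f (ψ (s n * discCoord ψ ξ))) (fun n => ?_) ?_
  · refine ContinuousOn.aemeasurable ?_ isClosed_frontier.measurableSet
    exact hf.comp ((hψ.continuousOn.mono ball_subset_closedBall).comp
      (continuousOn_const.mul (hψ.continuousOn_discCoord.mono hfrontier)) (hmaps n))
      fun ξ hξ => hψ.apply_mem (hmaps n hξ)
  · filter_upwards [hfstar, ae_restrict_mem isClosed_frontier.measurableSet] with ξ hξ hξΩ
    rw [← hψ.apply_discCoord (hfrontier hξΩ)] at hξ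
    have hradial := (hψ.tendsto_radial (hsphere hξΩ) hξ).comp hs₁
    rwa [hψ.apply_discCoord (hfrontier hξΩ)] at hradial

end IsConformalParametrization

lemma IsContinuousExhaustion.lintegral_boundaryMA_eq_of_aemeasurable {u : ℂ → ℝ}
    {ν μb : Measure ℂ} [IsFiniteMeasure ν] {μfam : ℝ → Measure ℂ} {Φ : ℂ → ℝ≥0∞}
    (hu : IsContinuousExhaustion u Ω) (hψ : IsConformalParametrization Ω U ψ)
    (hν : IsRieszMeasure u Ω ν) (hμ : ∀ r < 0, IsLevelMeasure u Ω ν r (μfam r))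
    (hμb : IsBoundaryMA μfam μb) (hΦ : AEMeasurable Φ (arcLen Ω)) :
    ∫⁻ ξ, Φ ξ ∂μb = ∫⁻ z, poissonLIntegral 0 1 (Φ ∘ ψ) (discCoord ψ z) ∂ν := by
  have hcircle : ∀ᵐ θ ∂angleMeasure,
      (hΦ.mk Φ ∘ ψ) (circleMap 0 1 θ) = (Φ ∘ ψ) (circleMap 0 1 θ) :=
    Measure.ae_smul_measure (hψ.ae_circleMap hΦ.ae_eq_mk.symm) _
  rw [lintegral_congr_ae (hu.ae_boundaryMA hψ hν hμ hμb hΦ.ae_eq_mk),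
    hu.lintegral_boundaryMA_eq hψ hν hμ hμb hΦ.measurable_mk, poissonLIntegral_congr_ae hcircle]

end HardySpace

section LevelSetLimits

variable {u w : ℂ → ℝ} {Ω : Set ℂ} {ν μ : Measure ℂ} {r : ℝ}

namespace IsContinuousExhaustion

variable (hu : IsContinuousExhaustion u Ω)
include hu

lemma integrableOn_le [IsFiniteMeasure μ] (hr : r < 0) (hw : ContinuousOn w Ω) :
    IntegrableOn w {z | z ∈ Ω ∧ u z ≤ r} μ :=
  (hw.mono fun _ hz => hz.1).integrableOn_compact (hu.isCompact_le hr)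

lemma integrable_of_isLevelMeasure (hr : r < 0) (hμ : IsLevelMeasure u Ω ν r μ)
    (hw : ContinuousOn w Ω) : Integrable w μ := by
  have := hμ.isFiniteMeasure
  have hle : ∀ᵐ z ∂μ, z ∈ {z | z ∈ Ω ∧ u z ≤ r} := hμ.ae_mem.mono fun z hz => ⟨hz.1, hz.2.le⟩
  have hint := hu.integrableOn_le (μ := μ) hr hw
  rwa [IntegrableOn, Measure.restrict_eq_self_of_ae_mem hle] at hint

lemma setLIntegral_ofReal_lt [IsFiniteMeasure ν] (hr : r < 0) (hw : ContinuousOn w Ω)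
    (hw₀ : ∀ z ∈ Ω, 0 ≤ w z) :
    ∫⁻ z in {z | z ∈ Ω ∧ u z < r}, ENNReal.ofReal (w z) ∂ν =
      ENNReal.ofReal (∫ z in {z | z ∈ Ω ∧ u z < r}, w z ∂ν) := by
  refine (ofReal_integral_eq_lintegral_ofReal ((hu.integrableOn_le hr hw).mono_set
    fun z hz => ⟨hz.1, hz.2.le⟩ : IntegrableOn w {z | z ∈ Ω ∧ u z < r} ν) ?_).symm
  exact (ae_restrict_mem (hu.isOpen_lt r).measurableSet).mono fun z hz => hw₀ z hz.1

lemma lintegral_ofReal_of_isLevelMeasure (hr : r < 0) (hμ : IsLevelMeasure u Ω ν r μ)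
    (hw : ContinuousOn w Ω) (hw₀ : ∀ z ∈ Ω, 0 ≤ w z) :
    ∫⁻ z, ENNReal.ofReal (w z) ∂μ = ENNReal.ofReal (∫ z, w z ∂μ) :=
  (ofReal_integral_eq_lintegral_ofReal (hu.integrable_of_isLevelMeasure hr hμ hw)
    (hμ.ae_mem.mono fun z hz => hw₀ z hz.1)).symm

lemma setLIntegral_le_lintegral_of_locallySubmean [IsFiniteMeasure ν] (hν : IsRieszMeasure u Ω ν)
    (hr : r < 0) (hμ : IsLevelMeasure u Ω ν r μ) (hw : ContinuousOn w Ω)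
    (hsub : LocallySubmean w Ω) (hw₀ : ∀ z ∈ Ω, 0 ≤ w z) :
    ∫⁻ z in {z | z ∈ Ω ∧ u z < r}, ENNReal.ofReal (w z) ∂ν ≤ ∫⁻ z, ENNReal.ofReal (w z) ∂μ := by
  rw [hu.setLIntegral_ofReal_lt hr hw hw₀, hu.lintegral_ofReal_of_isLevelMeasure hr hμ hw hw₀]
  exact ENNReal.ofReal_le_ofReal (hu.setIntegral_le_integral_of_locallySubmean hν hr hμ hw hsub)

lemma lintegral_le_lintegral_of_harmonicOnNhd [IsFiniteMeasure ν] (hν : IsRieszMeasure u Ω ν)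
    (hr : r < 0) (hμ : IsLevelMeasure u Ω ν r μ) (hw : HarmonicOnNhd w Ω)
    (hw₀ : ∀ z ∈ Ω, 0 ≤ w z) :
    ∫⁻ z, ENNReal.ofReal (w z) ∂μ ≤ ∫⁻ z, ENNReal.ofReal (w z) ∂ν := by
  rw [hu.lintegral_ofReal_of_isLevelMeasure hr hμ hw.continuousOn hw₀,
    ← hu.setIntegral_eq_integral_of_harmonicOnNhd hν hr hμ hw,
    ← hu.setLIntegral_ofReal_lt hr hw.continuousOn hw₀]
  exact setLIntegral_le_lintegral _ _

lemma lintegral_le_limsup_of_eventually_setLIntegral_le (hν : IsRieszMeasure u Ω ν)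
    {g : ℂ → ℝ≥0∞} {A : ℝ → ℝ≥0∞}
    (h : ∀ᶠ r in 𝓝[<] (0 : ℝ), ∫⁻ z in {z | z ∈ Ω ∧ u z < r}, g z ∂ν ≤ A r) :
    ∫⁻ z, g z ∂ν ≤ limsup A (𝓝[<] 0) := by
  let B (n : ℕ) : Set ℂ := {z | z ∈ Ω ∧ u z < -(1 / ((n : ℝ) + 1))}
  have hmono : Monotone B := fun n m hnm z hz => by
    have : 1 / ((m : ℝ) + 1) ≤ 1 / ((n : ℝ) + 1) := by gcongr
    exact ⟨hz.1, hz.2.trans_le (neg_le_neg this)⟩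
  have hcover : ∀ᵐ z ∂ν, z ∈ ⋃ n, B n := by
    filter_upwards [show ∀ᵐ z ∂ν, z ∈ Ω from hν.1] with z hz
    obtain ⟨n, hn⟩ := exists_nat_one_div_lt (neg_pos.2 (hu.neg z hz))
    exact mem_iUnion.2 ⟨n, hz, lt_neg_of_lt_neg hn⟩
  rw [← Measure.restrict_eq_self_of_ae_mem hcover,
    setLIntegral_iUnion_of_directed _ hmono.directed_le]
  refine iSup_le fun n => le_limsup_of_frequently_le (Eventually.frequently ?_)
  filter_upwards [h, Ioo_mem_nhdsLT (neg_lt_zero.2 (Nat.one_div_pos_of_nat (n := n)))]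
    with r hr hnr
  have hsub : B n ⊆ {z | z ∈ Ω ∧ u z < r} := fun z hz => ⟨hz.1, hz.2.trans hnr.1⟩
  exact (lintegral_mono_set hsub).trans hr

end IsContinuousExhaustion

end LevelSetLimits

section BoundaryValues

variable {u φ φs : ℂ → ℝ} {Ω U : Set ℂ} {ψ : ℂ → ℂ} {ν : Measure ℂ} {μfam : ℝ → Measure ℂ} {s : ℝ}

lemma LocallySubmean.of_le_of_eqOn {v w : ℂ → ℝ} {V : Set ℂ} (hU : IsOpen U)
    (hw : LocallySubmean w U) (hwc : ContinuousOn w U) (hvc : ContinuousOn v U)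
    (hle : ∀ z ∈ U, w z ≤ v z) (hv : LocallySubmean v V) (heq : EqOn w v (U \ V)) :
    LocallySubmean v U := by
  intro z hz
  by_cases hzV : z ∈ V
  · exact hv z hzV
  have hnhds := hU.mem_nhds hz
  filter_upwards [hw z hz, eventually_circleIntegrable hnhds hwc,
    eventually_circleIntegrable hnhds hvc, eventually_closedBall_abs_subset hnhds]
    with ρ hsub hwi hvi hρ
  rw [← heq ⟨hz, hzV⟩]
  exact hsub.trans (Real.circleAverage_mono hwi hvi
    fun x hx => hle x (hρ (sphere_subset_closedBall hx)))

lemma LocallySubmean.le_poissonModification {c : ℂ} {R : ℝ} (hR : 0 < R)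
    (hφ : LocallySubmean φ (ball c R)) (hφc : ContinuousOn φ (closedBall c R)) (z : ℂ) :
    φ z ≤ poissonModification c R φ z := by
  by_cases hz : z ∈ ball c R
  · rw [poissonModification_of_mem hz]
    exact hφ.le_poissonIntegral hR hφc hz
  · rw [poissonModification_of_notMem hz]

namespace IsConformalParametrization

variable (hψ : IsConformalParametrization Ω U ψ)
include hψ

lemma continuousOn_poissonModification_discCoord (hφc : ContinuousOn φ (ball 0 1))
    (hs : s ∈ Ioo (0 : ℝ) 1) :
    ContinuousOn (fun z => poissonModification 0 s φ (discCoord ψ z)) Ω :=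
  (continuousOn_poissonModification hs.1 (closedBall_subset_ball hs.2)
    (hφc.mono sdiff_subset)).comp (hψ.continuousOn_discCoord.mono subset_closure)
    fun _ => hψ.discCoord_mem_ball

lemma locallySubmean_poissonModification_discCoord (hφc : ContinuousOn φ (ball 0 1))
    (hφ : LocallySubmean φ (ball 0 1)) (hφΩ : LocallySubmean (φ ∘ discCoord ψ) Ω)
    (hs : s ∈ Ioo (0 : ℝ) 1) :
    LocallySubmean (fun z => poissonModification 0 s φ (discCoord ψ z)) Ω := by
  have hsub : closedBall (0 : ℂ) s ⊆ ball 0 1 := closedBall_subset_ball hs.2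
  have hci : CircleIntegrable φ 0 s := (hφc.mono
    (sphere_subset_closedBall.trans hsub)).circleIntegrable hs.1.le
  have hτ : ContinuousOn (discCoord ψ) Ω := hψ.continuousOn_discCoord.mono subset_closure
  have hV : IsOpen (Ω ∩ discCoord ψ ⁻¹' ball 0 s) := hτ.isOpen_inter_preimage hψ.isOpen isOpen_ball
  have hharm : HarmonicOnNhd (fun z => poissonIntegral 0 s φ (discCoord ψ z))
      (Ω ∩ discCoord ψ ⁻¹' ball 0 s) := fun z hz =>
    harmonicAt_comp_analyticAt (harmonicOnNhd_poissonIntegral hci _ hz.2)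
      (hψ.differentiableOn_discCoord.analyticAt (hψ.isOpen.mem_nhds hz.1))
  exact hφΩ.of_le_of_eqOn hψ.isOpen (hφc.comp hτ fun _ => hψ.discCoord_mem_ball)
    (hψ.continuousOn_poissonModification_discCoord hφc hs)
    (fun z _ => (hφ.mono (ball_subset_closedBall.trans hsub)).le_poissonModification hs.1
      (hφc.mono hsub) _)
    ((LocallySubmean.of_harmonicOnNhd hharm).congr hV fun z hz =>
      (poissonModification_of_mem hz.2).symm)
    fun z hz => (poissonModification_of_notMem fun hball => hz.2 ⟨hz.1, hball⟩).symm

end IsConformalParametrization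

namespace IsContinuousExhaustion

variable (hu : IsContinuousExhaustion u Ω) (hψ : IsConformalParametrization Ω U ψ)
include hu hψ

lemma eventually_discCoord_notMem_ball (hs : s < 1) :
    ∀ᶠ r in 𝓝[<] (0 : ℝ), ∀ z ∈ Ω, u z = r → discCoord ψ z ∉ ball 0 s := by
  have hcompact : IsCompact (ψ '' closedBall 0 s) :=
    (isCompact_closedBall 0 s).image_of_continuousOn
      (hψ.continuousOn.mono (closedBall_subset_closedBall hs.le))
  have hsub : ψ '' closedBall 0 s ⊆ Ω :=
    image_subset_iff.2 fun ζ hζ => hψ.apply_mem (closedBall_subset_ball hs hζ)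
  filter_upwards [hu.eventually_forall_lt hcompact hsub] with r hr z hz hzr hball
  refine (hr z ?_).ne hzr
  exact ⟨discCoord ψ z, ball_subset_closedBall hball, hψ.apply_discCoord (subset_closure hz)⟩

variable [IsFiniteMeasure ν] (hν : IsRieszMeasure u Ω ν)
  (hμ : ∀ r < 0, IsLevelMeasure u Ω ν r (μfam r))
include hν hμ

lemma lintegral_poissonModification_le_limsup (hφc : ContinuousOn φ (ball 0 1))
    (hφ : LocallySubmean φ (ball 0 1)) (hφΩ : LocallySubmean (φ ∘ discCoord ψ) Ω)
    (hφ₀ : ∀ ζ ∈ ball 0 1, 0 ≤ φ ζ) (hs : s ∈ Ioo (0 : ℝ) 1) :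
    ∫⁻ z, ENNReal.ofReal (poissonModification 0 s φ (discCoord ψ z)) ∂ν ≤
      limsup (fun r => ∫⁻ z, ENNReal.ofReal (φ (discCoord ψ z)) ∂μfam r) (𝓝[<] 0) := by
  have hsub : closedBall (0 : ℂ) s ⊆ ball 0 1 := closedBall_subset_ball hs.2
  have hnonneg : ∀ z ∈ Ω, 0 ≤ poissonModification 0 s φ (discCoord ψ z) := fun z hz =>
    (hφ₀ _ (hψ.discCoord_mem_ball hz)).trans
      ((hφ.mono (ball_subset_closedBall.trans hsub)).le_poissonModification hs.1 (hφc.mono hsub) _)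
  refine hu.lintegral_le_limsup_of_eventually_setLIntegral_le hν ?_
  filter_upwards [hu.eventually_discCoord_notMem_ball hψ hs.2, self_mem_nhdsWithin]
    with r hexit (hr : r < 0)
  refine (hu.setLIntegral_le_lintegral_of_locallySubmean hν hr (hμ r hr)
    (hψ.continuousOn_poissonModification_discCoord hφc hs)
    (hψ.locallySubmean_poissonModification_discCoord hφc hφ hφΩ hs) hnonneg).trans_eq ?_
  refine lintegral_congr_ae ((hμ r hr).ae_mem.mono fun z hz => ?_)
  simp only [poissonModification_of_notMem (hexit z hz.1 hz.2)]

lemma lintegral_poissonLIntegral_le_limsup (hφc : ContinuousOn φ (ball 0 1))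
    (hφ : LocallySubmean φ (ball 0 1)) (hφΩ : LocallySubmean (φ ∘ discCoord ψ) Ω)
    (hφ₀ : ∀ ζ ∈ ball 0 1, 0 ≤ φ ζ) (hlim : HasRadialLimits φ φs) :
    ∫⁻ z, poissonLIntegral 0 1 (fun ζ => ENNReal.ofReal (φs ζ)) (discCoord ψ z) ∂ν ≤
      limsup (fun r => ∫⁻ z, ENNReal.ofReal (φ (discCoord ψ z)) ∂μfam r) (𝓝[<] 0) := by
  obtain ⟨s, hs, hs₁⟩ := exists_seq_tendsto_one_left
  have hν_mem : ∀ᵐ z ∂ν, z ∈ Ω := hν.1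
  have hmod {z : ℂ} (hz : z ∈ Ω) : ∀ᶠ n in atTop,
      poissonLIntegral 0 (s n) (fun ζ => ENNReal.ofReal (φ ζ)) (discCoord ψ z) =
        ENNReal.ofReal (poissonModification 0 (s n) φ (discCoord ψ z)) := by
    have hnorm : ‖discCoord ψ z‖ < 1 := mem_ball_zero_iff.1 (hψ.discCoord_mem_ball hz)
    filter_upwards [(tendsto_nhdsWithin_iff.1 hs₁).1.eventually_const_lt hnorm] with n hn
    have hball : discCoord ψ z ∈ ball 0 (s n) := mem_ball_zero_iff.2 hn
    have hsphere : sphere (0 : ℂ) |s n| ⊆ ball 0 1 := by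
      rw [abs_of_pos (hs n).1]
      exact sphere_subset_closedBall.trans (closedBall_subset_ball (hs n).2)
    rw [poissonModification_of_mem hball, poissonLIntegral_ofReal
      (hφc.mono hsphere).circleIntegrable' (fun ζ hζ => hφ₀ ζ (hsphere hζ)) hball]
  calc ∫⁻ z, poissonLIntegral 0 1 (fun ζ => ENNReal.ofReal (φs ζ)) (discCoord ψ z) ∂ν
      ≤ ∫⁻ z, liminf (fun n => ENNReal.ofReal
          (poissonModification 0 (s n) φ (discCoord ψ z))) atTop ∂ν :=
        lintegral_mono_ae <| hν_mem.mono fun z hz =>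
          (hlim.poissonLIntegral_le_liminf hφc hs hs₁ (hψ.discCoord_mem_ball hz)).trans_eq
            (liminf_congr (hmod hz))
    _ ≤ liminf (fun n => ∫⁻ z, ENNReal.ofReal
          (poissonModification 0 (s n) φ (discCoord ψ z)) ∂ν) atTop := by
        refine lintegral_liminf_le' fun n => AEMeasurable.ennreal_ofReal ?_
        rw [← Measure.restrict_eq_self_of_ae_mem hν_mem]
        exact (hψ.continuousOn_poissonModification_discCoord hφc (hs n)).aemeasurable
          hu.isOpen.measurableSet
    _ ≤ _ := liminf_le_of_le (by isBoundedDefault) fun b hb => by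
        obtain ⟨n, hn⟩ := hb.exists
        exact hn.trans
          (hu.lintegral_poissonModification_le_limsup hψ hν hμ hφc hφ hφΩ hφ₀ (hs n))

lemma limsup_le_lintegral_poissonLIntegral (hφ₀ : ∀ ζ ∈ ball 0 1, 0 ≤ φ ζ)
    (hφs : CircleIntegrable φs 0 1) (hφs₀ : ∀ ζ ∈ sphere 0 1, 0 ≤ φs ζ)
    (hle : ∀ ζ ∈ ball 0 1, φ ζ ≤ poissonIntegral 0 1 φs ζ) :
    limsup (fun r => ∫⁻ z, ENNReal.ofReal (φ (discCoord ψ z)) ∂μfam r) (𝓝[<] 0) ≤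
      ∫⁻ z, poissonLIntegral 0 1 (fun ζ => ENNReal.ofReal (φs ζ)) (discCoord ψ z) ∂ν := by
  have hH₀ : ∀ z ∈ Ω, 0 ≤ poissonIntegral 0 1 φs (discCoord ψ z) := fun z hz =>
    (hφ₀ _ (hψ.discCoord_mem_ball hz)).trans (hle _ (hψ.discCoord_mem_ball hz))
  refine limsup_le_of_le (by isBoundedDefault) ?_
  filter_upwards [self_mem_nhdsWithin] with r (hr : r < 0)
  calc ∫⁻ z, ENNReal.ofReal (φ (discCoord ψ z)) ∂μfam r
      ≤ ∫⁻ z, ENNReal.ofReal (poissonIntegral 0 1 φs (discCoord ψ z)) ∂μfam r :=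
        lintegral_mono_ae <| (hμ r hr).ae_mem.mono fun z hz =>
          ENNReal.ofReal_le_ofReal (hle _ (hψ.discCoord_mem_ball hz.1))
    _ ≤ ∫⁻ z, ENNReal.ofReal (poissonIntegral 0 1 φs (discCoord ψ z)) ∂ν :=
        hu.lintegral_le_lintegral_of_harmonicOnNhd hν hr (hμ r hr)
          (hψ.harmonicOnNhd_poissonIntegral_discCoord hφs) hH₀
    _ = _ := lintegral_congr_ae <| (show ∀ᵐ z ∂ν, z ∈ Ω from hν.1).mono fun z hz =>
        (poissonLIntegral_ofReal hφs (by rwa [abs_one]) (hψ.discCoord_mem_ball hz)).symm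

lemma psNormPow_eq_lintegral_poissonLIntegral {p : ℝ} {f fstar : ℂ → ℂ} (hp : 0 < p)
    (hf : MemHClassical p Ω f) (hfstar : ∀ᵐ ξ ∂arcLen Ω, NTLim Ω f ξ (fstar ξ)) :
    psNormPow p μfam f = ∫⁻ z, poissonLIntegral 0 1
      (fun ζ => ENNReal.ofReal (‖fstar (ψ ζ)‖ ^ p)) (discCoord ψ z) ∂ν := by
  obtain ⟨C, hC⟩ := hψ.exists_circleAverage_norm_rpow_le hp hf
  have hF := hψ.differentiableOn_comp hf.1
  have hlim := hψ.hasRadialLimits_comp hfstar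
  have hnonneg : ∀ ζ ∈ ball (0 : ℂ) 1, 0 ≤ ‖f (ψ ζ)‖ ^ p := fun ζ _ => by positivity
  have hcoord : ∀ z ∈ Ω, ‖f (ψ (discCoord ψ z))‖ ^ p = ‖f z‖ ^ p := fun z hz => by
    rw [hψ.apply_discCoord (subset_closure hz)]
  have hpow : psNormPow p μfam f = limsup
      (fun r => ∫⁻ z, ENNReal.ofReal (‖f (ψ (discCoord ψ z))‖ ^ p) ∂μfam r) (𝓝[<] 0) := by
    refine limsup_congr (eventually_mem_nhdsWithin.mono fun r hr => ?_)
    refine lintegral_congr_ae ((hμ r hr).ae_mem.mono fun z hz => ?_)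
    simp only [hcoord z hz.1]
  rw [hpow]
  exact le_antisymm
    (hu.limsup_le_lintegral_poissonLIntegral hψ hν hμ (φ := fun ζ => ‖f (ψ ζ)‖ ^ p) hnonneg
      (circleIntegrable_norm_rpow_radialLimits hF hp hC hlim)
      (fun ζ _ => Real.rpow_nonneg (norm_nonneg _) p)
      fun ζ hζ => norm_rpow_le_poissonIntegral hF hp hC hlim hζ)
    (hu.lintegral_poissonLIntegral_le_limsup hψ hν hμ (φ := fun ζ => ‖f (ψ ζ)‖ ^ p)
      (continuousOn_norm_rpow hF hp.le) (locallySubmean_norm_rpow isOpen_ball hF hp)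
      ((locallySubmean_norm_rpow hu.isOpen hf.1 hp).congr hu.isOpen
        fun z hz => (hcoord z hz).symm) hnonneg (hlim.norm_rpow hp.le))

lemma psNormPow_eq_lintegral_boundaryMA {μb : Measure ℂ} (hμb : IsBoundaryMA μfam μb) {p : ℝ}
    {f fstar : ℂ → ℂ} (hp : 0 < p) (hf : MemHClassical p Ω f)
    (hfstar : ∀ᵐ ξ ∂arcLen Ω, NTLim Ω f ξ (fstar ξ)) :
    psNormPow p μfam f = ∫⁻ ξ, ENNReal.ofReal (‖fstar ξ‖ ^ p) ∂μb := by
  have hmeas : AEMeasurable (fun ξ => ENNReal.ofReal (‖fstar ξ‖ ^ p)) (arcLen Ω) :=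
    ((hψ.aemeasurable_of_ntLim hf.1.continuousOn hfstar).norm.pow_const p).ennreal_ofReal
  rw [hu.lintegral_boundaryMA_eq_of_aemeasurable hψ hν hμ hμb hmeas]
  exact hu.psNormPow_eq_lintegral_poissonLIntegral hψ hν hμ hp hf hfstar

end IsContinuousExhaustion

end BoundaryValues

theorem stmt9_general {Ω U : Set ℂ} {ψ : ℂ → ℂ} (hψ : IsConformalParametrization Ω U ψ)
    {u : ℂ → ℝ} (hu : IsContinuousExhaustion u Ω)
    {ν : Measure ℂ} (hν : IsRieszMeasure u Ω ν) (hfin : ν Set.univ < ⊤)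
    {μfam : ℝ → Measure ℂ} (hμ : ∀ r : ℝ, r < 0 → IsMAMeasure u Ω ν r (μfam r))
    {μb : Measure ℂ} (hμb : IsBoundaryMA μfam μb) {p : ℝ} (hp : 0 < p)
    {f : ℂ → ℂ} (hf : MemHClassical p Ω f)
    {fstar : ℂ → ℂ} (hfstar : ∀ᵐ ξ ∂(arcLen Ω), NTLim Ω f ξ (fstar ξ)) :
    (MemPS p Ω μfam f ↔ ∫⁻ ξ, ENNReal.ofReal (‖fstar ξ‖ ^ p) ∂μb < ⊤) ∧
      (∫⁻ ξ, ENNReal.ofReal (‖fstar ξ‖ ^ p) ∂μb) ^ (1 / p) = psNorm p μfam f := by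
  have : IsFiniteMeasure ν := ⟨hfin⟩
  have heq := hu.psNormPow_eq_lintegral_boundaryMA hψ hν (fun r hr => hu.isLevelMeasure hν hμ hr)
    hμb hp hf hfstar
  rw [MemPS, psNorm, heq]
  exact ⟨and_iff_right hf.1, rfl⟩

/-- For `f ∈ H^p(Ω)` with nontangential boundary value function `f*`
(defined `σ`-a.e. on `∂Ω`): `f ∈ H^p_u(Ω)` iff `f* ∈ L^p(μ_u)`, and
`‖f*‖_{L^p(μ_u)} = ‖f‖_{H^p_u(Ω)}`. -/
theorem stmt9 (Ω : Set ℂ) (hΩ : AnalyticJordanDomain Ω)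
    (u : ℂ → ℝ) (hu : IsExhaustion u Ω)
    (ν : Measure ℂ) (hν : IsRieszMeasure u Ω ν) (hfin : ν Set.univ < ⊤)
    (μfam : ℝ → Measure ℂ) (hμ : ∀ r : ℝ, r < 0 → IsMAMeasure u Ω ν r (μfam r))
    (μb : Measure ℂ) (hμb : IsBoundaryMA μfam μb)
    (p : ℝ) (hp : 1 ≤ p)
    (f : ℂ → ℂ) (hf : MemHClassical p Ω f)
    (fstar : ℂ → ℂ) (hfstar : ∀ᵐ ξ ∂(arcLen Ω), NTLim Ω f ξ (fstar ξ)) :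
    (MemPS p Ω μfam f ↔
      ∫⁻ ξ, ENNReal.ofReal (‖fstar ξ‖ ^ p) ∂μb < ⊤) ∧
    (∫⁻ ξ, ENNReal.ofReal (‖fstar ξ‖ ^ p) ∂μb) ^ (1/p) = psNorm p μfam f := by
  obtain ⟨U, ψ, hψ⟩ := hΩ.exists_isConformalParametrization
  exact stmt9_general hψ (hu.isContinuousExhaustion hΩ.isOpen ⟨0, hΩ.zero_mem⟩) hν hfin hμ hμb
    (zero_lt_one.trans_le hp) hf hfstar

end
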